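/- Let $n\geq 1$, $s\in(0,1)$, $k\in\mathbb{N}$, and let $f:\overline{B_1}\times[-1,1]\to\mathbb{R}$ be of class $C^k$, where $B_1\subset\mathbb{R}^n$ is the open unit ball. Then for every $\varepsilon>0$ there exists a function $u\in C^\infty(B_1\times(-1,1))\cap C(\mathbb{R}^{n+1})$, compactly supported in $\mathbb{R}^{n+1}$, such that $\partial_t u(x,t)+(-\Delta)^s u(\cdot,t)(x)=0$ for every $(x,t)\in B_1\times(-1,1)$ (the fractional Laplacian acting in the space variable $x$), and $\|u-f\|_{C^k(B_1\times(-1,1))}\leq\varepsilon$, where $\|g\|_{C^k(\Omega)}=\sup_{|\beta|\le k}\sup_\Omega|\partial^\beta g|$. -/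

import Mathlib

open MeasureTheory Filter Metric Set

/-- The normalizing constant `C(n,s)` of the fractional Laplacian. -/
noncomputable def fracC (n : ℕ) (s : ℝ) : ℝ :=
  4 ^ s * s * Real.Gamma ((n : ℝ) / 2 + s) / (Real.pi ^ ((n : ℝ) / 2) * Real.Gamma (1 - s))

/-- `HasFracLap n s u x L` : the principal value limit defining `(-Δ)^s u (x)`
exists and equals `L`. -/
def HasFracLap (n : ℕ) (s : ℝ) (u : EuclideanSpace ℝ (Fin n) → ℝ)
    (x : EuclideanSpace ℝ (Fin n)) (L : ℝ) : Prop :=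
  Tendsto (fun ρ : ℝ =>
      fracC n s * ∫ y in {y : EuclideanSpace ℝ (Fin n) | ρ ≤ ‖y‖},
        (u x - u (x + y)) / ‖y‖ ^ ((n : ℝ) + 2 * s))
    (nhdsWithin 0 (Set.Ioi 0)) (nhds L)

open scoped Topology ContDiff FourierTransform

set_option linter.unusedSectionVars false

section ParametricIntegral

variable {E F Y : Type*} [NormedAddCommGroup E] [NormedSpace ℝ E] [NormedAddCommGroup F]
  [NormedSpace ℝ F] [CompleteSpace F] [MeasurableSpace Y] {μ : Measure Y}

/-- A parametric integral of a family of `C^N` functions with locally dominated derivatives has a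
Taylor series obtained by integrating the derivatives of the family. -/
theorem hasFTaylorSeriesUpTo_integral {N : ℕ∞} {G : E → Y → F}
    (hG : ∀ y, ContDiff ℝ N (fun x => G x y))
    (hmeas : ∀ i : ℕ, (i : ℕ∞) ≤ N → ∀ x,
      AEStronglyMeasurable (fun y => iteratedFDeriv ℝ i (fun x => G x y) x) μ)
    (hdom : ∀ i : ℕ, (i : ℕ∞) ≤ N → ∀ x₀, ∃ B : Y → ℝ, Integrable B μ ∧
      ∀ y, ∀ x ∈ ball x₀ 1, ‖iteratedFDeriv ℝ i (fun x => G x y) x‖ ≤ B y) :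
    HasFTaylorSeriesUpTo (N : WithTop ℕ∞) (fun x => ∫ y, G x y ∂μ)
      (fun x i => ∫ y, iteratedFDeriv ℝ i (fun x => G x y) x ∂μ) := by
  have hInt : ∀ i : ℕ, (i : ℕ∞) ≤ N → ∀ x,
      Integrable (fun y => iteratedFDeriv ℝ i (fun x => G x y) x) μ := by
    intro i hi x
    obtain ⟨B, hB, hb⟩ := hdom i hi x
    exact hB.mono' (hmeas i hi x) (Eventually.of_forall fun y => hb y x (mem_ball_self one_pos))
  refine ⟨?_, ?_, ?_⟩
  · intro x
    change (∫ y, iteratedFDeriv ℝ 0 (fun x => G x y) x ∂μ) 0 = _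
    rw [ContinuousMultilinearMap.integral_apply (hInt 0 (by simp) x)]
    simp
  · intro m hm x
    have hm' : ((m + 1 : ℕ) : ℕ∞) ≤ N := by
      have : (m : ℕ∞) < N := by exact_mod_cast hm
      exact_mod_cast Order.add_one_le_of_lt this
    have hm0 : (m : ℕ∞) ≤ N := le_trans (by exact_mod_cast Nat.le_succ m) hm'
    obtain ⟨B, hB, hb⟩ := hdom (m + 1) hm' x
    let L : (ContinuousMultilinearMap ℝ (fun _ : Fin (m + 1) => E) F) →L[ℝ]
        (E →L[ℝ] ContinuousMultilinearMap ℝ (fun _ : Fin m => E) F) :=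
      (continuousMultilinearCurryLeftEquiv ℝ (fun _ : Fin (m + 1) => E) F
        ).toContinuousLinearEquiv.toContinuousLinearMap
    have key := hasFDerivAt_integral_of_dominated_of_fderiv_le (μ := μ) (𝕜 := ℝ)
      (F := fun x y => iteratedFDeriv ℝ m (fun x => G x y) x)
      (F' := fun x y => L (iteratedFDeriv ℝ (m + 1) (fun x => G x y) x))
      (bound := B) (ball_mem_nhds x one_pos)
      (Eventually.of_forall fun x => hmeas m hm0 x) (hInt m hm0 x)
      (L.continuous.comp_aestronglyMeasurable (hmeas (m + 1) hm' x))
      (Eventually.of_forall fun y z hz => by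
        have : ‖L (iteratedFDeriv ℝ (m + 1) (fun x => G x y) z)‖
            = ‖iteratedFDeriv ℝ (m + 1) (fun x => G x y) z‖ :=
          (continuousMultilinearCurryLeftEquiv ℝ (fun _ : Fin (m + 1) => E) F).norm_map _
        rw [this]
        exact hb y z hz)
      hB
      (Eventually.of_forall fun y z _ => by
        have h := ((hG y).differentiable_iteratedFDeriv (m := m) (by exact_mod_cast hm) z
          ).hasFDerivAt
        have e : fderiv ℝ (iteratedFDeriv ℝ m (fun x => G x y)) z
            = L (iteratedFDeriv ℝ (m + 1) (fun x => G x y) z) := by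
          rw [iteratedFDeriv_succ_eq_comp_left]
          exact ((continuousMultilinearCurryLeftEquiv ℝ (fun _ : Fin (m + 1) => E) F
            ).apply_symm_apply _).symm
        rw [← e]
        exact h)
    have e := ContinuousLinearMap.integral_comp_comm (𝕜 := ℝ)
      (Fₗ := E →L[ℝ] ContinuousMultilinearMap ℝ (fun _ : Fin m => E) F) L (hInt (m + 1) hm' x)
    rw [e] at key
    exact key
  · intro m hm
    have hm0 : (m : ℕ∞) ≤ N := by exact_mod_cast hm
    rw [continuous_iff_continuousAt]
    intro x
    obtain ⟨B, hB, hb⟩ := hdom m hm0 x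
    refine continuousAt_of_dominated (bound := B) (Eventually.of_forall fun z => hmeas m hm0 z) ?_
      hB ?_
    · filter_upwards [ball_mem_nhds x one_pos] with z hz
      exact Eventually.of_forall fun y => hb y z hz
    · exact Eventually.of_forall fun y =>
        ((hG y).continuous_iteratedFDeriv (by exact_mod_cast hm)).continuousAt

end ParametricIntegral

section PartialJet

variable {A E F : Type*} [NormedAddCommGroup A] [NormedSpace ℝ A] [NormedAddCommGroup E]
  [NormedSpace ℝ E] [NormedAddCommGroup F] [NormedSpace ℝ F]

/-- The derivatives of a partial function of a jointly smooth function in terms of the joint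
derivatives. -/
theorem iteratedFDeriv_partial_right {G : A × E → F} {i : ℕ} {a : A} {x : E}
    (hG : ContDiffAt ℝ i G (a, x)) :
    iteratedFDeriv ℝ i (fun x => G (a, x)) x =
      (iteratedFDeriv ℝ i G (a, x)).compContinuousLinearMap
        fun _ => ContinuousLinearMap.inr ℝ A E := by
  have h1 : (fun x => G (a, x)) =
      (fun p => G ((a, 0) + p)) ∘ (ContinuousLinearMap.inr ℝ A E) := by
    ext x; simp
  have hG' : ContDiffAt ℝ i (fun p => G ((a, (0 : E)) + p)) (ContinuousLinearMap.inr ℝ A E x) := by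
    refine ContDiffAt.comp (g := G) (f := fun p : A × E => (a, (0 : E)) + p) _ ?_ (by fun_prop)
    simpa using hG
  obtain ⟨u, hu, hxu, hcd⟩ := hG'.contDiffOn' (m := i) le_rfl (by simp)
  rw [insert_eq_of_mem (mem_univ _), univ_inter] at hcd
  have hopen : IsOpen ((ContinuousLinearMap.inr ℝ A E) ⁻¹' u) :=
    hu.preimage (ContinuousLinearMap.inr ℝ A E).continuous
  rw [h1, ← iteratedFDerivWithin_of_isOpen i hopen hxu,
    (ContinuousLinearMap.inr ℝ A E).iteratedFDerivWithin_comp_right hcd hu.uniqueDiffOn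
      hopen.uniqueDiffOn hxu le_rfl, iteratedFDerivWithin_of_isOpen i hu hxu,
    iteratedFDeriv_comp_add_left]
  simp

/-- Derivatives in the second variable of a jointly smooth function are jointly continuous. -/
theorem continuousAt_iteratedFDeriv_partial_right {G : A × E → F} {i : ℕ} {a : A} {x : E}
    (hG : ContDiffAt ℝ i G (a, x)) :
    ContinuousAt (fun p : A × E => iteratedFDeriv ℝ i (fun x => G (p.1, x)) p.2) (a, x) := by
  have hev : ∀ᶠ p in 𝓝 (a, x), ContDiffAt ℝ i G p := hG.eventually (by simp)
  have heq : (fun p : A × E => (ContinuousMultilinearMap.compContinuousLinearMapL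
        (fun _ : Fin i => ContinuousLinearMap.inr ℝ A E)) (iteratedFDeriv ℝ i G p))
      =ᶠ[𝓝 (a, x)] (fun p : A × E => iteratedFDeriv ℝ i (fun x => G (p.1, x)) p.2) := by
    filter_upwards [hev] with p hp
    exact (iteratedFDeriv_partial_right (a := p.1) (x := p.2) hp).symm
  refine ContinuousAt.congr ?_ heq
  refine (ContinuousLinearMap.continuous _).continuousAt.comp ?_
  obtain ⟨u, hu, hxu, hcd⟩ := hG.contDiffOn' (m := i) le_rfl (by simp)
  rw [insert_eq_of_mem (mem_univ _), univ_inter] at hcd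
  have := (hcd.continuousOn_iteratedFDerivWithin le_rfl hu.uniqueDiffOn).continuousAt
    (hu.mem_nhds hxu)
  refine this.congr ?_
  filter_upwards [hu.mem_nhds hxu] with p hp
  exact iteratedFDerivWithin_of_isOpen i hu hp

/-- If `G` is smooth near `{a} × K` with `K` compact, then the derivatives of `G (a', ·)` converge
to those of `G (a, ·)` uniformly on `K` as `a' → a`. -/
theorem eventually_norm_iteratedFDeriv_partial_sub_le {G : A × E → F} {M : ℕ} {a : A} {K : Set E}
    (hK : IsCompact K) (hG : ∀ x ∈ K, ContDiffAt ℝ M G (a, x)) {δ : ℝ} (hδ : 0 < δ) :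
    ∀ᶠ a' in 𝓝 a, ∀ i ≤ M, ∀ x ∈ K,
      ‖iteratedFDeriv ℝ i (fun x => G (a', x) - G (a, x)) x‖ ≤ δ := by
  have hpt : ∀ x ∈ K, ∀ᶠ p : A × E in 𝓝 a ×ˢ 𝓝 x, ∀ i ≤ M,
      ‖iteratedFDeriv ℝ i (fun x => G (p.1, x) - G (a, x)) p.2‖ ≤ δ := by
    intro x hx
    rw [← nhds_prod_eq]
    have hfin : ∀ i ∈ Finset.range (M + 1), ∀ᶠ p : A × E in 𝓝 (a, x),
        ‖iteratedFDeriv ℝ i (fun x => G (p.1, x) - G (a, x)) p.2‖ ≤ δ := by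
      intro i hi
      have hi' : i ≤ M := Nat.lt_succ_iff.mp (Finset.mem_range.mp hi)
      have hGi : ContDiffAt ℝ i G (a, x) := (hG x hx).of_le (by exact_mod_cast hi')
      have c1 := continuousAt_iteratedFDeriv_partial_right hGi
      have c0 : Tendsto (fun p : A × E => ((a, p.2) : A × E)) (𝓝 (a, x)) (𝓝 (a, x)) :=
        (by fun_prop : Continuous fun p : A × E => ((a, p.2) : A × E)).tendsto' _ _ rfl
      have c2 := c1.tendsto.comp c0
      have c3 := (c1.tendsto.sub c2).norm
      simp only [Function.comp_def, sub_self, norm_zero] at c3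
      have hev : ∀ᶠ p in 𝓝 (a, x), ContDiffAt ℝ i G p := hGi.eventually (by simp)
      filter_upwards [c3.eventually_lt_const hδ, hev, c0.eventually hev] with p hp h1 h2
      have d1 : ContDiffAt ℝ i (fun x => G (p.1, x)) p.2 :=
        ContDiffAt.comp p.2 (g := G) (f := fun x => (p.1, x)) h1 (by fun_prop)
      have d2 : ContDiffAt ℝ i (fun x => G (a, x)) p.2 :=
        ContDiffAt.comp p.2 (g := G) (f := fun x => (a, x)) h2 (by fun_prop)
      rw [fun_iteratedFDeriv_sub_apply d1 d2]
      exact hp.le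
    filter_upwards [(Finset.eventually_all _).2 hfin] with p hp i hi
    exact hp i (Finset.mem_range.mpr (Nat.lt_succ_of_le hi))
  have := hK.eventually_forall_of_forall_eventually (x₀ := a)
    (P := fun a' x => ∀ i ≤ M, ‖iteratedFDeriv ℝ i (fun x => G (a', x) - G (a, x)) x‖ ≤ δ)
    (fun x hx => by rw [nhds_prod_eq]; exact hpt x hx)
  filter_upwards [this] with a' ha i hi x hx
  exact ha x hx i hi

end PartialJet

section Wave

variable {E : Type*} [NormedAddCommGroup E] [InnerProductSpace ℝ E]

/-- The plane wave with frequency `k`. -/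
noncomputable def wave (k x : E) : ℂ := Complex.exp ((2 * Real.pi * inner ℝ k x : ℝ) * Complex.I)

theorem norm_wave (k x : E) : ‖wave k x‖ = 1 := Complex.norm_exp_ofReal_mul_I _

theorem wave_add (k x y : E) : wave k (x + y) = wave k x * wave k y := by
  rw [wave, wave, wave, ← Complex.exp_add, inner_add_right]
  push_cast; ring_nf

theorem wave_neg (k x : E) : wave k (-x) = starRingEnd ℂ (wave k x) := by
  rw [wave, wave, ← Complex.exp_conj, inner_neg_right, map_mul, Complex.conj_ofReal,
    Complex.conj_I]
  push_cast; ring_nf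

theorem re_wave (k x : E) : (wave k x).re = Real.cos (2 * Real.pi * inner ℝ k x) :=
  Complex.exp_ofReal_mul_I_re _

theorem continuous_wave : Continuous fun p : E × E => wave p.1 p.2 := by
  unfold wave; fun_prop

theorem contDiff_wave (k : E) {N : WithTop ℕ∞} : ContDiff ℝ N (wave k) := by
  have h : ContDiff ℝ N fun x : E => ((2 * Real.pi * inner ℝ k x : ℝ) : ℂ) := by
    refine Complex.ofRealCLM.contDiff.comp ?_
    exact contDiff_const.mul (contDiff_const.inner ℝ contDiff_id)
  exact (h.mul contDiff_const).cexp

theorem symIntegrand_nonneg (a : ℝ) (k y : E) :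
    0 ≤ (‖y‖ ^ a)⁻¹ * (1 - Real.cos (2 * Real.pi * inner ℝ k y)) :=
  mul_nonneg (by positivity) (sub_nonneg.2 (Real.cos_le_one _))

theorem symIntegrand_le (a : ℝ) (k y : E) :
    (‖y‖ ^ a)⁻¹ * (1 - Real.cos (2 * Real.pi * inner ℝ k y)) ≤
      20 * (1 + ‖k‖ ^ 2) * (min (‖y‖ ^ 2) 1 * (‖y‖ ^ a)⁻¹) := by
  have h1 : 1 - Real.cos (2 * Real.pi * inner ℝ k y) ≤ 20 * (1 + ‖k‖ ^ 2) * min (‖y‖ ^ 2) 1 := by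
    have hpi : Real.pi ^ 2 ≤ 10 := by nlinarith [Real.pi_lt_d2, Real.pi_pos]
    rw [mul_min_of_nonneg _ _ (by positivity), le_min_iff]
    constructor
    · have h2 := Real.one_sub_sq_div_two_le_cos (x := 2 * Real.pi * inner ℝ k y)
      have h3 : (inner ℝ k y) ^ 2 ≤ (‖k‖ * ‖y‖) ^ 2 :=
        sq_le_sq' (neg_le_of_abs_le (abs_real_inner_le_norm k y)) (real_inner_le_norm k y)
      have h4 : Real.pi ^ 2 * (inner ℝ k y) ^ 2 ≤ 10 * (‖k‖ * ‖y‖) ^ 2 := by gcongr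
      nlinarith [sq_nonneg ‖y‖, sq_nonneg (‖k‖ * ‖y‖)]
    · nlinarith [Real.neg_one_le_cos (2 * Real.pi * inner ℝ k y), sq_nonneg ‖k‖]
  calc _ ≤ (‖y‖ ^ a)⁻¹ * (20 * (1 + ‖k‖ ^ 2) * min (‖y‖ ^ 2) 1) := by gcongr
    _ = _ := by ring

end Wave

section Symbol

variable {E : Type*} [NormedAddCommGroup E] [InnerProductSpace ℝ E] [FiniteDimensional ℝ E]
  [MeasurableSpace E] [BorelSpace E]

/-- The function `min (‖y‖²) 1 / ‖y‖ ^ a` is integrable when `dim E < a < dim E + 2`. -/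
theorem integrable_min_sq_mul_rpow_inv [Nontrivial E] {a : ℝ} (ha : Module.finrank ℝ E < a)
    (ha2 : a < Module.finrank ℝ E + 2) :
    Integrable (fun y : E => min (‖y‖ ^ 2) 1 * (‖y‖ ^ a)⁻¹) := by
  have hd : 1 ≤ Module.finrank ℝ E := Module.finrank_pos
  have hdr : ((Module.finrank ℝ E - 1 : ℕ) : ℝ) = Module.finrank ℝ E - 1 := by
    push_cast [hd]; ring
  refine (integrable_fun_norm_addHaar volume (E := E)
    (f := fun r : ℝ => min (r ^ 2) 1 * (r ^ a)⁻¹)).2 ?_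
  have hmeas : AEStronglyMeasurable
      (fun y : ℝ => y ^ (Module.finrank ℝ E - 1) • (min (y ^ 2) 1 * (y ^ a)⁻¹))
      (volume : Measure ℝ) := by
    apply Measurable.aestronglyMeasurable
    fun_prop
  rw [← Ioc_union_Ioi_eq_Ioi (zero_le_one' ℝ)]
  refine IntegrableOn.union ?_ ?_
  · have h1 : IntegrableOn (fun y : ℝ => y ^ (Module.finrank ℝ E + 1 - a)) (Ioc 0 1) := by
      have := intervalIntegral.intervalIntegrable_rpow' (a := 0) (b := 1)
        (r := Module.finrank ℝ E + 1 - a) (by linarith)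
      exact (intervalIntegrable_iff_integrableOn_Ioc_of_le zero_le_one).1 this
    refine h1.mono' hmeas.restrict ((ae_restrict_iff' measurableSet_Ioc).2
      (Eventually.of_forall fun y hy => ?_))
    have hy0 : 0 < y := hy.1
    have hnn : 0 ≤ y ^ (Module.finrank ℝ E - 1) • (min (y ^ 2) 1 * (y ^ a)⁻¹) := by
      have := Real.rpow_pos_of_pos hy0 a
      simp only [smul_eq_mul]; positivity
    rw [Real.norm_of_nonneg hnn, smul_eq_mul]
    have e : y ^ ((Module.finrank ℝ E : ℝ) + 1 - a)
        = y ^ (Module.finrank ℝ E - 1) * (y ^ 2 * (y ^ a)⁻¹) := by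
      rw [← Real.rpow_natCast, ← Real.rpow_natCast y 2, ← Real.rpow_neg hy0.le,
        ← Real.rpow_add hy0, ← Real.rpow_add hy0, hdr]
      congr 1; push_cast; ring
    rw [e]
    have := Real.rpow_pos_of_pos hy0 a
    gcongr
    exact min_le_left _ _
  · have h1 : IntegrableOn (fun y : ℝ => y ^ (Module.finrank ℝ E - 1 - a)) (Ioi 1) :=
      integrableOn_Ioi_rpow_of_lt (by linarith) zero_lt_one
    refine h1.mono' hmeas.restrict ((ae_restrict_iff' measurableSet_Ioi).2
      (Eventually.of_forall fun y hy => ?_))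
    have hy0 : 0 < y := lt_trans zero_lt_one hy
    have hnn : 0 ≤ y ^ (Module.finrank ℝ E - 1) • (min (y ^ 2) 1 * (y ^ a)⁻¹) := by
      have := Real.rpow_pos_of_pos hy0 a
      simp only [smul_eq_mul]; positivity
    rw [Real.norm_of_nonneg hnn, smul_eq_mul]
    have e : y ^ ((Module.finrank ℝ E : ℝ) - 1 - a)
        = y ^ (Module.finrank ℝ E - 1) * (1 * (y ^ a)⁻¹) := by
      rw [← Real.rpow_natCast, ← Real.rpow_neg hy0.le, one_mul,
        ← Real.rpow_add hy0, hdr]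
      congr 1
    rw [e]
    have := Real.rpow_pos_of_pos hy0 a
    gcongr
    exact min_le_right _ _

theorem integrableOn_norm_rpow_inv [Nontrivial E] {a : ℝ} (ha : Module.finrank ℝ E < a)
    (ha2 : a < Module.finrank ℝ E + 2) {ρ : ℝ} (hρ : 0 < ρ) :
    IntegrableOn (fun y : E => (‖y‖ ^ a)⁻¹) {y | ρ ≤ ‖y‖} := by
  have hS : MeasurableSet {y : E | ρ ≤ ‖y‖} := measurableSet_le measurable_const measurable_norm
  have h := ((integrable_min_sq_mul_rpow_inv (E := E) ha ha2).const_mul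
    (min (ρ ^ 2) 1)⁻¹).integrableOn (s := {y | ρ ≤ ‖y‖})
  refine h.mono' (Measurable.aestronglyMeasurable (by fun_prop)) ((ae_restrict_iff' hS).2
    (Eventually.of_forall fun y hy => ?_))
  have hy : ρ ≤ ‖y‖ := hy
  have hp : 0 < ‖y‖ ^ a := Real.rpow_pos_of_pos (hρ.trans_le hy) a
  rw [Real.norm_of_nonneg (by positivity), ← mul_assoc]
  have h0 : 0 < min (ρ ^ 2) 1 := lt_min (by positivity) one_pos
  have : 1 ≤ (min (ρ ^ 2) 1)⁻¹ * min (‖y‖ ^ 2) 1 := by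
    rw [inv_mul_eq_div, one_le_div h0]
    gcongr
  exact le_mul_of_one_le_left (by positivity) this

/-- Truncated symbol of the operator with kernel `‖y‖ ^ (-a)`. -/
noncomputable def symTrunc (a ρ : ℝ) (k : E) : ℝ :=
  ∫ y in {y : E | ρ ≤ ‖y‖}, (‖y‖ ^ a)⁻¹ * (1 - Real.cos (2 * Real.pi * inner ℝ k y))

/-- Symbol of the operator with kernel `‖y‖ ^ (-a)`. -/
noncomputable def sym (a : ℝ) (k : E) : ℝ :=
  ∫ y : E, (‖y‖ ^ a)⁻¹ * (1 - Real.cos (2 * Real.pi * inner ℝ k y))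

variable {a : ℝ}

theorem integrable_symIntegrand [Nontrivial E] (ha : Module.finrank ℝ E < a)
    (ha2 : a < Module.finrank ℝ E + 2)
    (k : E) :
    Integrable fun y : E => (‖y‖ ^ a)⁻¹ * (1 - Real.cos (2 * Real.pi * inner ℝ k y)) := by
  refine ((integrable_min_sq_mul_rpow_inv (E := E) ha ha2).const_mul (20 * (1 + ‖k‖ ^ 2))).mono'
    (Measurable.aestronglyMeasurable ?_) (Eventually.of_forall fun y => ?_)
  · have : Measurable fun y : E => inner ℝ k y :=
      (continuous_const.inner continuous_id).measurable
    fun_prop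
  · rw [Real.norm_of_nonneg (symIntegrand_nonneg a k y)]
    exact symIntegrand_le a k y

theorem symTrunc_nonneg (ρ : ℝ) (k : E) : 0 ≤ symTrunc a ρ k :=
  integral_nonneg fun y => symIntegrand_nonneg a k y

theorem symTrunc_le_sym [Nontrivial E] (ha : Module.finrank ℝ E < a)
    (ha2 : a < Module.finrank ℝ E + 2) (ρ : ℝ)
    (k : E) : symTrunc a ρ k ≤ sym a k :=
  setIntegral_le_integral (integrable_symIntegrand ha ha2 k)
    (Eventually.of_forall fun y => symIntegrand_nonneg a k y)

theorem exists_sym_le [Nontrivial E] (ha : Module.finrank ℝ E < a)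
    (ha2 : a < Module.finrank ℝ E + 2) :
    ∃ C : ℝ, 0 ≤ C ∧ ∀ k : E, sym a k ≤ C * (1 + ‖k‖ ^ 2) := by
  refine ⟨20 * ∫ y : E, min (‖y‖ ^ 2) 1 * (‖y‖ ^ a)⁻¹,
    mul_nonneg (by norm_num) (integral_nonneg fun y => by positivity), fun k => ?_⟩
  calc sym a k ≤ ∫ y : E, 20 * (1 + ‖k‖ ^ 2) * (min (‖y‖ ^ 2) 1 * (‖y‖ ^ a)⁻¹) :=
        integral_mono (integrable_symIntegrand ha ha2 k)
          ((integrable_min_sq_mul_rpow_inv ha ha2).const_mul _) fun y => symIntegrand_le a k y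
    _ = _ := by rw [integral_const_mul]; ring

theorem measurable_symTrunc (ρ : ℝ) : StronglyMeasurable fun k : E => symTrunc a ρ k := by
  refine StronglyMeasurable.integral_prod_right' (f := fun p : E × E =>
    (‖p.2‖ ^ a)⁻¹ * (1 - Real.cos (2 * Real.pi * inner ℝ p.1 p.2))) ?_
  apply Measurable.stronglyMeasurable
  have : Measurable fun p : E × E => inner ℝ p.1 p.2 :=
    (continuous_fst.inner continuous_snd).measurable
  fun_prop

theorem measurable_sym : StronglyMeasurable fun k : E => sym a k := by
  refine StronglyMeasurable.integral_prod_right' (f := fun p : E × E =>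
    (‖p.2‖ ^ a)⁻¹ * (1 - Real.cos (2 * Real.pi * inner ℝ p.1 p.2))) ?_
  apply Measurable.stronglyMeasurable
  have : Measurable fun p : E × E => inner ℝ p.1 p.2 :=
    (continuous_fst.inner continuous_snd).measurable
  fun_prop

theorem tendsto_symTrunc [Nontrivial E] (ha : Module.finrank ℝ E < a)
    (ha2 : a < Module.finrank ℝ E + 2)
    (k : E) : Tendsto (fun ρ => symTrunc a ρ k) (𝓝[>] 0) (𝓝 (sym a k)) := by
  have hS : ∀ ρ : ℝ, MeasurableSet {y : E | ρ ≤ ‖y‖} := fun ρ =>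
    measurableSet_le measurable_const measurable_norm
  have hI := integrable_symIntegrand ha ha2 k
  have : ∀ ρ, symTrunc a ρ k = ∫ y, ({y : E | ρ ≤ ‖y‖}).indicator
      (fun y => (‖y‖ ^ a)⁻¹ * (1 - Real.cos (2 * Real.pi * inner ℝ k y))) y := fun ρ =>
    (integral_indicator (hS ρ)).symm
  simp_rw [this]
  refine tendsto_integral_filter_of_dominated_convergence
    (fun y => (‖y‖ ^ a)⁻¹ * (1 - Real.cos (2 * Real.pi * inner ℝ k y)))
    (Eventually.of_forall fun ρ => hI.1.indicator (hS ρ))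
    (Eventually.of_forall fun ρ => Eventually.of_forall fun y => ?_) hI ?_
  · exact (norm_indicator_le_norm_self _ _).trans_eq
      (Real.norm_of_nonneg (symIntegrand_nonneg a k y))
  · have h0 : ∀ᵐ y : E, y ≠ 0 := by simp [ae_iff]
    filter_upwards [h0] with y hy
    refine tendsto_const_nhds.congr' ?_
    filter_upwards [Ioo_mem_nhdsGT (norm_pos_iff.2 hy)] with ρ hρ
    rw [indicator_of_mem (show y ∈ {y : E | ρ ≤ ‖y‖} from hρ.2.le)]

/-- The principal value operator with kernel `‖y‖ ^ (-a)`, without normalizing constant, exists at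
`x` and is equal to `L`. -/
def HasFL (a : ℝ) (u : E → ℂ) (x : E) (L : ℂ) : Prop :=
  Tendsto (fun ρ : ℝ => ∫ y in {y : E | ρ ≤ ‖y‖}, (‖y‖ ^ a)⁻¹ • (u x - u (x + y)))
    (𝓝[>] 0) (𝓝 L)

theorem integral_one_sub_wave [Nontrivial E] (ha : Module.finrank ℝ E < a)
    (ha2 : a < Module.finrank ℝ E + 2)
    {ρ : ℝ} (hρ : 0 < ρ) (k : E) :
    ∫ y in {y : E | ρ ≤ ‖y‖}, (‖y‖ ^ a)⁻¹ • (1 - wave k y) = symTrunc a ρ k := by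
  have hS : MeasurableSet {y : E | ρ ≤ ‖y‖} := measurableSet_le measurable_const measurable_norm
  have hneg : ∫ y in {y : E | ρ ≤ ‖y‖}, (‖y‖ ^ a)⁻¹ • (1 - wave k y)
      = ∫ y in {y : E | ρ ≤ ‖y‖}, starRingEnd ℂ ((‖y‖ ^ a)⁻¹ • (1 - wave k y)) := by
    rw [← integral_indicator hS, ← integral_indicator hS, ← integral_neg_eq_self]
    congr 1; ext y
    simp only [indicator, mem_ofPred_eq, norm_neg, wave_neg]
    split_ifs <;> simp
  have hwc : Continuous (wave k) := (contDiff_wave k (N := 0)).continuous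
  have hI : IntegrableOn (fun y : E => (‖y‖ ^ a)⁻¹ • (1 - wave k y)) {y | ρ ≤ ‖y‖} := by
    refine ((integrableOn_norm_rpow_inv ha ha2 hρ).const_mul 2).mono'
      (Measurable.aestronglyMeasurable ?_) (Eventually.of_forall fun y => ?_)
    · have := hwc.measurable
      fun_prop
    · rw [norm_smul, Real.norm_of_nonneg (by positivity), mul_comm]
      gcongr
      calc _ ≤ ‖(1 : ℂ)‖ + ‖wave k y‖ := norm_sub_le _ _
        _ = 2 := by rw [norm_wave, norm_one]; norm_num
  rw [integral_conj] at hneg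
  have hre := Complex.conj_eq_iff_re.1 hneg.symm
  rw [← hre, symTrunc]
  congr 1
  have := integral_re hI
  simp only [RCLike.re_to_complex] at this
  rw [← this]
  congr 1; ext y
  simp [re_wave]

/-- Superpositions of plane waves: the operator acts as multiplication by the symbol. -/
theorem hasFL_integral_wave [Nontrivial E] (ha : Module.finrank ℝ E < a)
    (ha2 : a < Module.finrank ℝ E + 2)
    {ν : Measure E} [SFinite ν] {b : E → ℂ} (hb : Integrable b ν)
    (hb2 : Integrable (fun k => ‖k‖ ^ 2 * ‖b k‖) ν) (x : E) :
    HasFL a (fun x => ∫ k, b k * wave k x ∂ν) x (∫ k, sym a k * b k * wave k x ∂ν) := by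
  have hwm : Measurable fun p : E × E => wave p.1 p.2 := continuous_wave.measurable
  have hwk : ∀ x, Measurable fun k : E => wave k x := fun x =>
    hwm.comp (measurable_id.prodMk measurable_const)
  have hIw : ∀ x, Integrable (fun k => b k * wave k x) ν := fun x =>
    hb.norm.mono' (hb.1.mul (hwk x).aestronglyMeasurable)
      (Eventually.of_forall fun k => by rw [norm_mul, norm_wave, mul_one])
  have key : ∀ ρ > 0, ∫ y in {y : E | ρ ≤ ‖y‖}, (‖y‖ ^ a)⁻¹ •
      ((∫ k, b k * wave k x ∂ν) - ∫ k, b k * wave k (x + y) ∂ν)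
      = ∫ k, symTrunc a ρ k * b k * wave k x ∂ν := by
    intro ρ hρ
    have e1 : ∀ y, (‖y‖ ^ a)⁻¹ • ((∫ k, b k * wave k x ∂ν) - ∫ k, b k * wave k (x + y) ∂ν)
        = ∫ k, (‖y‖ ^ a)⁻¹ • (b k * wave k x * (1 - wave k y)) ∂ν := by
      intro y
      rw [← integral_sub (hIw x) (hIw _), ← integral_smul]
      congr 1; ext k; rw [wave_add]; ring_nf
    simp_rw [e1]
    rw [integral_integral_swap]
    · congr 1; ext k
      have : ∀ y, (‖y‖ ^ a)⁻¹ • (b k * wave k x * (1 - wave k y))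
          = (b k * wave k x) * ((‖y‖ ^ a)⁻¹ • (1 - wave k y)) := fun y => by
        rw [mul_smul_comm]
      simp_rw [this]
      rw [integral_const_mul, integral_one_sub_wave ha ha2 hρ]
      ring
    · have h2 := ((integrableOn_norm_rpow_inv ha ha2 hρ).const_mul 2).mul_prod hb.norm
      refine h2.mono' ?_ (Eventually.of_forall fun p => ?_)
      · have hb' : AEStronglyMeasurable (fun p : E × E => b p.2)
            ((volume.restrict {y : E | ρ ≤ ‖y‖}).prod ν) := hb.1.comp_snd
        have m1 : Measurable fun p : E × E => wave p.2 x := (hwk x).comp measurable_snd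
        have m2 : Measurable fun p : E × E => wave p.2 p.1 := hwm.comp measurable_swap
        have m3 : Measurable fun p : E × E => (‖p.1‖ ^ a)⁻¹ := by fun_prop
        exact m3.aestronglyMeasurable.smul ((hb'.mul m1.aestronglyMeasurable).mul
          (measurable_const.sub m2).aestronglyMeasurable)
      · simp only [Function.uncurry]
        rw [norm_smul, Real.norm_of_nonneg (by positivity), norm_mul, norm_mul, norm_wave]
        have : ‖1 - wave p.2 p.1‖ ≤ 2 := by
          calc _ ≤ ‖(1 : ℂ)‖ + ‖wave p.2 p.1‖ := norm_sub_le _ _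
            _ = 2 := by rw [norm_wave, norm_one]; norm_num
        calc _ ≤ (‖p.1‖ ^ a)⁻¹ * (‖b p.2‖ * 1 * 2) := by gcongr
          _ = _ := by ring
  obtain ⟨C, hC0, hC⟩ := exists_sym_le (E := E) ha ha2
  have hdom : Integrable (fun k => C * (‖b k‖ + ‖k‖ ^ 2 * ‖b k‖)) ν := (hb.norm.add hb2).const_mul C
  unfold HasFL
  refine Tendsto.congr' (f₁ := fun ρ => ∫ k, symTrunc a ρ k * b k * wave k x ∂ν) ?_ ?_
  · filter_upwards [self_mem_nhdsWithin] with ρ hρ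
    exact (key ρ hρ).symm
  refine tendsto_integral_filter_of_dominated_convergence _ (Eventually.of_forall fun ρ => ?_)
    (Eventually.of_forall fun ρ => Eventually.of_forall fun k => ?_) hdom
    (Eventually.of_forall fun k => ?_)
  · exact (((Complex.continuous_ofReal.comp_stronglyMeasurable
      (measurable_symTrunc ρ)).aestronglyMeasurable).mul hb.1).mul (hwk x).aestronglyMeasurable
  · rw [norm_mul, norm_mul, norm_wave, Complex.norm_real,
      Real.norm_of_nonneg (symTrunc_nonneg _ _), mul_one]
    calc _ ≤ (C * (1 + ‖k‖ ^ 2)) * ‖b k‖ := by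
          gcongr
          exact (symTrunc_le_sym ha ha2 ρ k).trans (hC k)
      _ = _ := by ring
  · refine Tendsto.mul_const _ (Tendsto.mul_const _ ?_)
    exact (Complex.continuous_ofReal.tendsto _).comp (tendsto_symTrunc ha ha2 k)

theorem hasFL_wave [Nontrivial E] (ha : Module.finrank ℝ E < a)
    (ha2 : a < Module.finrank ℝ E + 2) (k x : E) :
    HasFL a (wave k) x (sym a k * wave k x) := by
  have := hasFL_integral_wave ha ha2 (ν := Measure.dirac k) (b := fun _ => 1)
    (by simp) (integrable_dirac (by simp)) x
  simpa using this

end Symbol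

section Kernel

variable {E : Type*} [NormedAddCommGroup E] [InnerProductSpace ℝ E]

/-- A smooth positive function on the line, equal to `r` for `r ≥ 1`. -/
noncomputable def regId (r : ℝ) : ℝ := 1 + Real.smoothTransition (2 * r - 1) * (r - 1)

theorem regId_of_one_le {r : ℝ} (hr : 1 ≤ r) : regId r = r := by
  rw [regId, Real.smoothTransition.one_of_one_le (by linarith)]; ring

theorem regId_pos (r : ℝ) : 0 < regId r := by
  rcases le_total r (1 / 2) with h | h
  · rw [regId, Real.smoothTransition.zero_of_nonpos (by linarith)]; norm_num
  · have h0 := Real.smoothTransition.nonneg (2 * r - 1)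
    have h1 := Real.smoothTransition.le_one (2 * r - 1)
    rw [regId]
    rcases le_total r 1 with h2 | h2 <;> nlinarith

theorem contDiff_regId {N : ℕ∞} : ContDiff ℝ N regId := by
  unfold regId
  refine contDiff_const.add (ContDiff.mul ?_ (contDiff_id.sub contDiff_const))
  exact Real.smoothTransition.contDiff.comp ((contDiff_const.mul contDiff_id).sub contDiff_const)

/-- A smooth function on `E` equal to `‖z‖ ^ (-b)` for `‖z‖ ≥ 1`. -/
noncomputable def regKer (b : ℝ) (z : E) : ℂ := ((regId (‖z‖ ^ 2) ^ (-b / 2) : ℝ) : ℂ)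

theorem contDiff_regKer (b : ℝ) {N : ℕ∞} : ContDiff ℝ N (regKer b : E → ℂ) := by
  refine Complex.ofRealCLM.contDiff.comp ?_
  refine ContDiff.rpow_const_of_ne ?_ fun z => (regId_pos _).ne'
  exact contDiff_regId.comp (contDiff_norm_sq ℝ)

theorem regKer_of_one_le {b : ℝ} {z : E} (hz : 1 ≤ ‖z‖) : regKer b z = ((‖z‖ ^ (-b) : ℝ) : ℂ) := by
  rw [regKer, regId_of_one_le (by nlinarith), ← Real.rpow_natCast, ← Real.rpow_mul (norm_nonneg z)]
  congr 2; push_cast; ring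

theorem regKer_neg (b : ℝ) (z : E) : regKer b (-z) = regKer b z := by
  rw [regKer, regKer, norm_neg]

theorem regKer_scale {b r : ℝ} (hr : 1 ≤ r) {z : E} (hz : r ≤ ‖z‖) :
    regKer b z = ((r ^ (-b) : ℝ) : ℂ) • regKer b (r⁻¹ • z) := by
  have hr0 : 0 < r := by linarith
  have h1 : ‖r⁻¹ • z‖ = r⁻¹ * ‖z‖ := by
    rw [norm_smul, Real.norm_of_nonneg (by positivity)]
  have h2 : 1 ≤ ‖r⁻¹ • z‖ := by
    rw [h1, inv_mul_eq_div, one_le_div hr0]; exact hz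
  rw [regKer_of_one_le (hr.trans hz), regKer_of_one_le h2, h1, smul_eq_mul, ← Complex.ofReal_mul,
    Real.mul_rpow (by positivity) (norm_nonneg z), Real.inv_rpow hr0.le, ← mul_assoc,
    mul_inv_cancel₀ (Real.rpow_pos_of_pos hr0 _).ne', one_mul]

theorem exists_norm_iteratedFDeriv_regKer_le [FiniteDimensional ℝ E] {b : ℝ} (hb : 0 ≤ b) (i : ℕ) :
    ∃ C : ℝ, 0 ≤ C ∧ ∀ z : E, ‖iteratedFDeriv ℝ i (regKer b) z‖ ≤ C * (1 + ‖z‖) ^ (-b) := by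
  have hcont : Continuous (iteratedFDeriv ℝ i (regKer b : E → ℂ)) :=
    (contDiff_regKer b (N := i)).continuous_iteratedFDeriv (by simp)
  obtain ⟨C, hC⟩ := (isCompact_closedBall (0 : E) 2).exists_bound_of_continuousOn
    hcont.continuousOn
  have hC0 : 0 ≤ C := (norm_nonneg _).trans (hC 0 (by simp))
  refine ⟨C * 3 ^ b, by positivity, fun z => ?_⟩
  have hz1 : 0 < 1 + ‖z‖ := by positivity
  rcases le_total ‖z‖ 2 with hz | hz
  · refine (hC z (by simpa using hz)).trans ?_
    have : 1 ≤ (3 : ℝ) ^ b * (1 + ‖z‖) ^ (-b) := by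
      rw [Real.rpow_neg hz1.le, ← div_eq_mul_inv, one_le_div (Real.rpow_pos_of_pos hz1 _)]
      exact Real.rpow_le_rpow hz1.le (by linarith) hb
    rw [mul_assoc]
    exact le_mul_of_one_le_right hC0 this
  · set r := ‖z‖ / 2 with hr
    have hr1 : 1 ≤ r := by linarith
    have hr0 : 0 < r := by linarith
    have hev : regKer b =ᶠ[𝓝 z] fun w : E => ((r ^ (-b) : ℝ) : ℂ) • regKer b (r⁻¹ • w) := by
      have : ∀ᶠ w : E in 𝓝 z, r < ‖w‖ :=
        continuous_norm.continuousAt.eventually_const_lt (by linarith)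
      filter_upwards [this] with w hw
      exact regKer_scale hr1 hw.le
    have hcd : ContDiff ℝ i (fun w : E => regKer b (r⁻¹ • w)) :=
      (contDiff_regKer b (N := i)).comp (contDiff_const_smul _)
    rw [(hev.iteratedFDeriv ℝ i).eq_of_nhds, iteratedFDeriv_const_smul_apply' hcd.contDiffAt,
      iteratedFDeriv_comp_const_smul _ (contDiff_regKer b (N := i)), norm_smul, norm_smul,
      Complex.norm_real, Real.norm_of_nonneg (by positivity), norm_pow,
      Real.norm_of_nonneg (by positivity)]
    have hw : ‖iteratedFDeriv ℝ i (regKer b) (r⁻¹ • z)‖ ≤ C := by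
      refine hC _ ?_
      rw [mem_closedBall_zero_iff, norm_smul, Real.norm_of_nonneg (by positivity),
        inv_mul_le_iff₀ hr0, hr]
      linarith
    have hp : r⁻¹ ^ i ≤ 1 := pow_le_one₀ (by positivity) (inv_le_one_of_one_le₀ hr1)
    have hq : r ^ (-b) ≤ 3 ^ b * (1 + ‖z‖) ^ (-b) := by
      rw [Real.rpow_neg hz1.le, Real.rpow_neg hr0.le, ← div_eq_mul_inv,
        le_div_iff₀ (Real.rpow_pos_of_pos hz1 _), inv_mul_le_iff₀ (Real.rpow_pos_of_pos hr0 _),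
        ← Real.mul_rpow hr0.le (by norm_num)]
      exact Real.rpow_le_rpow hz1.le (by linarith) hb
    calc _ ≤ r ^ (-b) * (1 * C) := by gcongr
      _ ≤ (3 ^ b * (1 + ‖z‖) ^ (-b)) * (1 * C) := by gcongr
      _ = _ := by ring

theorem one_add_norm_sub_rpow_neg_le {b : ℝ} (hb : 0 ≤ b) (x y : E) :
    (1 + ‖x - y‖) ^ (-b) ≤ (1 + ‖x‖) ^ b * (1 + ‖y‖) ^ (-b) := by
  have h1 : 0 < 1 + ‖x - y‖ := by positivity
  have h2 : 0 < 1 + ‖y‖ := by positivity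
  have h3 : 0 < 1 + ‖x‖ := by positivity
  rw [Real.rpow_neg h1.le, Real.rpow_neg h2.le, ← div_eq_mul_inv,
    le_div_iff₀ (Real.rpow_pos_of_pos h2 _), inv_mul_le_iff₀ (Real.rpow_pos_of_pos h1 _),
    ← Real.mul_rpow h1.le h3.le]
  refine Real.rpow_le_rpow h2.le ?_ hb
  have : ‖y‖ ≤ ‖x - y‖ + ‖x‖ := by
    have := norm_sub_le x (x - y)
    simp only [sub_sub_cancel] at this; linarith
  nlinarith [norm_nonneg (x - y), norm_nonneg x]

theorem iteratedFDeriv_smul_regKer_sub (b : ℝ) (i : ℕ) (c : ℂ) (x y : E) :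
    iteratedFDeriv ℝ i (fun x => c • regKer b (x - y)) x
      = c • iteratedFDeriv ℝ i (regKer b) (x - y) := by
  have hcd : ContDiff ℝ i (fun x : E => regKer b (x - y)) :=
    (contDiff_regKer b (N := i)).comp (contDiff_id.sub contDiff_const)
  rw [iteratedFDeriv_const_smul_apply' hcd.contDiffAt, iteratedFDeriv_comp_sub]

variable [FiniteDimensional ℝ E] [MeasurableSpace E] [BorelSpace E]

/-- The potential of a density `V`. -/
noncomputable def pot (b : ℝ) (V : E → ℂ) (x : E) : ℂ := ∫ y, V y • regKer b (x - y)

theorem hasFTaylorSeriesUpTo_pot {b : ℝ} (hb : Module.finrank ℝ E < b) {V : E → ℂ}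
    (hV : Continuous V) {c : ℝ} (hc : ∀ y, ‖V y‖ ≤ c) :
    HasFTaylorSeriesUpTo ((⊤ : ℕ∞) : WithTop ℕ∞) (pot b V)
      (fun x i => ∫ y, V y • iteratedFDeriv ℝ i (regKer b) (x - y)) := by
  have hb0 : 0 ≤ b := (Nat.cast_nonneg _).trans hb.le
  have hc0 : 0 ≤ c := (norm_nonneg _).trans (hc 0)
  have hcont : ∀ i : ℕ, Continuous (iteratedFDeriv ℝ i (regKer b : E → ℂ)) := fun i =>
    (contDiff_regKer b (N := i)).continuous_iteratedFDeriv (by simp)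
  have key := hasFTaylorSeriesUpTo_integral (N := ⊤) (μ := (volume : Measure E))
    (G := fun x y => V y • regKer b (x - y)) ?_ ?_ ?_
  · simp_rw [iteratedFDeriv_smul_regKer_sub] at key
    exact key
  · intro y
    exact ((contDiff_regKer b).comp (contDiff_id.sub contDiff_const)).const_smul _
  · intro i _ x
    simp_rw [iteratedFDeriv_smul_regKer_sub]
    exact (hV.smul ((hcont i).comp (by fun_prop))).aestronglyMeasurable
  · intro i _ x₀
    obtain ⟨C, hC0, hC⟩ := exists_norm_iteratedFDeriv_regKer_le (E := E) hb0 i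
    refine ⟨fun y => c * (C * (2 + ‖x₀‖) ^ b) * (1 + ‖y‖) ^ (-b),
      (integrable_one_add_norm hb).const_mul _, fun y x hx => ?_⟩
    rw [iteratedFDeriv_smul_regKer_sub, norm_smul]
    have hx' : 1 + ‖x‖ ≤ 2 + ‖x₀‖ := by
      have := norm_le_norm_add_norm_sub' x x₀
      have h2 := mem_ball_iff_norm.1 hx
      linarith
    calc _ ≤ c * (C * (1 + ‖x - y‖) ^ (-b)) := by
          gcongr
          · exact hc y
          · exact hC _
      _ ≤ c * (C * ((1 + ‖x‖) ^ b * (1 + ‖y‖) ^ (-b))) := by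
          gcongr
          exact one_add_norm_sub_rpow_neg_le hb0 x y
      _ ≤ c * (C * ((2 + ‖x₀‖) ^ b * (1 + ‖y‖) ^ (-b))) := by gcongr
      _ = _ := by ring

theorem contDiff_pot {b : ℝ} (hb : Module.finrank ℝ E < b) {V : E → ℂ}
    (hV : Continuous V) {c : ℝ} (hc : ∀ y, ‖V y‖ ≤ c) {N : ℕ∞} : ContDiff ℝ N (pot b V) :=
  (hasFTaylorSeriesUpTo_pot hb hV hc).contDiff.of_le (by exact_mod_cast le_top)

theorem iteratedFDeriv_pot {b : ℝ} (hb : Module.finrank ℝ E < b) {V : E → ℂ}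
    (hV : Continuous V) {c : ℝ} (hc : ∀ y, ‖V y‖ ≤ c) (i : ℕ) (x : E) :
    iteratedFDeriv ℝ i (pot b V) x = ∫ y, V y • iteratedFDeriv ℝ i (regKer b) (x - y) :=
  ((hasFTaylorSeriesUpTo_pot hb hV hc).eq_iteratedFDeriv (by exact_mod_cast le_top) x).symm

theorem integrable_smul_regKer_sub {b : ℝ} (hb : Module.finrank ℝ E < b) {V : E → ℂ}
    (hV : Continuous V) {c : ℝ} (hc : ∀ y, ‖V y‖ ≤ c) (i : ℕ) (x : E) :
    Integrable fun y => V y • iteratedFDeriv ℝ i (regKer b) (x - y) := by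
  have hb0 : 0 ≤ b := (Nat.cast_nonneg _).trans hb.le
  have hc0 : 0 ≤ c := (norm_nonneg _).trans (hc 0)
  obtain ⟨C, hC0, hC⟩ := exists_norm_iteratedFDeriv_regKer_le (E := E) hb0 i
  have hcont : Continuous (iteratedFDeriv ℝ i (regKer b : E → ℂ)) :=
    (contDiff_regKer b (N := i)).continuous_iteratedFDeriv (by simp)
  refine ((integrable_one_add_norm hb).const_mul (c * (C * (1 + ‖x‖) ^ b))).mono'
    (hV.smul (hcont.comp (by fun_prop))).aestronglyMeasurable (Eventually.of_forall fun y => ?_)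
  rw [norm_smul]
  calc _ ≤ c * (C * (1 + ‖x - y‖) ^ (-b)) := by
        gcongr
        · exact hc y
        · exact hC _
    _ ≤ c * (C * ((1 + ‖x‖) ^ b * (1 + ‖y‖) ^ (-b))) := by
        gcongr
        exact one_add_norm_sub_rpow_neg_le hb0 x y
    _ = _ := by ring

theorem integrable_smul_regKer {b : ℝ} (hb : Module.finrank ℝ E < b) {V : E → ℂ}
    (hV : Continuous V) {c : ℝ} (hc : ∀ y, ‖V y‖ ≤ c) (x : E) :
    Integrable fun y => V y • regKer b (x - y) := by
  have := integrable_smul_regKer_sub hb hV hc 0 x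
  refine this.mono ?_ (Eventually.of_forall fun y => ?_)
  · exact (hV.smul ((contDiff_regKer b (N := 0)).continuous.comp
      (by fun_prop))).aestronglyMeasurable
  · rw [norm_smul, norm_smul, norm_iteratedFDeriv_zero]

theorem pot_sub {b : ℝ} (hb : Module.finrank ℝ E < b) {V V' : E → ℂ}
    (hV : Continuous V) {c : ℝ} (hc : ∀ y, ‖V y‖ ≤ c) (hV' : Continuous V') {c' : ℝ}
    (hc' : ∀ y, ‖V' y‖ ≤ c') (x : E) :
    pot b (fun y => V y - V' y) x = pot b V x - pot b V' x := by
  rw [pot, pot, pot, ← integral_sub (integrable_smul_regKer hb hV hc x)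
    (integrable_smul_regKer hb hV' hc' x)]
  simp_rw [sub_smul]

theorem pot_add {b : ℝ} (hb : Module.finrank ℝ E < b) {V V' : E → ℂ}
    (hV : Continuous V) {c : ℝ} (hc : ∀ y, ‖V y‖ ≤ c) (hV' : Continuous V') {c' : ℝ}
    (hc' : ∀ y, ‖V' y‖ ≤ c') (x : E) :
    pot b (fun y => V y + V' y) x = pot b V x + pot b V' x := by
  rw [pot, pot, pot, ← integral_add (integrable_smul_regKer hb hV hc x)
    (integrable_smul_regKer hb hV' hc' x)]
  simp_rw [add_smul]

theorem pot_const_mul (b : ℝ) (z : ℂ) (V : E → ℂ) (x : E) :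
    pot b (fun y => z * V y) x = z * pot b V x := by
  rw [pot, pot, ← integral_const_mul]
  congr 1; ext y; simp only [smul_eq_mul]; ring

/-- Potentials of far away densities are small with all derivatives. -/
theorem exists_forall_norm_iteratedFDeriv_pot_le {b : ℝ} (hb : Module.finrank ℝ E < b) (M : ℕ)
    {δ : ℝ} (hδ : 0 < δ) :
    ∃ R₀ : ℝ, ∀ R ≥ R₀, ∀ (V : E → ℂ) (c : ℝ), Continuous V → (∀ y, ‖V y‖ ≤ c) →
      (∀ y ∈ ball (0 : E) R, V y = 0) → ∀ i ≤ M, ∀ x ∈ closedBall (0 : E) 2,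
        ‖iteratedFDeriv ℝ i (pot b V) x‖ ≤ δ * c := by
  have hb0 : 0 ≤ b := (Nat.cast_nonneg _).trans hb.le
  choose C hC0 hC using fun i => exists_norm_iteratedFDeriv_regKer_le (E := E) hb0 i
  set A : ℝ := ∑ i ∈ Finset.range (M + 1), C i with hA
  have hCA : ∀ i ≤ M, C i ≤ A := fun i hi =>
    Finset.single_le_sum (fun j _ => hC0 j) (Finset.mem_range.2 (Nat.lt_succ_of_le hi))
  have hA0 : 0 ≤ A := (hC0 0).trans (hCA 0 (Nat.zero_le _))
  have hInt := integrable_one_add_norm (E := E) (μ := volume) hb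
  have hlim : Tendsto (fun R : ℝ => ∫ y, ({y : E | R ≤ ‖y‖}).indicator
      (fun y => (1 + ‖y‖) ^ (-b)) y) atTop (𝓝 0) := by
    have := tendsto_integral_filter_of_dominated_convergence (μ := (volume : Measure E))
      (l := (atTop : Filter ℝ)) (F := fun R => ({y : E | R ≤ ‖y‖}).indicator
      (fun y => (1 + ‖y‖) ^ (-b))) (f := fun _ => (0 : ℝ)) (fun y => (1 + ‖y‖) ^ (-b))
      (Eventually.of_forall fun R => hInt.1.indicator
        (measurableSet_le measurable_const measurable_norm))
      (Eventually.of_forall fun R => Eventually.of_forall fun y =>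
        (norm_indicator_le_norm_self _ _).trans_eq (Real.norm_of_nonneg (by positivity))) hInt
      (Eventually.of_forall fun y => ?_)
    · simpa using this
    · refine tendsto_const_nhds.congr' ?_
      filter_upwards [eventually_gt_atTop ‖y‖] with R hR
      rw [indicator_of_notMem]
      exact not_le.2 hR
  have hpos : 0 < δ / (A * 3 ^ b + 1) := by positivity
  obtain ⟨R₀, hR₀⟩ := eventually_atTop.1 (hlim.eventually_lt_const hpos)
  refine ⟨R₀, fun R hR V c hV hc hV0 i hi x hx => ?_⟩
  have hc0 : 0 ≤ c := (norm_nonneg _).trans (hc 0)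
  have hI := hR₀ R hR
  set I := ∫ y, ({y : E | R ≤ ‖y‖}).indicator (fun y => (1 + ‖y‖) ^ (-b)) y with hIdef
  have hI0 : 0 ≤ I := integral_nonneg fun y => indicator_nonneg (fun y _ => by positivity) y
  rw [iteratedFDeriv_pot hb hV hc]
  have hx2 : ‖x‖ ≤ 2 := by simpa using hx
  have hbound : ∀ y, ‖V y • iteratedFDeriv ℝ i (regKer b) (x - y)‖ ≤
      c * (A * 3 ^ b) * ({y : E | R ≤ ‖y‖}).indicator (fun y => (1 + ‖y‖) ^ (-b)) y := by
    intro y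
    by_cases hy : R ≤ ‖y‖
    · rw [indicator_of_mem (show y ∈ {y : E | R ≤ ‖y‖} from hy), norm_smul]
      calc _ ≤ c * (C i * (1 + ‖x - y‖) ^ (-b)) := by
            gcongr
            · exact hc y
            · exact hC i _
        _ ≤ c * (A * ((1 + ‖x‖) ^ b * (1 + ‖y‖) ^ (-b))) := by
            gcongr
            · exact hCA i hi
            · exact one_add_norm_sub_rpow_neg_le hb0 x y
        _ ≤ c * (A * (3 ^ b * (1 + ‖y‖) ^ (-b))) := by gcongr; linarith
        _ = _ := by ring
    · rw [hV0 y (by simpa using hy), zero_smul, norm_zero]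
      exact mul_nonneg (by positivity) (indicator_nonneg (fun y _ => by positivity) y)
  have hInt2 : Integrable fun y => c * (A * 3 ^ b) * ({y : E | R ≤ ‖y‖}).indicator
      (fun y => (1 + ‖y‖) ^ (-b)) y :=
    (hInt.indicator (measurableSet_le measurable_const measurable_norm)).const_mul _
  calc _ ≤ ∫ y, c * (A * 3 ^ b) * ({y : E | R ≤ ‖y‖}).indicator (fun y => (1 + ‖y‖) ^ (-b)) y :=
        norm_integral_le_of_norm_le hInt2 (Eventually.of_forall hbound)
    _ = c * ((A * 3 ^ b) * I) := by rw [integral_const_mul]; ring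
    _ ≤ c * ((A * 3 ^ b + 1) * (δ / (A * 3 ^ b + 1))) := by
        gcongr
        linarith
    _ = δ * c := by field_simp

/-- On functions vanishing near a point, the operator is minus the potential. -/
theorem hasFL_of_eq_zero_ball {a : ℝ} {V : E → ℂ} (hV0 : ∀ y ∈ ball (0 : E) 4, V y = 0)
    {x : E} (hx : x ∈ ball (0 : E) 1) : HasFL a V x (-pot a V x) := by
  have hx1 : ‖x‖ < 1 := by simpa using hx
  refine tendsto_const_nhds.congr' ?_
  filter_upwards [Ioo_mem_nhdsGT (zero_lt_one' ℝ)] with ρ hρ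
  have hS : MeasurableSet {y : E | ρ ≤ ‖y‖} := measurableSet_le measurable_const measurable_norm
  rw [← integral_indicator hS, pot, ← integral_neg,
    ← integral_add_left_eq_self (fun y => -(V y • regKer a (x - y))) x]
  congr 1; ext y
  rw [hV0 x (by simp; linarith)]
  by_cases h4 : x + y ∈ ball (0 : E) 4
  · simp [indicator, hV0 _ h4]
  · have h5 : 4 ≤ ‖x + y‖ := by simpa using h4
    have h6 : 1 ≤ ‖y‖ := by linarith [norm_add_le x y]
    rw [indicator_of_mem (show y ∈ {y : E | ρ ≤ ‖y‖} from hρ.2.le.trans h6)]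
    have : x - (x + y) = -y := by abel
    rw [this, regKer_neg, regKer_of_one_le h6, Real.rpow_neg (norm_nonneg y), zero_sub, smul_neg,
      smul_eq_mul, mul_comm, Complex.real_smul]

end Kernel

section WaveDerivatives

variable {E : Type*} [NormedAddCommGroup E] [InnerProductSpace ℝ E]

theorem iteratedDeriv_cexp_two_pi_mul (i : ℕ) (t : ℝ) :
    iteratedDeriv i (fun t : ℝ => Complex.exp ((2 * Real.pi * t : ℝ) * Complex.I)) t =
      (2 * Real.pi * Complex.I) ^ i * Complex.exp ((2 * Real.pi * t : ℝ) * Complex.I) := by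
  induction i generalizing t with
  | zero => simp
  | succ i ih =>
    rw [iteratedDeriv_succ]
    have : iteratedDeriv i (fun t : ℝ => Complex.exp ((2 * Real.pi * t : ℝ) * Complex.I)) =
      fun t : ℝ => (2 * Real.pi * Complex.I) ^ i *
        Complex.exp ((2 * Real.pi * t : ℝ) * Complex.I) := funext ih
    rw [this]
    have h1 : HasDerivAt (fun t : ℝ => ((2 * Real.pi * t : ℝ) : ℂ) * Complex.I)
        ((2 * Real.pi : ℝ) * Complex.I) t := by
      have := ((hasDerivAt_id t).const_mul (2 * Real.pi)).ofReal_comp.mul_const Complex.I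
      simpa using this
    rw [(h1.cexp.const_mul _).deriv, pow_succ]
    push_cast; ring

theorem contDiff_wave_joint {N : WithTop ℕ∞} : ContDiff ℝ N fun p : E × E => wave p.1 p.2 := by
  have h : ContDiff ℝ N fun p : E × E => ((2 * Real.pi * inner ℝ p.1 p.2 : ℝ) : ℂ) := by
    refine Complex.ofRealCLM.contDiff.comp ?_
    exact contDiff_const.mul (contDiff_fst.inner ℝ contDiff_snd)
  exact (h.mul contDiff_const).cexp

theorem norm_iteratedFDeriv_wave_le (i : ℕ) (k x : E) :
    ‖iteratedFDeriv ℝ i (wave k) x‖ ≤ (2 * Real.pi * ‖k‖) ^ i := by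
  set e : ℝ → ℂ := fun t : ℝ => Complex.exp ((2 * Real.pi * t : ℝ) * Complex.I) with he
  have hcd : ContDiff ℝ i e := by
    have h : ContDiff ℝ i fun t : ℝ => ((2 * Real.pi * t : ℝ) : ℂ) :=
      Complex.ofRealCLM.contDiff.comp (contDiff_const.mul contDiff_id)
    exact (h.mul contDiff_const).cexp
  have h1 : wave k = e ∘ innerSL ℝ k := by ext x; simp [wave, he]
  rw [h1, (innerSL ℝ k).iteratedFDeriv_comp_right hcd x le_rfl]
  refine (ContinuousMultilinearMap.norm_compContinuousLinearMap_le _ _).trans ?_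
  rw [norm_iteratedFDeriv_eq_norm_iteratedDeriv, he, iteratedDeriv_cexp_two_pi_mul, norm_mul,
    Complex.norm_exp_ofReal_mul_I, norm_pow, mul_one]
  simp only [innerSL_apply_norm, Finset.prod_const, Finset.card_univ, Fintype.card_fin]
  rw [mul_pow]
  gcongr
  simp [abs_of_pos Real.pi_pos]

theorem continuous_iteratedFDeriv_wave (i : ℕ) :
    Continuous fun p : E × E => iteratedFDeriv ℝ i (wave p.1) p.2 := by
  rw [continuous_iff_continuousAt]
  rintro ⟨k, x⟩
  exact continuousAt_iteratedFDeriv_partial_right (G := fun p : E × E => wave p.1 p.2)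
    contDiff_wave_joint.contDiffAt

variable [FiniteDimensional ℝ E] [MeasurableSpace E] [BorelSpace E]

theorem hasFTaylorSeriesUpTo_integral_wave {b : E → ℂ} (hbm : AEStronglyMeasurable b)
    (hb : ∀ i : ℕ, Integrable fun k => ‖k‖ ^ i * ‖b k‖) :
    HasFTaylorSeriesUpTo ((⊤ : ℕ∞) : WithTop ℕ∞) (fun x => ∫ k, b k * wave k x)
      (fun x i => ∫ k, b k • iteratedFDeriv ℝ i (wave k) x) := by
  have hD : ∀ (i : ℕ) (k x : E), iteratedFDeriv ℝ i (fun x => b k * wave k x) x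
      = b k • iteratedFDeriv ℝ i (wave k) x := fun i k x => by
    simp_rw [← smul_eq_mul]
    exact iteratedFDeriv_const_smul_apply' (contDiff_wave k).contDiffAt
  have key := hasFTaylorSeriesUpTo_integral (N := ⊤) (μ := (volume : Measure E))
    (G := fun x k => b k * wave k x) ?_ ?_ ?_
  · simp_rw [hD] at key
    exact key
  · exact fun k => contDiff_const.mul (contDiff_wave k)
  · intro i _ x
    simp_rw [hD]
    exact hbm.smul ((continuous_iteratedFDeriv_wave i).comp
      (Continuous.prodMk_left x)).aestronglyMeasurable
  · intro i _ x₀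
    refine ⟨fun k => (2 * Real.pi) ^ i * (‖k‖ ^ i * ‖b k‖), (hb i).const_mul _, fun k x _ => ?_⟩
    rw [hD, norm_smul]
    calc _ ≤ ‖b k‖ * (2 * Real.pi * ‖k‖) ^ i := by
          gcongr; exact norm_iteratedFDeriv_wave_le i k x
      _ = _ := by rw [mul_pow]; ring

theorem contDiff_integral_wave {b : E → ℂ} (hbm : AEStronglyMeasurable b)
    (hb : ∀ i : ℕ, Integrable fun k => ‖k‖ ^ i * ‖b k‖) {N : ℕ∞} :
    ContDiff ℝ N (fun x => ∫ k, b k * wave k x) :=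
  (hasFTaylorSeriesUpTo_integral_wave hbm hb).contDiff.of_le (by exact_mod_cast le_top)

theorem iteratedFDeriv_integral_wave {b : E → ℂ} (hbm : AEStronglyMeasurable b)
    (hb : ∀ i : ℕ, Integrable fun k => ‖k‖ ^ i * ‖b k‖) (i : ℕ) (x : E) :
    iteratedFDeriv ℝ i (fun x => ∫ k, b k * wave k x) x
      = ∫ k, b k • iteratedFDeriv ℝ i (wave k) x :=
  ((hasFTaylorSeriesUpTo_integral_wave hbm hb).eq_iteratedFDeriv
    (by exact_mod_cast le_top) x).symm

theorem norm_iteratedFDeriv_integral_wave_le {b : E → ℂ} (hbm : AEStronglyMeasurable b)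
    (hb : ∀ i : ℕ, Integrable fun k => ‖k‖ ^ i * ‖b k‖) (i : ℕ) (x : E) :
    ‖iteratedFDeriv ℝ i (fun x => ∫ k, b k * wave k x) x‖
      ≤ (2 * Real.pi) ^ i * ∫ k, ‖k‖ ^ i * ‖b k‖ := by
  rw [iteratedFDeriv_integral_wave hbm hb, ← integral_const_mul]
  refine norm_integral_le_of_norm_le ((hb i).const_mul _) (Eventually.of_forall fun k => ?_)
  rw [norm_smul]
  calc _ ≤ ‖b k‖ * (2 * Real.pi * ‖k‖) ^ i := by
        gcongr; exact norm_iteratedFDeriv_wave_le i k x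
    _ = _ := by rw [mul_pow]; ring

end WaveDerivatives

section FourierDecay

variable {E : Type*} [NormedAddCommGroup E] [InnerProductSpace ℝ E] [FiniteDimensional ℝ E]
  [MeasurableSpace E] [BorelSpace E]

/-- Quantitative decay of the Fourier transform of a smooth function supported in a ball. -/
theorem exists_one_add_norm_pow_mul_norm_fourier_le (r : ℝ) (N : ℕ) :
    ∃ C : ℝ, 0 ≤ C ∧ ∀ (g : E → ℂ) (δ : ℝ), ContDiff ℝ N g → tsupport g ⊆ closedBall 0 r →
      (∀ p ≤ N, ∀ x, ‖iteratedFDeriv ℝ p g x‖ ≤ δ) → ∀ k, (1 + ‖k‖) ^ N * ‖𝓕 g k‖ ≤ C * δ := by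
  set v : ℝ := (volume : Measure E).real (closedBall 0 r) with hv
  refine ⟨2 ^ (N - 1) * (v + 2 ^ N * ((N + 1) * v)), by positivity,
    fun g δ hg hsupp hδ k => ?_⟩
  have hδ0 : 0 ≤ δ := (norm_nonneg _).trans (hδ 0 (Nat.zero_le _) 0)
  have hcs : HasCompactSupport g :=
    (isCompact_closedBall (0 : E) r).of_isClosed_subset (isClosed_tsupport g) hsupp
  have hi : ∀ p ≤ N, ∫ x, ‖iteratedFDeriv ℝ p g x‖ ≤ v * δ := by
    intro p hp
    have h0 : ∀ x ∉ closedBall (0 : E) r, ‖iteratedFDeriv ℝ p g x‖ = 0 := by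
      intro x hx
      rw [norm_eq_zero]
      by_contra h
      exact hx (hsupp (support_iteratedFDeriv_subset p h))
    rw [← setIntegral_eq_integral_of_forall_compl_eq_zero h0]
    have := norm_setIntegral_le_of_norm_le_const (μ := volume) (s := closedBall (0 : E) r)
      (f := fun x => ‖iteratedFDeriv ℝ p g x‖) (C := δ) measure_closedBall_lt_top
      (fun x _ => by rw [norm_norm]; exact hδ p hp x)
    rw [mul_comm, hv]
    exact (le_abs_self _).trans this
  have hInt : ∀ (m n : ℕ), (m : ℕ∞) ≤ 0 → (n : ℕ∞) ≤ N →
      Integrable (fun x => ‖x‖ ^ m * ‖iteratedFDeriv ℝ n g x‖) := by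
    intro m n _ hn
    have hn' : n ≤ N := by exact_mod_cast hn
    have hc : Continuous (iteratedFDeriv ℝ n g) :=
      hg.continuous_iteratedFDeriv (by exact_mod_cast hn')
    refine Continuous.integrable_of_hasCompactSupport (by fun_prop) ?_
    exact (hcs.iteratedFDeriv n).norm.mul_left
  have hF : ∀ n ≤ N, ‖k‖ ^ n * ‖𝓕 g k‖ ≤ 2 ^ n * ((n + 1) * (v * δ)) := by
    intro n hn
    have := Real.pow_mul_norm_iteratedFDeriv_fourier_le (K := 0) (N := N) (k := 0) (n := n)
      (f := g) (by exact_mod_cast hg) hInt (by simp) (by exact_mod_cast hn) k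
    rw [norm_iteratedFDeriv_zero] at this
    refine this.trans ?_
    simp only [pow_zero, one_mul, CharP.cast_eq_zero, mul_zero, zero_add]
    gcongr
    rw [Finset.sum_product]
    simp only [Finset.range_one, Finset.sum_singleton, pow_zero, one_mul]
    calc _ ≤ ∑ p ∈ Finset.range (n + 1), v * δ :=
          Finset.sum_le_sum fun p hp => hi p ((Nat.lt_succ_iff.1 (Finset.mem_range.1 hp)).trans hn)
      _ = _ := by simp
  have h0 := hF 0 (Nat.zero_le _)
  have hN := hF N le_rfl
  simp only [pow_zero, one_mul, CharP.cast_eq_zero, zero_add] at h0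
  calc (1 + ‖k‖) ^ N * ‖𝓕 g k‖ ≤ (2 ^ (N - 1) * (1 ^ N + ‖k‖ ^ N)) * ‖𝓕 g k‖ := by
        gcongr
        exact add_pow_le zero_le_one (norm_nonneg k) N
    _ = 2 ^ (N - 1) * (‖𝓕 g k‖ + ‖k‖ ^ N * ‖𝓕 g k‖) := by ring
    _ ≤ 2 ^ (N - 1) * (v * δ + 2 ^ N * ((N + 1) * (v * δ))) := by gcongr
    _ = _ := by ring

theorem exists_integral_norm_pow_mul_norm_fourier_le (r : ℝ) (i : ℕ) :
    ∃ (C : ℝ) (N : ℕ), 0 ≤ C ∧ ∀ (g : E → ℂ) (δ : ℝ), ContDiff ℝ N g →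
      tsupport g ⊆ closedBall 0 r → (∀ p ≤ N, ∀ x, ‖iteratedFDeriv ℝ p g x‖ ≤ δ) →
      Integrable (fun k => ‖k‖ ^ i * ‖𝓕 g k‖) ∧ ∫ k, ‖k‖ ^ i * ‖𝓕 g k‖ ≤ C * δ := by
  set d := Module.finrank ℝ E with hd
  obtain ⟨C, hC0, hC⟩ := exists_one_add_norm_pow_mul_norm_fourier_le (E := E) r (d + 1 + i)
  have hInt : Integrable fun k : E => (1 + ‖k‖) ^ (-((d : ℝ) + 1)) :=
    integrable_one_add_norm (by rw [← hd]; linarith)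
  refine ⟨C * ∫ k : E, (1 + ‖k‖) ^ (-((d : ℝ) + 1)), d + 1 + i,
    mul_nonneg hC0 (integral_nonneg fun k => by positivity), fun g δ hg hsupp hδ => ?_⟩
  have hcs : HasCompactSupport g :=
    (isCompact_closedBall (0 : E) r).of_isClosed_subset (isClosed_tsupport g) hsupp
  have hgi : Integrable g := hg.continuous.integrable_of_hasCompactSupport hcs
  have hb : ∀ k : E, ‖k‖ ^ i * ‖𝓕 g k‖ ≤ C * δ * (1 + ‖k‖) ^ (-((d : ℝ) + 1)) := by
    intro k
    have h1 : 0 < 1 + ‖k‖ := by positivity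
    have h2 : (1 + ‖k‖) ^ (-((d : ℝ) + 1)) = ((1 + ‖k‖) ^ (d + 1))⁻¹ := by
      rw [Real.rpow_neg h1.le, ← Real.rpow_natCast]; push_cast; rfl
    rw [h2, ← div_eq_mul_inv, le_div_iff₀ (by positivity)]
    refine le_trans ?_ (hC g δ hg hsupp hδ k)
    calc ‖k‖ ^ i * ‖𝓕 g k‖ * (1 + ‖k‖) ^ (d + 1)
        ≤ (1 + ‖k‖) ^ i * ‖𝓕 g k‖ * (1 + ‖k‖) ^ (d + 1) := by gcongr; linarith
      _ = _ := by rw [pow_add (1 + ‖k‖) (d + 1) i]; ring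
  have hFc : Continuous (𝓕 g) :=
    VectorFourier.fourierIntegral_continuous Real.continuous_fourierChar
      (by exact continuous_inner) hgi
  have hI : Integrable (fun k => ‖k‖ ^ i * ‖𝓕 g k‖) := by
    refine (hInt.const_mul (C * δ)).mono' (by fun_prop) (Eventually.of_forall fun k => ?_)
    rw [Real.norm_of_nonneg (by positivity)]
    exact hb k
  refine ⟨hI, ?_⟩
  calc _ ≤ ∫ k, C * δ * (1 + ‖k‖) ^ (-((d : ℝ) + 1)) :=
        integral_mono hI (hInt.const_mul _) hb
    _ = _ := by rw [integral_const_mul]; ring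

theorem continuous_fourier_of_hasCompactSupport {g : E → ℂ} (hg : Continuous g)
    (hcs : HasCompactSupport g) : Continuous (𝓕 g) :=
  VectorFourier.fourierIntegral_continuous Real.continuous_fourierChar
    (by exact continuous_inner) (hg.integrable_of_hasCompactSupport hcs)

theorem integrable_norm_pow_mul_norm_fourier {g : E → ℂ} (hg : ContDiff ℝ ∞ g)
    (hcs : HasCompactSupport g) (i : ℕ) : Integrable (fun k => ‖k‖ ^ i * ‖𝓕 g k‖) := by
  obtain ⟨r, hr⟩ := hcs.isBounded.subset_closedBall (0 : E)
  obtain ⟨C, N, -, h⟩ := exists_integral_norm_pow_mul_norm_fourier_le (E := E) r i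
  have hbd : ∀ p, ∃ B, ∀ x, ‖iteratedFDeriv ℝ p g x‖ ≤ B := fun p =>
    (hcs.iteratedFDeriv p).exists_bound_of_continuous
      (hg.continuous_iteratedFDeriv (by exact_mod_cast le_top))
  choose B hB using hbd
  refine (h g (∑ p ∈ Finset.range (N + 1), B p) (hg.of_le (by exact_mod_cast le_top)) hr
    fun p hp x => (hB p x).trans ?_).1
  exact Finset.single_le_sum (f := B) (fun j _ => (norm_nonneg _).trans (hB j 0))
    (Finset.mem_range.2 (Nat.lt_succ_of_le hp))

theorem integral_fourier_mul_wave {g : E → ℂ} (hg : ContDiff ℝ ∞ g)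
    (hcs : HasCompactSupport g) (x : E) : ∫ k, 𝓕 g k * wave k x = g x := by
  have hgi : Integrable g := hg.continuous.integrable_of_hasCompactSupport hcs
  have hFi : Integrable (𝓕 g) := by
    have := integrable_norm_pow_mul_norm_fourier hg hcs 0
    simp only [pow_zero, one_mul] at this
    exact (integrable_norm_iff
      (continuous_fourier_of_hasCompactSupport hg.continuous hcs).aestronglyMeasurable).1 this
  have := hgi.fourierInv_fourier_eq hFi (hg.continuous.continuousAt (x := x))
  rw [← this, Real.fourierInv_eq']
  congr 1; ext k
  rw [wave, smul_eq_mul, mul_comm]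

end FourierDecay

section Resolvent

variable {E : Type*} [NormedAddCommGroup E] [InnerProductSpace ℝ E] [FiniteDimensional ℝ E]

/-- Bound for the derivatives of the product with a fixed smooth compactly supported function. -/
theorem exists_norm_iteratedFDeriv_mul_le {χ : E → ℂ} (hχ : ContDiff ℝ ∞ χ)
    (hcs : HasCompactSupport χ) (M : ℕ) :
    ∃ C : ℝ, 0 ≤ C ∧ ∀ (v : E → ℂ) (δ : ℝ), ContDiff ℝ ∞ v →
      (∀ i ≤ M, ∀ x ∈ tsupport χ, ‖iteratedFDeriv ℝ i v x‖ ≤ δ) → 0 ≤ δ →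
      ∀ i ≤ M, ∀ x, ‖iteratedFDeriv ℝ i (fun y => χ y * v y) x‖ ≤ C * δ := by
  have hbd : ∀ p, ∃ B, ∀ x, ‖iteratedFDeriv ℝ p χ x‖ ≤ B := fun p =>
    (hcs.iteratedFDeriv p).exists_bound_of_continuous
      (hχ.continuous_iteratedFDeriv (by exact_mod_cast le_top))
  choose B hB using hbd
  have hB0 : ∀ p, 0 ≤ B p := fun p => (norm_nonneg _).trans (hB p 0)
  set A := ∑ p ∈ Finset.range (M + 1), B p with hA
  have hBA : ∀ p ≤ M, B p ≤ A := fun p hp =>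
    Finset.single_le_sum (f := B) (fun j _ => hB0 j) (Finset.mem_range.2 (Nat.lt_succ_of_le hp))
  have hA0 : 0 ≤ A := (hB0 0).trans (hBA 0 (Nat.zero_le _))
  refine ⟨2 ^ M * A, by positivity, fun v δ hv hδ hδ0 i hi x => ?_⟩
  by_cases hx : x ∈ tsupport χ
  · refine (norm_iteratedFDeriv_mul_le hχ hv x (by exact_mod_cast le_top)).trans ?_
    calc _ ≤ ∑ j ∈ Finset.range (i + 1), (i.choose j : ℝ) * A * δ := by
          refine Finset.sum_le_sum fun j hj => ?_
          have hj' : j ≤ i := Nat.lt_succ_iff.1 (Finset.mem_range.1 hj)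
          gcongr
          · exact (hB j x).trans (hBA j (hj'.trans hi))
          · exact hδ _ ((Nat.sub_le _ _).trans hi) x hx
      _ = 2 ^ i * A * δ := by
          rw [← Finset.sum_mul, ← Finset.sum_mul]
          congr 2
          exact_mod_cast Nat.sum_range_choose i
      _ ≤ _ := by gcongr; norm_num
  · have : iteratedFDeriv ℝ i (fun y => χ y * v y) x = 0 := by
      by_contra h
      exact hx (tsupport_mul_subset_left (support_iteratedFDeriv_subset i h))
    rw [this, norm_zero]
    positivity

variable (E) in
/-- The cutoff function used to localize data to the ball of radius `2`. -/
noncomputable def cutoff : ContDiffBump (0 : E) := ⟨1, 2, one_pos, one_lt_two⟩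

theorem contDiff_cutoff : ContDiff ℝ ∞ (fun x : E => ((cutoff E x : ℝ) : ℂ)) :=
  Complex.ofRealCLM.contDiff.comp (cutoff E).contDiff

theorem tsupport_cutoff : tsupport (fun x : E => ((cutoff E x : ℝ) : ℂ)) ⊆ closedBall 0 2 := by
  have h : tsupport (fun x : E => ((cutoff E x : ℝ) : ℂ)) ⊆ tsupport (cutoff E) :=
    closure_mono fun x hx => by simpa using hx
  refine h.trans ?_
  rw [(cutoff E).tsupport_eq]
  exact subset_rfl

theorem hasCompactSupport_cutoff : HasCompactSupport (fun x : E => ((cutoff E x : ℝ) : ℂ)) :=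
  (isCompact_closedBall (0 : E) 2).of_isClosed_subset (isClosed_tsupport _) tsupport_cutoff

theorem cutoff_eq_one {x : E} (hx : x ∈ closedBall (0 : E) 1) : cutoff E x = 1 :=
  (cutoff E).one_of_mem_closedBall hx

variable [MeasurableSpace E] [BorelSpace E]

/-- The resolvent, at the imaginary point `-τ i`, of the operator with kernel `‖y‖ ^ (-a)`, applied
to the localization of `v`. -/
noncomputable def resolv (a τ : ℝ) (v : E → ℂ) (x : E) : ℂ :=
  ∫ k, (𝓕 (fun y => (cutoff E y : ℂ) * v y) k / (sym a k + τ * Complex.I)) * wave k x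

theorem abs_le_norm_sym_add (a τ : ℝ) (k : E) : |τ| ≤ ‖(sym a k + τ * Complex.I : ℂ)‖ := by
  have := Complex.abs_im_le_norm (sym a k + τ * Complex.I)
  simpa using this

variable {a τ : ℝ}

theorem sym_add_ne_zero (hτ : τ ≠ 0) (k : E) : (sym a k + τ * Complex.I : ℂ) ≠ 0 := by
  rw [← norm_pos_iff]
  exact (abs_pos.2 hτ).trans_le (abs_le_norm_sym_add a τ k)

theorem norm_div_sym_add_le (hτ : τ ≠ 0) (z : ℂ) (k : E) :
    ‖z / (sym a k + τ * Complex.I)‖ ≤ |τ|⁻¹ * ‖z‖ := by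
  rw [norm_div, div_eq_inv_mul]
  have := abs_pos.2 hτ
  gcongr
  exact abs_le_norm_sym_add a τ k

theorem contDiff_cutoff_mul {v : E → ℂ} (hv : ContDiff ℝ ∞ v) :
    ContDiff ℝ ∞ (fun y => (cutoff E y : ℂ) * v y) := contDiff_cutoff.mul hv

theorem hasCompactSupport_cutoff_mul (v : E → ℂ) :
    HasCompactSupport (fun y => (cutoff E y : ℂ) * v y) := hasCompactSupport_cutoff.mul_right

theorem aestronglyMeasurable_resolvCoef {v : E → ℂ} (hv : Continuous v) :
    AEStronglyMeasurable fun k : E =>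
      𝓕 (fun y => (cutoff E y : ℂ) * v y) k / (sym a k + τ * Complex.I) := by
  have h1 := (continuous_fourier_of_hasCompactSupport
    (contDiff_cutoff.continuous.mul hv) (hasCompactSupport_cutoff_mul v)).measurable
  have h2 : Measurable fun k : E => (sym a k + τ * Complex.I : ℂ) :=
    (Complex.measurable_ofReal.comp measurable_sym.measurable).add_const _
  exact (h1.div h2).aestronglyMeasurable

theorem integrable_resolvCoef (hτ : τ ≠ 0) {v : E → ℂ} (hv : ContDiff ℝ ∞ v) (i : ℕ) :
    Integrable fun k : E => ‖k‖ ^ i *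
      ‖𝓕 (fun y => (cutoff E y : ℂ) * v y) k / (sym a k + τ * Complex.I)‖ := by
  refine ((integrable_norm_pow_mul_norm_fourier (contDiff_cutoff_mul hv)
    (hasCompactSupport_cutoff_mul v) i).const_mul |τ|⁻¹).mono' ?_ (Eventually.of_forall fun k => ?_)
  · exact (by fun_prop : Continuous fun k : E => ‖k‖ ^ i).aestronglyMeasurable.mul
      (aestronglyMeasurable_resolvCoef hv.continuous).norm
  · rw [Real.norm_of_nonneg (by positivity)]
    calc _ ≤ ‖k‖ ^ i * (|τ|⁻¹ * ‖𝓕 (fun y => (cutoff E y : ℂ) * v y) k‖) := by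
          gcongr; exact norm_div_sym_add_le hτ _ k
      _ = _ := by ring

theorem contDiff_resolv (hτ : τ ≠ 0) {v : E → ℂ} (hv : ContDiff ℝ ∞ v) {N : ℕ∞} :
    ContDiff ℝ N (resolv a τ v) :=
  contDiff_integral_wave (aestronglyMeasurable_resolvCoef hv.continuous)
    (integrable_resolvCoef hτ hv)

theorem integrable_resolvCoef_mul_wave (hτ : τ ≠ 0) {v : E → ℂ} (hv : ContDiff ℝ ∞ v) (x : E) :
    Integrable fun k : E =>
      𝓕 (fun y => (cutoff E y : ℂ) * v y) k / (sym a k + τ * Complex.I) * wave k x := by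
  have := integrable_resolvCoef (a := a) hτ hv 0
  refine this.mono' ((aestronglyMeasurable_resolvCoef hv.continuous).mul
    (continuous_wave.comp (Continuous.prodMk_left x)).aestronglyMeasurable)
    (Eventually.of_forall fun k => ?_)
  rw [norm_mul, norm_wave, mul_one, pow_zero, one_mul]

theorem integrable_fourier_mul_wave {g : E → ℂ} (hg : ContDiff ℝ ∞ g) (hcs : HasCompactSupport g)
    (x : E) : Integrable fun k : E => 𝓕 g k * wave k x := by
  have := integrable_norm_pow_mul_norm_fourier hg hcs 0
  refine this.mono' ((continuous_fourier_of_hasCompactSupport hg.continuous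
    hcs).aestronglyMeasurable.mul
    (continuous_wave.comp (Continuous.prodMk_left x)).aestronglyMeasurable)
    (Eventually.of_forall fun k => ?_)
  rw [norm_mul, norm_wave, mul_one, pow_zero, one_mul]

theorem hasFL_resolv [Nontrivial E] (ha : Module.finrank ℝ E < a)
    (ha2 : a < Module.finrank ℝ E + 2) (hτ : τ ≠ 0) {v : E → ℂ} (hv : ContDiff ℝ ∞ v) (x : E) :
    HasFL a (resolv a τ v) x ((cutoff E x : ℂ) * v x - τ * Complex.I * resolv a τ v x) := by
  have h1 := hasFL_integral_wave ha ha2 (ν := volume)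
    (b := fun k : E => 𝓕 (fun y => (cutoff E y : ℂ) * v y) k / (sym a k + τ * Complex.I))
    ((integrable_norm_iff (aestronglyMeasurable_resolvCoef hv.continuous)).1
      (by simpa using integrable_resolvCoef (a := a) hτ hv 0))
    (integrable_resolvCoef hτ hv 2) x
  have h2 := integral_fourier_mul_wave (contDiff_cutoff_mul hv) (hasCompactSupport_cutoff_mul v) x
  have e : (cutoff E x : ℂ) * v x - τ * Complex.I * resolv a τ v x = ∫ k : E,
      (sym a k : ℂ) * (𝓕 (fun y => (cutoff E y : ℂ) * v y) k / (sym a k + τ * Complex.I)) *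
        wave k x := by
    rw [← h2, resolv, ← integral_const_mul, ← integral_sub
      (integrable_fourier_mul_wave (contDiff_cutoff_mul hv) (hasCompactSupport_cutoff_mul v) x)
      ((integrable_resolvCoef_mul_wave hτ hv x).const_mul _)]
    congr 1; ext k
    have := sym_add_ne_zero (a := a) hτ k
    field_simp
    ring
  rw [e]
  exact h1

theorem resolv_sub (hτ : τ ≠ 0) {v w : E → ℂ} (hv : ContDiff ℝ ∞ v) (hw : ContDiff ℝ ∞ w) (x : E) :
    resolv a τ (fun y => v y - w y) x = resolv a τ v x - resolv a τ w x := by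
  have hF : ∀ k, 𝓕 (fun y => (cutoff E y : ℂ) * (v y - w y)) k =
      𝓕 (fun y => (cutoff E y : ℂ) * v y) k - 𝓕 (fun y => (cutoff E y : ℂ) * w y) k := by
    intro k
    have hi : ∀ {u : E → ℂ}, ContDiff ℝ ∞ u →
        Integrable fun y => Real.fourierChar (-inner ℝ y k) • ((cutoff E y : ℂ) * u y) := by
      intro u hu
      exact (Real.fourierIntegral_convergent_iff k).2
        ((contDiff_cutoff_mul hu).continuous.integrable_of_hasCompactSupport
          (hasCompactSupport_cutoff_mul u))
    rw [Real.fourier_eq, Real.fourier_eq, Real.fourier_eq, ← integral_sub (hi hv) (hi hw)]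
    congr 1; ext y
    rw [mul_sub, smul_sub]
  rw [resolv, resolv, resolv, ← integral_sub (integrable_resolvCoef_mul_wave hτ hv x)
    (integrable_resolvCoef_mul_wave hτ hw x)]
  congr 1; ext k
  rw [hF]; ring

/-- Continuity of the resolvent in spaces of differentiable functions, with loss of derivatives. -/
theorem exists_norm_iteratedFDeriv_resolv_le (a : ℝ) (hτ : τ ≠ 0) (K : ℕ) :
    ∃ (C : ℝ) (M : ℕ), 0 < C ∧ ∀ (v : E → ℂ) (δ : ℝ), ContDiff ℝ ∞ v →
      (∀ i ≤ M, ∀ x ∈ closedBall (0 : E) 2, ‖iteratedFDeriv ℝ i v x‖ ≤ δ) →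
      ∀ i ≤ K, ∀ x, ‖iteratedFDeriv ℝ i (resolv a τ v) x‖ ≤ C * δ := by
  choose C N hC0 hC using fun i => exists_integral_norm_pow_mul_norm_fourier_le (E := E) 2 i
  set M := ∑ i ∈ Finset.range (K + 1), N i with hM
  have hNM : ∀ i ≤ K, N i ≤ M := fun i hi =>
    Finset.single_le_sum (f := N) (fun j _ => Nat.zero_le _)
      (Finset.mem_range.2 (Nat.lt_succ_of_le hi))
  obtain ⟨B, hB0, hB⟩ := exists_norm_iteratedFDeriv_mul_le (E := E) contDiff_cutoff
    hasCompactSupport_cutoff M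
  set D : ℕ → ℝ := fun i => (2 * Real.pi) ^ i * (|τ|⁻¹ * (C i * B)) with hD
  have hD0 : ∀ i, 0 ≤ D i := fun i => by
    have := hC0 i
    have := Real.pi_pos
    positivity
  refine ⟨∑ i ∈ Finset.range (K + 1), D i + 1, M,
    add_pos_of_nonneg_of_pos (Finset.sum_nonneg fun i _ => hD0 i) one_pos,
    fun v δ hv hδ i hi x => ?_⟩
  have hδ0 : 0 ≤ δ := (norm_nonneg _).trans (hδ 0 (Nat.zero_le _) 0 (by simp))
  have hDi : D i ≤ ∑ i ∈ Finset.range (K + 1), D i + 1 :=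
    (Finset.single_le_sum (f := D) (fun j _ => hD0 j)
      (Finset.mem_range.2 (Nat.lt_succ_of_le hi))).trans (by linarith)
  have hpr := hB v δ hv (fun i hi x hx => hδ i hi x (tsupport_cutoff hx)) hδ0
  obtain ⟨hI, hIle⟩ := hC i (fun y => (cutoff E y : ℂ) * v y) (B * δ)
    ((contDiff_cutoff_mul hv).of_le (by exact_mod_cast le_top))
    (tsupport_mul_subset_left.trans tsupport_cutoff) fun p hp x => hpr p (hp.trans (hNM i hi)) x
  refine (norm_iteratedFDeriv_integral_wave_le (aestronglyMeasurable_resolvCoef hv.continuous)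
    (integrable_resolvCoef hτ hv) i x).trans ?_
  have h3 : ∫ k : E, ‖k‖ ^ i *
      ‖𝓕 (fun y => (cutoff E y : ℂ) * v y) k / (sym a k + τ * Complex.I)‖
      ≤ |τ|⁻¹ * (C i * (B * δ)) := by
    calc _ ≤ ∫ k : E, |τ|⁻¹ * (‖k‖ ^ i * ‖𝓕 (fun y => (cutoff E y : ℂ) * v y) k‖) := by
          refine integral_mono (integrable_resolvCoef hτ hv i) (hI.const_mul _) fun k => ?_
          calc _ ≤ ‖k‖ ^ i * (|τ|⁻¹ * ‖𝓕 (fun y => (cutoff E y : ℂ) * v y) k‖) := by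
                gcongr; exact norm_div_sym_add_le hτ _ k
            _ = _ := by ring
      _ = |τ|⁻¹ * ∫ k : E, ‖k‖ ^ i * ‖𝓕 (fun y => (cutoff E y : ℂ) * v y) k‖ :=
          integral_const_mul _ _
      _ ≤ _ := by gcongr
  have := Real.pi_pos
  calc _ ≤ (2 * Real.pi) ^ i * (|τ|⁻¹ * (C i * (B * δ))) := by gcongr
    _ = D i * δ := by rw [hD]; ring
    _ ≤ _ := by gcongr

end Resolvent

section FarPotentials

variable {E : Type*} [NormedAddCommGroup E] [InnerProductSpace ℝ E]

theorem regKer_mul_regKer (b c : ℝ) (z : E) : regKer b z * regKer c z = regKer (b + c) z := by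
  rw [regKer, regKer, regKer, ← Complex.ofReal_mul, ← Real.rpow_add (regId_pos _)]
  congr 2; ring

theorem hasFDerivAt_regKer_sub (b : ℝ) {x y : E} (h : 1 < ‖x - y‖) :
    HasFDerivAt (fun y => regKer b (x - y))
      ((b * regKer (b + 2) (x - y)) • (Complex.ofRealCLM.comp (innerSL ℝ (x - y)))) y := by
  have hev : (fun y => (((‖x - y‖ ^ 2) ^ (-b / 2) : ℝ) : ℂ)) =ᶠ[𝓝 y] fun y => regKer b (x - y) := by
    have : ∀ᶠ y' in 𝓝 y, 1 < ‖x - y'‖ :=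
      (by fun_prop : Continuous fun y' => ‖x - y'‖).continuousAt.eventually (lt_mem_nhds h)
    filter_upwards [this] with y' hy'
    rw [regKer, regId_of_one_le (by nlinarith)]
  refine HasFDerivAt.congr_of_eventuallyEq ?_ hev.symm
  have h0 : 0 < ‖x - y‖ := by linarith
  have h1 : HasFDerivAt (fun y => ‖x - y‖ ^ 2) (-(2 • innerSL ℝ (x - y))) y := by
    have := ((hasFDerivAt_const x y).sub (hasFDerivAt_id y)).norm_sq
    refine this.congr_fderiv ?_
    ext v; simp; ring
  have h2 := h1.rpow_const (p := -b / 2) (Or.inl (by positivity))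
  have h3 := Complex.ofRealCLM.hasFDerivAt.comp y h2
  refine h3.congr_fderiv ?_
  ext v
  rw [regKer, regId_of_one_le (by nlinarith)]
  have : (-(b + 2) / 2 : ℝ) = -b / 2 - 1 := by ring
  rw [this]
  simp
  ring

theorem fderiv_fderiv_regKer_sub (b : ℝ) {x y : E} (h : 1 < ‖x - y‖) (v : E) :
    fderiv ℝ (fun y => fderiv ℝ (fun y => regKer b (x - y)) y v) y v =
      b * (b + 2) * (inner ℝ (x - y) v : ℝ) ^ 2 * regKer (b + 4) (x - y)
        - b * ‖v‖ ^ 2 * regKer (b + 2) (x - y) := by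
  have hev : (fun y => fderiv ℝ (fun y => regKer b (x - y)) y v) =ᶠ[𝓝 y]
      fun y => b * (regKer (b + 2) (x - y) * (inner ℝ (x - y) v : ℝ)) := by
    have : ∀ᶠ y' in 𝓝 y, 1 < ‖x - y'‖ :=
      (by fun_prop : Continuous fun y' => ‖x - y'‖).continuousAt.eventually (lt_mem_nhds h)
    filter_upwards [this] with y' hy'
    rw [(hasFDerivAt_regKer_sub b hy').fderiv]
    simp [mul_assoc, inner_sub_left]
  rw [hev.fderiv_eq]
  have h1 : HasFDerivAt (fun y => ((inner ℝ (x - y) v : ℝ) : ℂ))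
      (-(Complex.ofRealCLM.comp (innerSL ℝ v))) y := by
    have h2 : HasFDerivAt (fun y => inner ℝ v (x - y)) (-(innerSL ℝ v)) y := by
      have := (innerSL ℝ v).hasFDerivAt.comp y ((hasFDerivAt_const x y).sub (hasFDerivAt_id y))
      refine this.congr_fderiv ?_
      ext w; simp
    have := Complex.ofRealCLM.hasFDerivAt.comp y h2
    refine (this.congr_fderiv ?_).congr_of_eventuallyEq (Eventually.of_forall fun y => ?_)
    · ext w; simp
    · simp [real_inner_comm]
  have h3 := ((hasFDerivAt_regKer_sub (b + 2) h).mul h1).const_mul (b : ℂ)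
  refine (congrArg (fun L => L v) h3.fderiv).trans ?_
  have : b + 2 + 2 = b + 4 := by ring
  rw [this]
  simp [inner_sub_left]
  ring

variable [FiniteDimensional ℝ E]

/-- The Laplacian, as a sum of second derivatives along an orthonormal basis. -/
noncomputable def lap (g : E → ℂ) (y : E) : ℂ :=
  ∑ j, fderiv ℝ (fun y => fderiv ℝ g y (stdOrthonormalBasis ℝ E j)) y (stdOrthonormalBasis ℝ E j)

theorem contDiff_fderiv_apply {g : E → ℂ} (hg : ContDiff ℝ ∞ g) (v : E) :
    ContDiff ℝ ∞ fun y => fderiv ℝ g y v :=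
  (hg.fderiv_right (m := ∞) (by simp)).clm_apply contDiff_const

theorem tsupport_fderiv_apply_subset' (g : E → ℂ) (v : E) :
    tsupport (fun y => fderiv ℝ g y v) ⊆ tsupport g :=
  tsupport_fderiv_apply_subset ℝ v

theorem contDiff_lap {g : E → ℂ} (hg : ContDiff ℝ ∞ g) : ContDiff ℝ ∞ (lap g) :=
  ContDiff.sum fun _ _ => contDiff_fderiv_apply (contDiff_fderiv_apply hg _) _

theorem tsupport_lap_subset (g : E → ℂ) : tsupport (lap g) ⊆ tsupport g := by
  refine closure_minimal (fun y hy => ?_) (isClosed_tsupport g)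
  obtain ⟨j, -, hj⟩ := Finset.exists_ne_zero_of_sum_ne_zero hy
  exact tsupport_fderiv_apply_subset' g _ (tsupport_fderiv_apply_subset' _ _ (subset_tsupport _ hj))

theorem lap_regKer_sub (b : ℝ) {x y : E} (h : 1 < ‖x - y‖) :
    lap (fun y => regKer b (x - y)) y =
      (b * (b + 2 - Module.finrank ℝ E) : ℝ) * regKer (b + 2) (x - y) := by
  have h2 : ((‖x - y‖ ^ 2 : ℝ) : ℂ) * regKer (b + 4) (x - y) = regKer (b + 2) (x - y) := by
    have : b + 4 = 2 + (b + 2) := by ring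
    rw [this, ← regKer_mul_regKer, ← mul_assoc]
    rw [regKer_of_one_le h.le (b := 2), ← Complex.ofReal_mul]
    have : ‖x - y‖ ^ 2 * ‖x - y‖ ^ (-2 : ℝ) = 1 := by
      rw [← Real.rpow_natCast, ← Real.rpow_add (by linarith)]; norm_num
    rw [this]; simp
  rw [lap]
  simp_rw [fderiv_fderiv_regKer_sub b h]
  rw [Finset.sum_sub_distrib, ← Finset.sum_mul, ← Finset.mul_sum]
  have h3 : ∑ j, ((inner ℝ (x - y) (stdOrthonormalBasis ℝ E j) : ℝ) : ℂ) ^ 2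
      = ((‖x - y‖ ^ 2 : ℝ) : ℂ) := by
    have := (stdOrthonormalBasis ℝ E).sum_sq_inner_left (x - y)
    rw [← this]
    push_cast
    rfl
  rw [h3, mul_assoc, h2]
  simp
  ring

variable [MeasurableSpace E] [BorelSpace E]

theorem integral_fderiv_mul_eq_neg {f g : E → ℂ} (hf : ContDiff ℝ ∞ f) (hfc : HasCompactSupport f)
    (hg : ContDiff ℝ ∞ g) (v : E) :
    ∫ y, fderiv ℝ f y v * g y = -∫ y, f y * fderiv ℝ g y v := by
  rw [integral_mul_fderiv_eq_neg_fderiv_mul_of_integrable, neg_neg]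
  · refine ((contDiff_fderiv_apply hf v).continuous.mul
      hg.continuous).integrable_of_hasCompactSupport (HasCompactSupport.mul_right ?_)
    exact hfc.of_isClosed_subset (isClosed_tsupport _) (tsupport_fderiv_apply_subset' f v)
  · exact (hf.continuous.mul
      (contDiff_fderiv_apply hg v).continuous).integrable_of_hasCompactSupport hfc.mul_right
  · exact (hf.continuous.mul hg.continuous).integrable_of_hasCompactSupport hfc.mul_right
  · exact fun x _ => (hf.differentiable (by simp)).differentiableAt
  · exact fun x _ => (hg.differentiable (by simp)).differentiableAt

theorem integral_lap_mul {f g : E → ℂ} (hf : ContDiff ℝ ∞ f) (hfc : HasCompactSupport f)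
    (hg : ContDiff ℝ ∞ g) : ∫ y, lap f y * g y = ∫ y, f y * lap g y := by
  have hfc' : ∀ v, HasCompactSupport (fun y => fderiv ℝ f y v) := fun v =>
    hfc.of_isClosed_subset (isClosed_tsupport _) (tsupport_fderiv_apply_subset' f v)
  have hfc2 : ∀ v, HasCompactSupport (fun y => fderiv ℝ (fun y => fderiv ℝ f y v) y v) := fun v =>
    (hfc' v).of_isClosed_subset (isClosed_tsupport _) (tsupport_fderiv_apply_subset' _ v)
  simp_rw [lap, Finset.sum_mul, Finset.mul_sum]
  rw [integral_finsetSum, integral_finsetSum]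
  · refine Finset.sum_congr rfl fun j _ => ?_
    rw [integral_fderiv_mul_eq_neg (contDiff_fderiv_apply hf _) (hfc' _) hg,
      integral_fderiv_mul_eq_neg hf hfc (contDiff_fderiv_apply hg _), neg_neg]
  · intro j _
    exact (hf.continuous.mul (contDiff_fderiv_apply (contDiff_fderiv_apply hg
      _) _).continuous).integrable_of_hasCompactSupport hfc.mul_right
  · intro j _
    exact ((contDiff_fderiv_apply (contDiff_fderiv_apply hf _) _).continuous.mul
      hg.continuous).integrable_of_hasCompactSupport (hfc2 _).mul_right

theorem pot_lap {b : ℝ} {Ψ : E → ℂ} (hΨ : ContDiff ℝ ∞ Ψ) (hc : HasCompactSupport Ψ)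
    (hfar : tsupport Ψ ⊆ (closedBall 0 4)ᶜ) {x : E} (hx : x ∈ ball (0 : E) 3) :
    pot b (lap Ψ) x = (b * (b + 2 - Module.finrank ℝ E) : ℝ) * pot (b + 2) Ψ x := by
  rw [pot, pot, ← integral_const_mul]
  simp_rw [smul_eq_mul]
  rw [integral_lap_mul (g := fun y => regKer b (x - y)) hΨ hc
    ((contDiff_regKer b).comp (contDiff_const.sub contDiff_id))]
  congr 1; ext y
  by_cases hy : y ∈ tsupport Ψ
  · have h4 : 4 < ‖y‖ := by simpa using hfar hy
    have h3 : ‖x‖ < 3 := by simpa using hx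
    have h1 : 1 < ‖x - y‖ := by
      have := norm_sub_norm_le y x
      rw [norm_sub_rev] at this; linarith
    rw [lap_regKer_sub b h1]; ring
  · rw [image_eq_zero_of_notMem_tsupport hy]; ring

theorem exists_pot_eq_pot_add {b : ℝ} (hb : Module.finrank ℝ E < b) (N : ℕ) {Ψ : E → ℂ}
    (hΨ : ContDiff ℝ ∞ Ψ) (hc : HasCompactSupport Ψ) (hfar : tsupport Ψ ⊆ (closedBall 0 4)ᶜ) :
    ∃ Ψ' : E → ℂ, ContDiff ℝ ∞ Ψ' ∧ HasCompactSupport Ψ' ∧ tsupport Ψ' ⊆ (closedBall 0 4)ᶜ ∧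
      ∀ x ∈ ball (0 : E) 3, pot b Ψ' x = pot (b + 2 * N) Ψ x := by
  induction N generalizing Ψ with
  | zero => exact ⟨Ψ, hΨ, hc, hfar, fun x _ => by simp⟩
  | succ N ih =>
    set b' := b + 2 * N with hb'
    have hn : (0 : ℝ) ≤ Module.finrank ℝ E := Nat.cast_nonneg _
    have hN : (0 : ℝ) ≤ 2 * N := by positivity
    set c : ℂ := ((b' * (b' + 2 - Module.finrank ℝ E) : ℝ) : ℂ) with hcdef
    have hc0 : c ≠ 0 := by
      rw [hcdef, Complex.ofReal_ne_zero]
      exact mul_ne_zero (by linarith) (by linarith)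
    have hsub : tsupport (fun y => c⁻¹ * lap Ψ y) ⊆ tsupport Ψ :=
      tsupport_mul_subset_right.trans (tsupport_lap_subset Ψ)
    obtain ⟨Ψ', h1, h2, h3, h4⟩ := ih (Ψ := fun y => c⁻¹ * lap Ψ y)
      (contDiff_const.mul (contDiff_lap hΨ)) (hc.of_isClosed_subset (isClosed_tsupport _) hsub)
      (hsub.trans hfar)
    refine ⟨Ψ', h1, h2, h3, fun x hx => ?_⟩
    rw [h4 x hx, pot_const_mul, pot_lap hΨ hc hfar hx, ← mul_assoc, inv_mul_cancel₀ hc0, one_mul]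
    congr 1
    push_cast
    ring

theorem dist_iteratedFDeriv_regKer_le {b : ℝ} (hb : 0 ≤ b) (i : ℕ) :
    ∃ C : ℝ, 0 ≤ C ∧ ∀ z w : E,
      ‖iteratedFDeriv ℝ i (regKer b) z - iteratedFDeriv ℝ i (regKer b) w‖ ≤ C * ‖z - w‖ := by
  obtain ⟨C, hC0, hC⟩ := exists_norm_iteratedFDeriv_regKer_le (E := E) hb (i + 1)
  refine ⟨C, hC0, fun z w => ?_⟩
  refine convex_univ.norm_image_sub_le_of_norm_fderiv_le (𝕜 := ℝ) (fun x _ => ?_) (fun x _ => ?_)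
    (mem_univ w) (mem_univ z)
  · exact ((contDiff_regKer b (N := ⊤)).differentiable_iteratedFDeriv
      (by exact_mod_cast ENat.natCast_lt_top i)).differentiableAt
  · rw [norm_fderiv_iteratedFDeriv]
    refine (hC x).trans (mul_le_of_le_one_right hC0 ?_)
    exact Real.rpow_le_one_of_one_le_of_nonpos (by linarith [norm_nonneg x]) (by linarith)

/-- Kernels centered away from the origin are limits of potentials of far away densities. -/
theorem exists_pot_near_regKer {b : ℝ} (hb : Module.finrank ℝ E < b) (M : ℕ) {y : E}
    (hy : 6 ≤ ‖y‖) {δ : ℝ} (hδ : 0 < δ) :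
    ∃ Ψ : E → ℂ, ContDiff ℝ ∞ Ψ ∧ HasCompactSupport Ψ ∧ tsupport Ψ ⊆ (closedBall 0 4)ᶜ ∧
      ∀ i ≤ M, ∀ x, ‖iteratedFDeriv ℝ i (fun x => regKer b (x - y)) x
        - iteratedFDeriv ℝ i (pot b Ψ) x‖ ≤ δ := by
  have hb0 : 0 ≤ b := (Nat.cast_nonneg _).trans hb.le
  choose C hC0 hC using fun i => dist_iteratedFDeriv_regKer_le (E := E) hb0 i
  set A : ℝ := ∑ i ∈ Finset.range (M + 1), C i with hA
  have hCA : ∀ i ≤ M, C i ≤ A := fun i hi =>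
    Finset.single_le_sum (f := C) (fun j _ => hC0 j) (Finset.mem_range.2 (Nat.lt_succ_of_le hi))
  have hA0 : 0 ≤ A := (hC0 0).trans (hCA 0 (Nat.zero_le _))
  set r : ℝ := min 1 (δ / (A + 1)) with hr
  have hr0 : 0 < r := lt_min one_pos (by positivity)
  have hAr : A * r ≤ δ := by
    calc A * r ≤ (A + 1) * (δ / (A + 1)) := by
          gcongr
          · linarith
          · exact min_le_right _ _
      _ = δ := by field_simp
  let φ : ContDiffBump y := ⟨r / 2, r, by positivity, by linarith⟩
  set ψ : E → ℝ := φ.normed volume with hψ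
  set Ψ : E → ℂ := fun z => (ψ z : ℂ) with hΨ
  have hsupp : tsupport Ψ ⊆ closedBall y r := by
    refine (closure_mono (fun x hx => ?_) : tsupport Ψ ⊆ tsupport ψ).trans ?_
    · simpa [hΨ] using hx
    · exact (φ.tsupport_normed_eq (μ := volume)).subset
  have hcd : ContDiff ℝ ∞ Ψ := Complex.ofRealCLM.contDiff.comp φ.contDiff_normed
  have hcs : HasCompactSupport Ψ :=
    (isCompact_closedBall y r).of_isClosed_subset (isClosed_tsupport _) hsupp
  obtain ⟨c, hc⟩ := hcs.exists_bound_of_continuous hcd.continuous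
  refine ⟨Ψ, hcd, hcs, fun z hz => ?_, fun i hi x => ?_⟩
  · have h1 : ‖z - y‖ ≤ r := by simpa [dist_eq_norm] using hsupp hz
    have h2 : r ≤ 1 := min_le_left _ _
    have h3 := norm_sub_norm_le y z
    rw [norm_sub_rev] at h3
    simp only [mem_compl_iff, mem_closedBall, dist_zero_right, not_le]
    linarith
  · have hInt1 : ∫ z, Ψ z = 1 := by
      rw [hΨ, integral_complex_ofReal, hψ, φ.integral_normed]; simp
    have hΨi : Integrable Ψ := hcd.continuous.integrable_of_hasCompactSupport hcs
    rw [iteratedFDeriv_comp_sub, iteratedFDeriv_pot hb hcd.continuous hc,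
      show iteratedFDeriv ℝ i (regKer b) (x - y) = ∫ z, Ψ z • iteratedFDeriv ℝ i (regKer b) (x - y)
        by rw [integral_smul_const, hInt1, one_smul],
      ← integral_sub (hΨi.smul_const _) (integrable_smul_regKer_sub hb hcd.continuous hc i x)]
    have hnorm : ∀ z, ‖Ψ z‖ = ψ z := fun z => by
      rw [hΨ]; simp [abs_of_nonneg (φ.nonneg_normed z), hψ]
    calc _ ≤ ∫ z, ψ z * δ := by
          refine norm_integral_le_of_norm_le (φ.integrable_normed.mul_const δ)
            (Eventually.of_forall fun z => ?_)
          rw [← smul_sub, norm_smul, hnorm]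
          by_cases hz : z ∈ tsupport Ψ
          · refine mul_le_mul_of_nonneg_left ?_ (φ.nonneg_normed z)
            have h1 : ‖z - y‖ ≤ r := by simpa [dist_eq_norm] using hsupp hz
            refine (hC i _ _).trans (le_trans ?_ hAr)
            have : x - y - (x - z) = z - y := by abel
            rw [this]
            exact mul_le_mul (hCA i hi) h1 (norm_nonneg _) hA0
          · rw [← hnorm, image_eq_zero_of_notMem_tsupport hz]; simp
      _ = δ := by rw [integral_mul_const, hψ, φ.integral_normed, one_mul]

end FarPotentials

section Density

variable {E : Type*} [NormedAddCommGroup E] [InnerProductSpace ℝ E]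

theorem norm_iteratedFDeriv_mul_le_of_le {g h : E → ℂ} (hg : ContDiff ℝ ∞ g) (hh : ContDiff ℝ ∞ h)
    {M : ℕ} {A B : ℝ} (hA0 : 0 ≤ A) {x : E} (hA : ∀ i ≤ M, ‖iteratedFDeriv ℝ i g x‖ ≤ A)
    (hB : ∀ i ≤ M, ‖iteratedFDeriv ℝ i h x‖ ≤ B) {i : ℕ} (hi : i ≤ M) :
    ‖iteratedFDeriv ℝ i (fun x => g x * h x) x‖ ≤ 2 ^ M * A * B := by
  have hB0 : 0 ≤ B := (norm_nonneg _).trans (hB 0 (Nat.zero_le _))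
  refine (norm_iteratedFDeriv_mul_le hg hh x (by exact_mod_cast le_top)).trans ?_
  calc _ ≤ ∑ j ∈ Finset.range (i + 1), (i.choose j : ℝ) * A * B := by
        refine Finset.sum_le_sum fun j hj => ?_
        have hj' : j ≤ i := Nat.lt_succ_iff.1 (Finset.mem_range.1 hj)
        gcongr
        · exact hA j (hj'.trans hi)
        · exact hB _ ((Nat.sub_le _ _).trans hi)
    _ = 2 ^ i * A * B := by
        rw [← Finset.sum_mul, ← Finset.sum_mul]
        congr 2
        exact_mod_cast Nat.sum_range_choose i
    _ ≤ _ := by gcongr; norm_num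

theorem norm_iteratedFDeriv_const_le {c : ℂ} (i : ℕ) (x : E) :
    ‖iteratedFDeriv ℝ i (fun _ : E => c) x‖ ≤ ‖c‖ := by
  rcases Nat.eq_zero_or_pos i with rfl | h
  · simp
  · rw [iteratedFDeriv_const_of_ne h.ne']; simp

theorem norm_iteratedFDeriv_pow_le {g : E → ℂ} (hg : ContDiff ℝ ∞ g) {M : ℕ} {A : ℝ} (hA0 : 0 ≤ A)
    {x : E} (hA : ∀ i ≤ M, ‖iteratedFDeriv ℝ i g x‖ ≤ A) (N : ℕ) {i : ℕ} (hi : i ≤ M) :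
    ‖iteratedFDeriv ℝ i (fun x => g x ^ N) x‖ ≤ (2 ^ M * A) ^ N := by
  induction N generalizing i with
  | zero =>
    simp only [pow_zero]
    exact (norm_iteratedFDeriv_const_le i x).trans (by simp)
  | succ N ih =>
    simp_rw [pow_succ' (g _)]
    rw [pow_succ']
    exact norm_iteratedFDeriv_mul_le_of_le hg (hg.pow N) hA0 hA (fun i hi => ih hi) hi

variable [FiniteDimensional ℝ E]

theorem exists_forall_norm_iteratedFDeriv_regKer_le {b : ℝ} (hb : 0 ≤ b) (M : ℕ) :
    ∃ A : ℝ, 0 ≤ A ∧ ∀ i ≤ M, ∀ z : E, ‖iteratedFDeriv ℝ i (regKer b) z‖ ≤ A := by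
  choose C hC0 hC using fun i => exists_norm_iteratedFDeriv_regKer_le (E := E) hb i
  refine ⟨∑ i ∈ Finset.range (M + 1), C i, Finset.sum_nonneg fun i _ => hC0 i, fun i hi z => ?_⟩
  refine ((hC i z).trans (mul_le_of_le_one_right (hC0 i) ?_)).trans
    (Finset.single_le_sum (f := C) (fun j _ => hC0 j) (Finset.mem_range.2 (Nat.lt_succ_of_le hi)))
  exact Real.rpow_le_one_of_one_le_of_nonpos (by linarith [norm_nonneg z]) (by linarith)

variable [MeasurableSpace E] [BorelSpace E]

/-- On the closed ball of radius `2`, the function `h` is a limit in `C^M` of potentials of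
continuous densities supported away from the ball of radius `4`. -/
def FarApprox (a : ℝ) (M : ℕ) (h : E → ℂ) : Prop :=
  ∀ δ > 0, ∃ Ψ : E → ℂ, Continuous Ψ ∧ HasCompactSupport Ψ ∧ (∀ y ∈ closedBall (0 : E) 4, Ψ y = 0) ∧
    ∀ i ≤ M, ∀ x ∈ closedBall (0 : E) 2,
      ‖iteratedFDeriv ℝ i h x - iteratedFDeriv ℝ i (pot a Ψ) x‖ ≤ δ

variable {a : ℝ} {M : ℕ}

theorem FarApprox.of_approx {h : E → ℂ}
    (H : ∀ δ > 0, ∃ h' : E → ℂ, FarApprox a M h' ∧ ∀ i ≤ M, ∀ x ∈ closedBall (0 : E) 2,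
      ‖iteratedFDeriv ℝ i h x - iteratedFDeriv ℝ i h' x‖ ≤ δ) : FarApprox a M h := by
  intro δ hδ
  obtain ⟨h', h1, h2⟩ := H (δ / 2) (by positivity)
  obtain ⟨Ψ, h3, h4, h5, h6⟩ := h1 (δ / 2) (by positivity)
  refine ⟨Ψ, h3, h4, h5, fun i hi x hx => ?_⟩
  have := norm_sub_le_norm_sub_add_norm_sub (iteratedFDeriv ℝ i h x) (iteratedFDeriv ℝ i h' x)
    (iteratedFDeriv ℝ i (pot a Ψ) x)
  linarith [h2 i hi x hx, h6 i hi x hx]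

theorem FarApprox.congr {h h' : E → ℂ} (H : FarApprox a M h')
    (heq : ∀ x ∈ ball (0 : E) 3, h x = h' x) : FarApprox a M h := by
  refine .of_approx fun δ hδ => ⟨h', H, fun i _ x hx => ?_⟩
  have : h =ᶠ[𝓝 x] h' := by
    filter_upwards [isOpen_ball.mem_nhds (closedBall_subset_ball (by norm_num : (2 : ℝ) < 3) hx)]
      with y hy
    exact heq y hy
  rw [(this.iteratedFDeriv ℝ i).eq_of_nhds, sub_self, norm_zero]
  exact hδ.le

theorem FarApprox.const_mul (ha : Module.finrank ℝ E < a) {h : E → ℂ} (hh : ContDiff ℝ M h)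
    (H : FarApprox a M h) (z : ℂ) : FarApprox a M (fun x => z * h x) := by
  intro δ hδ
  obtain ⟨Ψ, h1, h2, h3, h4⟩ := H (δ / (‖z‖ + 1)) (by positivity)
  obtain ⟨c, hc⟩ := h2.exists_bound_of_continuous h1
  refine ⟨fun y => z * Ψ y, continuous_const.mul h1, h2.mul_left, fun y hy => by
    simp only [h3 y hy, mul_zero], fun i hi x hx => ?_⟩
  have e : pot a (fun y => z * Ψ y) = fun x => z • pot a Ψ x := by
    ext x; rw [pot_const_mul, smul_eq_mul]
  have hi' : (i : WithTop ℕ∞) ≤ M := by exact_mod_cast hi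
  rw [e]
  simp_rw [← smul_eq_mul]
  rw [iteratedFDeriv_const_smul_apply' (hh.of_le hi').contDiffAt, iteratedFDeriv_const_smul_apply'
    (contDiff_pot (N := i) ha h1 hc).contDiffAt, ← smul_sub, norm_smul]
  calc _ ≤ ‖z‖ * (δ / (‖z‖ + 1)) := by gcongr; exact h4 i hi x hx
    _ ≤ (‖z‖ + 1) * (δ / (‖z‖ + 1)) := by gcongr; linarith
    _ = δ := by field_simp

theorem FarApprox.add (ha : Module.finrank ℝ E < a) {h h' : E → ℂ} (hh : ContDiff ℝ M h)
    (hh' : ContDiff ℝ M h') (H : FarApprox a M h) (H' : FarApprox a M h') :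
    FarApprox a M (fun x => h x + h' x) := by
  intro δ hδ
  obtain ⟨Ψ, h1, h2, h3, h4⟩ := H (δ / 2) (by positivity)
  obtain ⟨Ψ', h1', h2', h3', h4'⟩ := H' (δ / 2) (by positivity)
  obtain ⟨c, hc⟩ := h2.exists_bound_of_continuous h1
  obtain ⟨c', hc'⟩ := h2'.exists_bound_of_continuous h1'
  refine ⟨fun y => Ψ y + Ψ' y, h1.add h1', h2.add h2', fun y hy => by
    simp only [h3 y hy, h3' y hy, add_zero], fun i hi x hx => ?_⟩
  have e : pot a (fun y => Ψ y + Ψ' y) = fun x => pot a Ψ x + pot a Ψ' x := by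
    ext x; exact pot_add ha h1 hc h1' hc' x
  have hi' : (i : WithTop ℕ∞) ≤ M := by exact_mod_cast hi
  rw [e, fun_iteratedFDeriv_add_apply (hh.of_le hi').contDiffAt (hh'.of_le hi').contDiffAt,
    fun_iteratedFDeriv_add_apply (contDiff_pot (N := i) ha h1 hc).contDiffAt
      (contDiff_pot (N := i) ha h1' hc').contDiffAt, add_sub_add_comm]
  exact (norm_add_le _ _).trans (by linarith [h4 i hi x hx, h4' i hi x hx])

theorem FarApprox.zero : FarApprox a M (fun _ : E => (0 : ℂ)) := by
  intro δ hδ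
  have hp : pot a (fun _ : E => (0 : ℂ)) = fun _ => 0 := by
    ext x; simp [pot]
  exact ⟨fun _ => 0, continuous_const, HasCompactSupport.zero, fun _ _ => rfl, fun i _ x _ => by
    rw [hp, sub_self, norm_zero]; exact hδ.le⟩

theorem FarApprox.sum (ha : Module.finrank ℝ E < a) {h : ℕ → E → ℂ} (hh : ∀ N, ContDiff ℝ M (h N))
    (H : ∀ N, FarApprox a M (h N)) (m : ℕ) :
    FarApprox a M (fun x => ∑ N ∈ Finset.range m, h N x) := by
  induction m with
  | zero => simpa using FarApprox.zero
  | succ m ih =>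
    simp_rw [Finset.sum_range_succ]
    exact .add ha (ContDiff.sum fun N _ => hh N) (hh m) ih (H m)

theorem farApprox_regKer (ha : Module.finrank ℝ E < a) (N : ℕ) {y : E} (hy : 6 ≤ ‖y‖) :
    FarApprox a M (fun x => regKer (a + 2 * N) (x - y)) := by
  intro δ hδ
  have hN : (0 : ℝ) ≤ 2 * N := by positivity
  obtain ⟨Ψ, h1, h2, h3, h4⟩ := exists_pot_near_regKer (b := a + 2 * N) (by linarith) M hy hδ
  obtain ⟨Ψ', h5, h6, h7, h8⟩ := exists_pot_eq_pot_add ha N h1 h2 h3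
  refine ⟨Ψ', h5.continuous, h6, fun z hz => image_eq_zero_of_notMem_tsupport fun h => h7 h hz,
    fun i hi x hx => ?_⟩
  have : pot a Ψ' =ᶠ[𝓝 x] pot (a + 2 * N) Ψ := by
    filter_upwards [isOpen_ball.mem_nhds (closedBall_subset_ball (by norm_num : (2 : ℝ) < 3) hx)]
      with y hy
    exact h8 y hy
  rw [(this.iteratedFDeriv ℝ i).eq_of_nhds]
  exact h4 i hi x

theorem farApprox_regKer_mul_exp (ha : Module.finrank ℝ E < a) {y : E} (hy : 6 ≤ ‖y‖) (z : ℂ) :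
    FarApprox a M (fun x => regKer a (x - y) * Complex.exp (z * regKer 2 (x - y))) := by
  have ha0 : 0 ≤ a := (Nat.cast_nonneg _).trans ha.le
  obtain ⟨B, hB0, hB⟩ := exists_forall_norm_iteratedFDeriv_regKer_le (E := E) ha0 M
  obtain ⟨A, hA0, hA⟩ := exists_forall_norm_iteratedFDeriv_regKer_le (E := E) (b := 2)
    (by norm_num) M
  have hcd : ∀ b : ℝ, ContDiff ℝ ∞ fun x : E => regKer b (x - y) := fun b =>
    (contDiff_regKer b).comp (contDiff_id.sub contDiff_const)
  set F : ℕ → E → ℂ := fun N x => (z ^ N / N.factorial) * (regKer a (x - y) * regKer 2 (x - y) ^ N)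
    with hF
  have hFcd : ∀ N, ContDiff ℝ ∞ (F N) := fun N =>
    contDiff_const.mul ((hcd a).mul ((hcd 2).pow N))
  set u : ℕ → ℝ := fun N => 2 ^ M * B * ((‖z‖ * (2 ^ M * A)) ^ N / N.factorial) with hu
  have hus : Summable u := (Real.summable_pow_div_factorial _).mul_left _
  have hFb : ∀ i ≤ M, ∀ N x, ‖iteratedFDeriv ℝ i (F N) x‖ ≤ u N := by
    intro i hi N x
    rw [hF]
    simp_rw [← smul_eq_mul (z ^ N / N.factorial)]
    rw [iteratedFDeriv_const_smul_apply' (((hcd a).mul ((hcd 2).pow N)).of_le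
      (by exact_mod_cast le_top)).contDiffAt, norm_smul]
    have h1 := norm_iteratedFDeriv_mul_le_of_le (hcd a) ((hcd 2).pow N) hB0 (M := M) (x := x)
      (fun i hi => by rw [iteratedFDeriv_comp_sub]; exact hB i hi _)
      (fun i hi => norm_iteratedFDeriv_pow_le (hcd 2) hA0
        (fun i hi => by rw [iteratedFDeriv_comp_sub]; exact hA i hi _) N hi) hi
    calc _ ≤ ‖z ^ N / N.factorial‖ * (2 ^ M * B * (2 ^ M * A) ^ N) := by gcongr
      _ = u N := by
        rw [hu]; simp only [norm_div, norm_pow, Complex.norm_natCast, mul_pow]; ring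
  have hsum : (fun x => regKer a (x - y) * Complex.exp (z * regKer 2 (x - y)))
      = fun x => ∑' N, F N x := by
    ext x
    rw [Complex.exp_eq_exp_ℂ, NormedSpace.exp_eq_tsum_div, ← tsum_mul_left]
    refine tsum_congr fun N => ?_
    rw [hF]; simp only [mul_pow]; ring
  refine .of_approx fun δ hδ => ?_
  have hder : ∀ i ≤ M, iteratedFDeriv ℝ i (fun x => ∑' N, F N x)
      = fun x => ∑' N, iteratedFDeriv ℝ i (F N) x := by
    intro i hi
    exact iteratedFDeriv_tsum (N := M) (v := fun _ => u)
      (fun N => (hFcd N).of_le (by exact_mod_cast le_top)) (fun _ _ => hus)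
      (fun k N x hk => hFb k (by exact_mod_cast hk) N x) (by exact_mod_cast hi)
  have htail : ∃ m, ∑' N, u (N + m) ≤ δ :=
    ((tendsto_sum_nat_add u).eventually (ge_mem_nhds hδ)).exists
  obtain ⟨m, hm⟩ := htail
  refine ⟨fun x => ∑ N ∈ Finset.range m, F N x, .sum ha
    (fun N => (hFcd N).of_le (by exact_mod_cast le_top)) (fun N => ?_) m, fun i hi x _ => ?_⟩
  · have : F N = fun x => (z ^ N / N.factorial) * regKer (a + 2 * N) (x - y) := by
      ext x
      have hp : ∀ w : E, regKer 2 w ^ N = regKer (2 * N) w := by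
        intro w
        induction N with
        | zero => simp [regKer]
        | succ N ih => rw [pow_succ, ih, regKer_mul_regKer]; push_cast; congr 1; ring
      rw [hF]; simp only; rw [hp, regKer_mul_regKer]
    rw [this]
    exact .const_mul ha ((hcd _).of_le (by exact_mod_cast le_top)) (farApprox_regKer ha N hy) _
  · have hsm : Summable fun N => iteratedFDeriv ℝ i (F N) x :=
      Summable.of_norm_bounded hus fun N => hFb i hi N x
    rw [hsum, congrFun (hder i hi) x, iteratedFDeriv_fun_sum_apply
      (fun N _ => ((hFcd N).of_le (by exact_mod_cast le_top)).contDiffAt),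
      ← hsm.sum_add_tsum_nat_add m, add_sub_cancel_left]
    exact (tsum_of_norm_bounded ((summable_nat_add_iff m).2 hus).hasSum
      fun N => hFb i hi _ x).trans hm

theorem norm_sub_inv_smul_sq {ε : ℝ} (hε : ε ≠ 0) {e : E} (he : ‖e‖ = 1) (x : E) :
    ε ^ 2 * ‖x - ε⁻¹ • e‖ ^ 2 = 1 - 2 * ε * inner ℝ x e + ε ^ 2 * ‖x‖ ^ 2 := by
  rw [norm_sub_sq_real, inner_smul_right, norm_smul, he, mul_one, norm_inv, Real.norm_eq_abs,
    inv_pow, sq_abs]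
  field_simp
  ring

theorem farApprox_exp_inner (ha : Module.finrank ℝ E < a) {e : E} (he : ‖e‖ = 1) (σ : ℝ) :
    FarApprox a M (fun x : E => Complex.exp ((σ * (2 * inner ℝ x e) : ℝ) * Complex.I)) := by
  set D : ℝ × E → ℝ := fun p => 1 - 2 * p.1 * inner ℝ p.2 e + p.1 ^ 2 * ‖p.2‖ ^ 2 with hD
  have hDcd : ContDiff ℝ ∞ D := by
    refine (contDiff_const.sub ((contDiff_const.mul contDiff_fst).mul
      (contDiff_snd.inner ℝ contDiff_const))).add
        ((contDiff_fst.pow 2).mul (contDiff_snd.norm_sq ℝ))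
  set G : ℝ × E → ℂ := fun p => ((D p ^ (-a / 2) : ℝ) : ℂ) *
    Complex.exp ((σ * ((2 * inner ℝ p.2 e - p.1 * ‖p.2‖ ^ 2) / D p) : ℝ) * Complex.I) with hG
  have hGcd : ∀ x : E, ContDiffAt ℝ M G (0, x) := by
    intro x
    have hD0 : D (0, x) ≠ 0 := by simp [hD]
    have hDc : ContDiffAt ℝ M D (0, x) := (hDcd.of_le (by exact_mod_cast le_top)).contDiffAt
    refine ContDiffAt.mul (Complex.ofRealCLM.contDiff.contDiffAt.comp _
      (hDc.rpow_const_of_ne hD0)) (ContDiffAt.cexp (ContDiffAt.mul ?_ contDiffAt_const))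
    refine Complex.ofRealCLM.contDiff.contDiffAt.comp _ (contDiffAt_const.mul (ContDiffAt.div ?_ hDc
      hD0))
    have : ContDiff ℝ M fun p : ℝ × E => 2 * inner ℝ p.2 e - p.1 * ‖p.2‖ ^ 2 :=
      (contDiff_const.mul (contDiff_snd.inner ℝ contDiff_const)).sub
        (contDiff_fst.mul (contDiff_snd.norm_sq ℝ))
    exact this.contDiffAt
  have hG0 : ∀ x : E, G (0, x) = Complex.exp ((σ * (2 * inner ℝ x e) : ℝ) * Complex.I) := by
    intro x; simp [hG, hD]
  refine .of_approx fun δ hδ => ?_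
  have hev := eventually_norm_iteratedFDeriv_partial_sub_le (G := G) (a := 0)
    (isCompact_closedBall (0 : E) 2) (M := M) (fun x _ => hGcd x) hδ
  have hcont : ∀ᶠ ε in 𝓝 (0 : ℝ), ∀ x ∈ closedBall (0 : E) 2, ContDiffAt ℝ M G (ε, x) := by
    have hpos : ∀ x ∈ closedBall (0 : E) 2, ∀ᶠ q : ℝ × E in 𝓝 (0, x), ContDiffAt ℝ M G q :=
      fun x _ => (hGcd x).eventually (by simp)
    exact (isCompact_closedBall (0 : E) 2).eventually_forall_of_forall_eventually hpos
  obtain ⟨ε, ⟨hε1, hε1'⟩, hε0, hε6⟩ := (((hev.and hcont).filter_mono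
    (nhdsWithin_le_nhds (s := Ioi 0))).and (Ioo_mem_nhdsGT (by norm_num : (0 : ℝ) < 1 / 6))).exists
  refine ⟨fun x => G (ε, x), ?_, fun i hi x hx => ?_⟩
  · set y : E := ε⁻¹ • e with hy
    have hyn : 6 ≤ ‖y‖ := by
      rw [hy, norm_smul, he, mul_one, norm_inv, Real.norm_of_nonneg hε0.le]
      rw [le_inv_comm₀ (by norm_num) hε0]
      linarith
    have hcd : ∀ b : ℝ, ContDiff ℝ M fun x : E => regKer b (x - y) := fun b =>
      (contDiff_regKer b).comp (contDiff_id.sub contDiff_const)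
    refine FarApprox.congr (.const_mul ha ((hcd a).mul (contDiff_const.mul (hcd 2)).cexp)
      (farApprox_regKer_mul_exp ha hyn (((σ / ε ^ 3 : ℝ) : ℂ) * Complex.I))
      (((ε ^ 2) ^ (-a / 2) : ℝ) * Complex.exp (-((σ / ε : ℝ) * Complex.I)))) fun x hx => ?_
    have hx3 : ‖x‖ < 3 := by simpa using hx
    have h1 : 1 ≤ ‖x - y‖ := by
      have := norm_sub_norm_le y x
      rw [norm_sub_rev] at this; linarith
    have hDe : D (ε, x) = ε ^ 2 * ‖x - y‖ ^ 2 := (norm_sub_inv_smul_sq hε0.ne' he x).symm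
    have hDpos : 0 < D (ε, x) := by rw [hDe]; positivity
    have hk2 : regKer 2 (x - y) = ((ε ^ 2 / D (ε, x) : ℝ) : ℂ) := by
      rw [regKer_of_one_le h1, hDe, Real.rpow_neg (norm_nonneg _)]
      congr 1
      have : 0 < ‖x - y‖ := by linarith
      norm_cast
      field_simp
    have hka : ((D (ε, x) ^ (-a / 2) : ℝ) : ℂ) = ((ε ^ 2) ^ (-a / 2) : ℝ) * regKer a (x - y) := by
      rw [hDe, Real.mul_rpow (by positivity) (by positivity), regKer,
        regId_of_one_le (by nlinarith), Complex.ofReal_mul]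
    have hexp : (σ * ((2 * inner ℝ x e - ε * ‖x‖ ^ 2) / D (ε, x)) : ℝ)
        = -(σ / ε) + σ / ε ^ 3 * (ε ^ 2 / D (ε, x)) := by
      have hDx : 2 * inner ℝ x e - ε * ‖x‖ ^ 2 = (1 - D (ε, x)) / ε := by
        rw [hD]; field_simp; ring
      rw [hDx]
      field_simp
      ring
    simp only [hG]
    rw [hka, hexp, hk2, mul_mul_mul_comm, ← Complex.exp_add]
    congr 2
    push_cast
    ring
  · have hi' : (i : WithTop ℕ∞) ≤ M := by exact_mod_cast hi
    have hp : ∀ ε', ContDiffAt ℝ M G (ε', x) → ContDiffAt ℝ i (fun x => G (ε', x)) x := by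
      intro ε' h
      have := h.comp x (contDiffAt_const.prodMk contDiffAt_id : ContDiffAt ℝ M (fun x => (ε', x)) x)
      exact this.of_le hi'
    have := hε1 i hi x hx
    rw [fun_iteratedFDeriv_sub_apply (hp ε (hε1' x hx)) (hp 0 (hGcd x)), norm_sub_rev] at this
    simpa only [hG0] using this

theorem farApprox_wave [Nontrivial E] (ha : Module.finrank ℝ E < a) (κ : E) :
    FarApprox a M (wave κ) := by
  by_cases hκ : κ = 0
  · obtain ⟨e, he⟩ := exists_norm_eq E zero_le_one
    convert farApprox_exp_inner (M := M) ha he 0 using 1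
    ext x; simp [wave, hκ]
  · have hn : ‖κ‖ ≠ 0 := norm_ne_zero_iff.2 hκ
    have he : ‖‖κ‖⁻¹ • κ‖ = 1 := norm_smul_inv_norm hκ
    convert farApprox_exp_inner (M := M) ha he (Real.pi * ‖κ‖) using 1
    ext x
    rw [wave, inner_smul_right, real_inner_comm]
    congr 3
    field_simp

end Density

section Elliptic

variable {E : Type*} [NormedAddCommGroup E] [InnerProductSpace ℝ E] [FiniteDimensional ℝ E]
  [MeasurableSpace E] [BorelSpace E] {a : ℝ}

theorem integrableOn_kernel_smul_sub [Nontrivial E] (ha : Module.finrank ℝ E < a)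
    (ha2 : a < Module.finrank ℝ E + 2) {u : E → ℂ} (hu : Continuous u) {c : ℝ}
    (hc : ∀ y, ‖u y‖ ≤ c) (x : E) {ρ : ℝ} (hρ : 0 < ρ) :
    IntegrableOn (fun y => (‖y‖ ^ a)⁻¹ • (u x - u (x + y))) {y | ρ ≤ ‖y‖} := by
  refine ((integrableOn_norm_rpow_inv (E := E) ha ha2 hρ).mul_const (c + c)).mono' ?_ ?_
  · have h1 : AEStronglyMeasurable (fun y : E => (‖y‖ ^ a)⁻¹) (volume.restrict {y | ρ ≤ ‖y‖}) :=
      (measurable_norm.pow_const a).inv.aestronglyMeasurable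
    have h2 : Continuous fun y => u x - u (x + y) := by fun_prop
    exact h1.smul h2.aestronglyMeasurable
  · refine Eventually.of_forall fun y => ?_
    rw [norm_smul, Real.norm_of_nonneg (by positivity)]
    gcongr
    exact (norm_sub_le _ _).trans (add_le_add (hc _) (hc _))

theorem HasFL.add [Nontrivial E] (ha : Module.finrank ℝ E < a)
    (ha2 : a < Module.finrank ℝ E + 2) {u v : E → ℂ} (hu : Continuous u) {c : ℝ}
    (hc : ∀ y, ‖u y‖ ≤ c) (hv : Continuous v) {d : ℝ} (hd : ∀ y, ‖v y‖ ≤ d) {x : E} {L L' : ℂ}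
    (h : HasFL a u x L) (h' : HasFL a v x L') : HasFL a (fun y => u y + v y) x (L + L') := by
  refine (Tendsto.add h h').congr' ?_
  filter_upwards [self_mem_nhdsWithin] with ρ hρ
  rw [← integral_add (integrableOn_kernel_smul_sub ha ha2 hu hc x hρ)
    (integrableOn_kernel_smul_sub ha ha2 hv hd x hρ)]
  congr 1; ext y
  rw [← smul_add]
  congr 1; ring

variable {τ : ℝ}

/-- Continuous bounded solutions of the perturbed problem, near a plane wave, in the whole space. -/
theorem exists_fixedPoint_resolv (ha : Module.finrank ℝ E < a) (hτ : τ ≠ 0) (k : ℕ) {δ : ℝ}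
    (hδ : 0 < δ) :
    ∃ M : ℕ, ∃ δ₁ > 0, ∀ w g : E → ℂ, Continuous w → (∀ y, ‖w y‖ ≤ 1) → ContDiff ℝ ∞ g →
      (∀ i ≤ M, ∀ x ∈ closedBall (0 : E) 2, ‖iteratedFDeriv ℝ i g x‖ ≤ δ₁) →
      ∃ R₀ : ℝ, ∀ R ≥ R₀, ∀ η : E → ℂ, Continuous η → (∀ y, ‖η y‖ ≤ 1) →
        (∀ y ∈ ball (0 : E) R, η y = 0) →
        ∃ W : E → ℂ, ContDiff ℝ ∞ W ∧ (∃ c, ∀ y, ‖W y‖ ≤ c) ∧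
          (∀ i ≤ k, ∀ x, ‖iteratedFDeriv ℝ i W x‖ ≤ δ) ∧
          W = resolv a τ (fun x => g x - pot a (fun y => η y * (w y + W y)) x) := by
  obtain ⟨C, M, hC0, hC⟩ := exists_norm_iteratedFDeriv_resolv_le (E := E) a hτ k
  set δ₁ : ℝ := min (1 / (2 * C)) (δ / (4 * C)) with hδ₁
  have hδ₁0 : 0 < δ₁ := lt_min (by positivity) (by positivity)
  have hC1 : C * δ₁ ≤ 1 / 2 := by
    calc C * δ₁ ≤ C * (1 / (2 * C)) := by gcongr; exact min_le_left _ _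
      _ = 1 / 2 := by field_simp
  have hC2 : C * δ₁ ≤ δ / 4 := by
    calc C * δ₁ ≤ C * (δ / (4 * C)) := by gcongr; exact min_le_right _ _
      _ = δ / 4 := by field_simp
  refine ⟨M, δ₁, hδ₁0, fun w g hw hw1 hg hgM => ?_⟩
  obtain ⟨R₀, hR₀⟩ := exists_forall_norm_iteratedFDeriv_pot_le (E := E) ha M hδ₁0
  refine ⟨R₀, fun R hR η hη hη1 hη0 => ?_⟩
  -- potentials of the cut off densities
  have hpot : ∀ (f : E → ℂ) (c : ℝ), Continuous f → (∀ y, ‖f y‖ ≤ c) →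
      ContDiff ℝ ∞ (pot a fun y => η y * f y) ∧ ∀ i ≤ M, ∀ x ∈ closedBall (0 : E) 2,
        ‖iteratedFDeriv ℝ i (pot a fun y => η y * f y) x‖ ≤ δ₁ * c := by
    intro f c hf hc
    have hb : ∀ y, ‖η y * f y‖ ≤ c := fun y => by
      rw [norm_mul]
      exact (mul_le_of_le_one_left (norm_nonneg _) (hη1 y)).trans (hc y)
    exact ⟨contDiff_pot ha (hη.mul hf) hb, hR₀ R hR _ c (hη.mul hf) hb fun y hy => by
      rw [hη0 y hy, zero_mul]⟩
  set v : BoundedContinuousFunction E ℂ → E → ℂ := fun W x =>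
    g x - pot a (fun y => η y * (w y + W y)) x with hv
  have hwW : ∀ (W : BoundedContinuousFunction E ℂ) y, ‖w y + W y‖ ≤ 1 + ‖W‖ := fun W y =>
    (norm_add_le _ _).trans (add_le_add (hw1 y) (W.norm_coe_le_norm y))
  have hvcd : ∀ W, ContDiff ℝ ∞ (v W) := fun W =>
    hg.sub (hpot (fun y => w y + W y) _ (hw.add W.continuous) (hwW W)).1
  have hTb : ∀ W, ∀ i ≤ k, ∀ x, ‖iteratedFDeriv ℝ i (resolv a τ (v W)) x‖
      ≤ C * (δ₁ + δ₁ * (1 + ‖W‖)) := by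
    intro W
    refine hC (v W) _ (hvcd W) fun i hi x hx => ?_
    have h1 := hpot (fun y => w y + W y) _ (hw.add W.continuous) (hwW W)
    rw [hv]
    simp only
    rw [fun_iteratedFDeriv_sub_apply (hg.of_le (by exact_mod_cast le_top)).contDiffAt
      (h1.1.of_le (by exact_mod_cast le_top)).contDiffAt]
    exact (norm_sub_le _ _).trans (add_le_add (hgM i hi x hx) (h1.2 i hi x hx))
  have hTb0 : ∀ W x, ‖resolv a τ (v W) x‖ ≤ C * (δ₁ + δ₁ * (1 + ‖W‖)) := fun W x => by
    simpa using hTb W 0 (Nat.zero_le _) x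
  set T : BoundedContinuousFunction E ℂ → BoundedContinuousFunction E ℂ := fun W =>
    BoundedContinuousFunction.ofNormedAddCommGroup (resolv a τ (v W))
      (contDiff_resolv (N := 0) hτ (hvcd W)).continuous _ (hTb0 W) with hT
  have hTc : ContractingWith (1 / 2) T := by
    refine ⟨by rw [← NNReal.coe_lt_coe]; norm_num, LipschitzWith.of_dist_le_mul fun W W' => ?_⟩
    refine (BoundedContinuousFunction.dist_le (by positivity)).2 fun x => ?_
    have h1 := hpot (fun y => W' y - W y) (dist W W') (W'.continuous.sub W.continuous) fun y => by
      rw [← dist_eq_norm, dist_comm]; exact BoundedContinuousFunction.dist_coe_le_dist y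
    have hb : ∀ (W : BoundedContinuousFunction E ℂ) y, ‖η y * (w y + W y)‖ ≤ 1 + ‖W‖ :=
      fun W y => by
        rw [norm_mul]
        exact (mul_le_of_le_one_left (norm_nonneg _) (hη1 y)).trans (hwW W y)
    have h2 : (fun x => v W x - v W' x) = pot a fun y => η y * (W' y - W y) := by
      ext x
      have e : (fun y => η y * (W' y - W y))
          = fun y => η y * (w y + W' y) - η y * (w y + W y) := by ext y; ring
      rw [e, pot_sub (V := fun y => η y * (w y + W' y)) (V' := fun y => η y * (w y + W y)) ha
        (hη.mul (hw.add W'.continuous)) (hb W') (hη.mul (hw.add W.continuous)) (hb W)]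
      rw [hv]; ring
    have h3 := hC (fun x => v W x - v W' x) (δ₁ * dist W W') (h2 ▸ h1.1) (h2 ▸ h1.2) 0
      (Nat.zero_le _) x
    rw [norm_iteratedFDeriv_zero, resolv_sub hτ (hvcd W) (hvcd W') x] at h3
    rw [dist_eq_norm]
    refine h3.trans ?_
    rw [← mul_assoc]
    refine mul_le_mul_of_nonneg_right ?_ dist_nonneg
    simpa using hC1
  set W := ContractingWith.fixedPoint T hTc with hW
  have hfix : resolv a τ (v W) = W := by
    have : T W = W := hTc.fixedPoint_isFixedPt
    rw [← this]
    conv_lhs => rw [this]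
    rfl
  have hWn : ‖W‖ ≤ 2 := by
    have h1 : ‖W‖ ≤ C * (δ₁ + δ₁ * (1 + ‖W‖)) := by
      refine (BoundedContinuousFunction.norm_le (by positivity)).2 fun x => ?_
      have := hTb0 W x
      rwa [hfix] at this
    have h2 : C * (δ₁ + δ₁ * (1 + ‖W‖)) = C * δ₁ * (2 + ‖W‖) := by ring
    have h3 : C * δ₁ * (2 + ‖W‖) ≤ 1 / 2 * (2 + ‖W‖) := by gcongr
    linarith
  refine ⟨W, hfix ▸ contDiff_resolv hτ (hvcd W), ⟨‖W‖, W.norm_coe_le_norm⟩, fun i hi x => ?_,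
    hfix.symm⟩
  have := hTb W i hi x
  rw [hfix] at this
  refine this.trans ?_
  calc C * (δ₁ + δ₁ * (1 + ‖W‖)) = C * δ₁ * (2 + ‖W‖) := by ring
    _ ≤ δ / 4 * (2 + 2) := by gcongr
    _ = δ := by ring

/-- Plane waves are limits, on the unit ball, of compactly supported functions which are
eigenfunctions there, with any prescribed nonzero purely imaginary eigenvalue. -/
theorem exists_hasFL_near_wave [Nontrivial E] (ha : Module.finrank ℝ E < a)
    (ha2 : a < Module.finrank ℝ E + 2) (hτ : τ ≠ 0) (κ : E) (k : ℕ) {δ : ℝ} (hδ : 0 < δ) :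
    ∃ φ W : E → ℂ, Continuous φ ∧ HasCompactSupport φ ∧ ContDiff ℝ ∞ W ∧
      (∀ x ∈ ball (0 : E) 1, φ x = wave κ x + W x) ∧
      (∀ x ∈ ball (0 : E) 1, HasFL a φ x (-(τ * Complex.I * φ x))) ∧
      ∀ i ≤ k, ∀ x, ‖iteratedFDeriv ℝ i W x‖ ≤ δ := by
  obtain ⟨M, δ₁, hδ₁, H⟩ := exists_fixedPoint_resolv (E := E) ha hτ k hδ
  set μ : ℂ := sym a κ + τ * Complex.I with hμ
  have hwcd : ContDiff ℝ ∞ (wave κ) := contDiff_wave κ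
  have hw : Continuous (wave κ) := hwcd.continuous
  obtain ⟨Ψ, h1, h2, h3, h4⟩ := FarApprox.const_mul (M := M) ha
    (hwcd.of_le (by exact_mod_cast le_top)) (farApprox_wave ha κ) μ δ₁ hδ₁
  obtain ⟨c, hc⟩ := h2.exists_bound_of_continuous h1
  have hμw : ContDiff ℝ ∞ fun x => μ * wave κ x := contDiff_const.mul hwcd
  obtain ⟨R₀, hR₀⟩ := H (wave κ) (fun x => pot a Ψ x - μ * wave κ x) hw
    (fun y => (norm_wave κ y).le) ((contDiff_pot ha h1 hc).sub hμw) fun i hi x hx => by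
      rw [fun_iteratedFDeriv_sub_apply (contDiff_pot (N := i) ha h1 hc).contDiffAt
        (hμw.of_le (by exact_mod_cast le_top)).contDiffAt, norm_sub_rev]
      exact h4 i hi x hx
  set R := max R₀ 4 with hR
  have hR4 : 4 ≤ R := le_max_right _ _
  let χ : ContDiffBump (0 : E) := ⟨R, R + 1, by linarith, by linarith⟩
  have hχc : Continuous fun y => ((χ y : ℝ) : ℂ) := Complex.continuous_ofReal.comp χ.continuous
  have hη1 : ∀ y, ‖(1 - χ y : ℂ)‖ ≤ 1 := fun y => by
    rw [← Complex.ofReal_one, ← Complex.ofReal_sub, Complex.norm_real, Real.norm_eq_abs, abs_le]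
    constructor <;> linarith [χ.nonneg (x := y), χ.le_one (x := y)]
  have hη0 : ∀ y ∈ ball (0 : E) R, (1 - χ y : ℂ) = 0 := fun y hy => by
    rw [χ.one_of_mem_closedBall (ball_subset_closedBall hy)]; simp
  obtain ⟨W, hWcd, ⟨cW, hcW⟩, hWk, hWeq⟩ := hR₀ R (le_max_left _ _) (fun y => 1 - χ y)
    (continuous_const.sub hχc) hη1 hη0
  set q : E → ℂ := fun y => (1 - χ y) * (wave κ y + W y) with hq
  have hqc : Continuous q := (continuous_const.sub hχc).mul (hw.add hWcd.continuous)
  have hqb : ∀ y, ‖q y‖ ≤ 1 + cW := fun y => by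
    rw [hq]; simp only; rw [norm_mul]
    refine (mul_le_of_le_one_left (norm_nonneg _) (hη1 y)).trans ((norm_add_le _ _).trans ?_)
    exact add_le_add (norm_wave κ y).le (hcW y)
  set Θ : E → ℂ := fun y => Ψ y - q y with hΘ
  have hΘc : Continuous Θ := h1.sub hqc
  have hΘb : ∀ y, ‖Θ y‖ ≤ c + (1 + cW) := fun y =>
    (norm_sub_le _ _).trans (add_le_add (hc y) (hqb y))
  have hΘ0 : ∀ y ∈ ball (0 : E) 4, Θ y = 0 := fun y hy => by
    rw [hΘ]; simp only
    rw [h3 y (ball_subset_closedBall hy), hq]; simp only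
    rw [hη0 y (ball_subset_ball hR4 hy)]; ring
  have h14 : ball (0 : E) 1 ⊆ ball 0 4 := ball_subset_ball (by norm_num)
  have hφ : (fun y => χ y * (wave κ y + W y) + Ψ y) = fun y => (wave κ y + W y) + Θ y := by
    ext y; rw [hΘ, hq]; ring
  have hφ1 : ∀ y ∈ ball (0 : E) 1, χ y * (wave κ y + W y) + Ψ y = wave κ y + W y := fun y hy => by
    rw [congrFun hφ y, hΘ0 y (h14 hy), add_zero]
  refine ⟨fun y => χ y * (wave κ y + W y) + Ψ y, W, (hχc.mul (hw.add hWcd.continuous)).add h1,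
    (HasCompactSupport.mul_right (χ.hasCompactSupport.comp_left Complex.ofReal_zero)).add h2,
    hWcd, hφ1, fun x hx => ?_, hWk⟩
  simp only [hφ1 x hx]
  rw [hφ]
  have hvcd : ContDiff ℝ ∞ fun x => pot a Ψ x - μ * wave κ x - pot a q x :=
    ((contDiff_pot ha h1 hc).sub hμw).sub (contDiff_pot ha hqc hqb)
  have hF := hasFL_resolv ha ha2 hτ hvcd x
  rw [← hWeq] at hF
  have hsum := HasFL.add (u := fun y => wave κ y + W y) ha ha2 (hw.add hWcd.continuous)
    (fun y => (norm_add_le _ _).trans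
    (add_le_add (norm_wave κ y).le (hcW y))) hΘc hΘb (HasFL.add ha ha2 hw
    (fun y => (norm_wave κ y).le) hWcd.continuous hcW (hasFL_wave ha ha2 κ x) hF)
    (hasFL_of_eq_zero_ball hΘ0 hx)
  convert hsum using 1
  rw [cutoff_eq_one (ball_subset_closedBall hx), hΘ, pot_sub ha h1 hc hqc hqb, hμ]
  push_cast
  ring

end Elliptic

section Caloric

variable {E : Type*} [NormedAddCommGroup E] [InnerProductSpace ℝ E] [FiniteDimensional ℝ E]
  [MeasurableSpace E] [BorelSpace E] {a c : ℝ}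

theorem HasFL.const_mul {u : E → ℂ} {x : E} {L : ℂ} (h : HasFL a u x L) (z : ℂ) :
    HasFL a (fun y => z * u y) x (z * L) := by
  refine (Tendsto.const_mul z h).congr fun ρ => ?_
  rw [← integral_const_mul]
  congr 1; ext y
  rw [← mul_sub, mul_smul_comm]

/-- Compactly supported continuous functions on space-time, smooth in the unit cylinder and
solving there the equation `∂ₜ U + c L U = 0`, where `L` has kernel `‖y‖ ^ (-a)`. -/
structure IsSol (a c : ℝ) (U : E × ℝ → ℂ) : Prop where
  continuous : Continuous U
  hasCompactSupport : HasCompactSupport U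
  contDiffOn : ContDiffOn ℝ ∞ U (ball 0 1 ×ˢ Ioo (-1 : ℝ) 1)
  hasFL : ∀ x ∈ ball (0 : E) 1, ∀ t ∈ Ioo (-1 : ℝ) 1,
    HasFL a (fun y => U (y, t)) x (-((c⁻¹ : ℝ) * deriv (fun τ => U (x, τ)) t))

theorem isOpen_cylinder : IsOpen (ball (0 : E) 1 ×ˢ Ioo (-1 : ℝ) 1) := isOpen_ball.prod isOpen_Ioo

theorem IsSol.contDiffAt {U : E × ℝ → ℂ} (h : IsSol a c U) {p : E × ℝ}
    (hp : p ∈ ball (0 : E) 1 ×ˢ Ioo (-1 : ℝ) 1) : ContDiffAt ℝ ∞ U p :=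
  h.contDiffOn.contDiffAt (isOpen_cylinder.mem_nhds hp)

theorem IsSol.differentiableAt {U : E × ℝ → ℂ} (h : IsSol a c U) {x : E} (hx : x ∈ ball (0 : E) 1)
    {t : ℝ} (ht : t ∈ Ioo (-1 : ℝ) 1) : DifferentiableAt ℝ (fun τ => U (x, τ)) t :=
  ((h.contDiffAt (p := (x, t)) ⟨hx, ht⟩).differentiableAt (by simp)).comp t
    ((differentiableAt_const x).prodMk differentiableAt_id)

theorem IsSol.const_mul {U : E × ℝ → ℂ} (h : IsSol a c U) (z : ℂ) :
    IsSol a c fun p => z * U p where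
  continuous := continuous_const.mul h.continuous
  hasCompactSupport := h.hasCompactSupport.mul_left
  contDiffOn := contDiffOn_const.mul h.contDiffOn
  hasFL x hx t ht := by
    rw [deriv_const_mul _ (h.differentiableAt hx ht)]
    convert (h.hasFL x hx t ht).const_mul z using 1
    ring

theorem IsSol.add [Nontrivial E] (ha : Module.finrank ℝ E < a) (ha2 : a < Module.finrank ℝ E + 2)
    {U U' : E × ℝ → ℂ} (h : IsSol a c U) (h' : IsSol a c U') : IsSol a c fun p => U p + U' p where
  continuous := h.continuous.add h'.continuous
  hasCompactSupport := h.hasCompactSupport.add h'.hasCompactSupport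
  contDiffOn := h.contDiffOn.add h'.contDiffOn
  hasFL x hx t ht := by
    obtain ⟨b, hb⟩ := h.hasCompactSupport.exists_bound_of_continuous h.continuous
    obtain ⟨b', hb'⟩ := h'.hasCompactSupport.exists_bound_of_continuous h'.continuous
    rw [deriv_fun_add (h.differentiableAt hx ht) (h'.differentiableAt hx ht)]
    have hc : Continuous fun y : E => (y, t) := by fun_prop
    convert HasFL.add (u := fun y => U (y, t)) (v := fun y => U' (y, t)) ha ha2
      (h.continuous.comp hc) (fun y => hb (y, t)) (h'.continuous.comp hc)
      (fun y => hb' (y, t)) (h.hasFL x hx t ht) (h'.hasFL x hx t ht) using 1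
    ring

theorem IsSol.zero : IsSol a c fun _ : E × ℝ => 0 where
  continuous := continuous_const
  hasCompactSupport := HasCompactSupport.zero
  contDiffOn := contDiffOn_const
  hasFL x hx t ht := by simp [HasFL]

/-- The unit cylinder in the Euclidean product of space and time. -/
def cyl (E : Type*) [NormedAddCommGroup E] : Set (WithLp 2 (E × ℝ)) :=
  {v | v.fst ∈ ball 0 1 ∧ v.snd ∈ Ioo (-1 : ℝ) 1}

theorem isOpen_cyl : IsOpen (cyl E) :=
  (isOpen_ball.preimage (WithLp.fstL 2 ℝ E ℝ).continuous).inter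
    (isOpen_Ioo.preimage (WithLp.sndL 2 ℝ E ℝ).continuous)

theorem hasDerivAt_wave_real (θ t : ℝ) :
    HasDerivAt (wave θ) (2 * Real.pi * θ * Complex.I * wave θ t) t := by
  have h1 : HasDerivAt (fun t : ℝ => ((2 * Real.pi * inner ℝ θ t : ℝ) : ℂ) * Complex.I)
      ((2 * Real.pi * θ : ℝ) * Complex.I) t := by
    have := ((hasDerivAt_id t).const_mul (2 * Real.pi * θ)).ofReal_comp.mul_const Complex.I
    have e : (fun t : ℝ => ((2 * Real.pi * inner ℝ θ t : ℝ) : ℂ) * Complex.I)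
        = fun y => ((2 * Real.pi * θ * id y : ℝ) : ℂ) * Complex.I := by
      funext t; simp; ring
    rw [e]
    exact this.congr_deriv (by simp)
  refine h1.cexp.congr_deriv ?_
  rw [wave]; push_cast; ring

theorem wave_prod (ξ v : WithLp 2 (E × ℝ)) : wave ξ v = wave ξ.fst v.fst * wave ξ.snd v.snd := by
  rw [wave, wave, wave, WithLp.prod_inner_apply, ← Complex.exp_add]
  congr 1; push_cast; simp; ring

theorem exists_isSol_near_wave [Nontrivial E] (ha : Module.finrank ℝ E < a)
    (ha2 : a < Module.finrank ℝ E + 2) (hc : 0 < c) (ξ : WithLp 2 (E × ℝ)) (hξ : ξ.snd ≠ 0)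
    (k : ℕ) {δ : ℝ} (hδ : 0 < δ) :
    ∃ U : E × ℝ → ℂ, IsSol a c U ∧ ∀ i ≤ k, ∀ v ∈ cyl E,
      ‖iteratedFDeriv ℝ i (fun v : WithLp 2 (E × ℝ) => U (v.fst, v.snd) - wave ξ v) v‖ ≤ δ := by
  set θ := ξ.snd with hθ
  set ξ' : WithLp 2 (E × ℝ) := WithLp.toLp 2 (0, θ) with hξ'
  set A : ℝ := (1 + 2 * Real.pi * ‖ξ'‖) ^ k with hA
  have hpi := Real.pi_pos
  have hA0 : 0 < A := by positivity
  set D : ℝ := (1 + ‖WithLp.fstL 2 ℝ E ℝ‖) ^ k with hD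
  have hD0 : 0 < D := by positivity
  obtain ⟨φ, W, hφ, hφs, hW, hφW, hL, hWk⟩ := exists_hasFL_near_wave (E := E) ha ha2
    (τ := 2 * Real.pi * θ / c) (by positivity) ξ.fst k (δ := δ / (2 ^ k * A * D)) (by positivity)
  let ζ : ContDiffBump (0 : ℝ) := ⟨1, 2, by norm_num, by norm_num⟩
  have hζ1 : ∀ t ∈ Ioo (-1 : ℝ) 1, ζ t = 1 := fun t ht =>
    ζ.one_of_mem_closedBall (by
      rw [mem_closedBall_zero_iff, Real.norm_eq_abs]; exact (abs_lt.2 ht).le)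
  have hwθ : ContDiff ℝ ∞ (wave θ) := contDiff_wave θ
  have hU1 : ∀ p ∈ ball (0 : E) 1 ×ˢ Ioo (-1 : ℝ) 1,
      (ζ p.2 : ℂ) * wave θ p.2 * φ p.1 = wave θ p.2 * (wave ξ.fst p.1 + W p.1) := fun p hp => by
    rw [hζ1 p.2 hp.2, hφW p.1 hp.1]; simp
  refine ⟨fun p => (ζ p.2 : ℂ) * wave θ p.2 * φ p.1, ⟨?_, ?_, ?_, ?_⟩, ?_⟩
  · exact ((Complex.continuous_ofReal.comp (ζ.continuous.comp continuous_snd)).mul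
      (hwθ.continuous.comp continuous_snd)).mul (hφ.comp continuous_fst)
  · refine HasCompactSupport.intro (hφs.isCompact.prod ζ.hasCompactSupport.isCompact) fun p hp => ?_
    rw [mem_prod, not_and_or] at hp
    rcases hp with hp | hp
    · rw [image_eq_zero_of_notMem_tsupport hp, mul_zero]
    · rw [image_eq_zero_of_notMem_tsupport hp]; simp
  · refine ContDiffOn.congr ?_ hU1
    exact ((hwθ.comp contDiff_snd).mul (((contDiff_wave ξ.fst).comp contDiff_fst).add
      (hW.comp contDiff_fst))).contDiffOn
  · intro x hx t ht
    have hd : HasDerivAt (fun τ => (ζ τ : ℂ) * wave θ τ * φ x)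
        (2 * Real.pi * θ * Complex.I * wave θ t * φ x) t := by
      refine ((hasDerivAt_wave_real θ t).mul_const (φ x)).congr_of_eventuallyEq ?_
      filter_upwards [isOpen_Ioo.mem_nhds ht] with τ hτ
      rw [hζ1 τ hτ]; simp
    rw [hd.deriv]
    convert (hL x hx).const_mul ((ζ t : ℂ) * wave θ t) using 1
    rw [hζ1 t ht]
    push_cast
    field_simp
  · intro i hi v hv
    have hev : (fun v : WithLp 2 (E × ℝ) => (ζ v.snd : ℂ) * wave θ v.snd * φ v.fst - wave ξ v)
        =ᶠ[𝓝 v] fun v => wave ξ' v * W (WithLp.fstL 2 ℝ E ℝ v) := by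
      filter_upwards [isOpen_cyl.mem_nhds hv] with v hv
      rw [hU1 (v.fst, v.snd) hv, wave_prod ξ v, wave_prod ξ' v]
      have : wave ξ'.fst v.fst = 1 := by simp [wave, hξ']
      rw [this]
      simp [hξ']; ring
    rw [(hev.iteratedFDeriv ℝ i).eq_of_nhds]
    have hWL : ContDiff ℝ ∞ fun v => W (WithLp.fstL 2 ℝ E ℝ v) :=
      hW.comp (WithLp.fstL 2 ℝ E ℝ).contDiff
    have := norm_iteratedFDeriv_mul_le_of_le (contDiff_wave ξ') hWL (M := k) (A := A)
      (B := δ / (2 ^ k * A * D) * D) (x := v) hA0.le (fun j hj => ?_) (fun j hj => ?_) hi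
    · refine this.trans_eq ?_
      field_simp
    · refine (norm_iteratedFDeriv_wave_le j ξ' v).trans ?_
      refine (pow_le_pow_left₀ (by positivity) (by linarith) j).trans
        (pow_le_pow_right₀ ?_ hj)
      have : 0 ≤ 2 * Real.pi * ‖ξ'‖ := by positivity
      linarith
    · have e := (WithLp.fstL 2 ℝ E ℝ).iteratedFDeriv_comp_right (f := W) (n := ∞) hW v (i := j)
        (by exact_mod_cast le_top)
      have e' : (fun v => W (WithLp.fstL 2 ℝ E ℝ v)) = W ∘ WithLp.fstL 2 ℝ E ℝ := rfl
      rw [e', e]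
      refine (ContinuousMultilinearMap.norm_compContinuousLinearMap_le _ _).trans ?_
      rw [Finset.prod_const, Finset.card_univ, Fintype.card_fin]
      refine mul_le_mul (hWk j hj _) ?_ (by positivity) (by positivity)
      exact (pow_le_pow_left₀ (norm_nonneg _) (by linarith) j).trans
        (pow_le_pow_right₀ (by linarith [norm_nonneg (WithLp.fstL 2 ℝ E ℝ)]) hj)

end Caloric

section IntegralMem

theorem Submodule.integral_mem_of_isClosed {𝕜 α X : Type*} [RCLike 𝕜] [MeasurableSpace α]
    {μ : Measure α} [NormedAddCommGroup X] [NormedSpace ℝ X] [NormedSpace 𝕜 X] [CompleteSpace X]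
    (S : Submodule 𝕜 X) (hS : IsClosed (S : Set X)) {f : α → X} (hf : Integrable f μ)
    (h : ∀ᵐ x ∂μ, f x ∈ S) : ∫ x, f x ∂μ ∈ S := by
  have : IsClosed (S : Set X) := hS
  have h1 := ContinuousLinearMap.integral_comp_comm (𝕜 := 𝕜) S.mkQL hf
  have h2 : ∫ x, S.mkQL (f x) ∂μ = 0 := by
    refine integral_eq_zero_of_ae ?_
    filter_upwards [h] with x hx
    simpa using hx
  rw [h2] at h1
  simpa using h1.symm

end IntegralMem

section UniformLimits

variable {V T Y : Type*} [NormedAddCommGroup Y] [NormedSpace ℂ Y] [TopologicalSpace T]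

/-- The limits of the functions in `P`, uniformly on `D`. -/
def uniformLimits (P : Submodule ℂ (T → Y)) (D : Set T) : Submodule ℂ C(T, Y) where
  carrier := {g | ∀ δ > 0, ∃ p ∈ P, ∀ t ∈ D, ‖g t - p t‖ ≤ δ}
  zero_mem' δ hδ := ⟨0, P.zero_mem, fun t _ => by simp [hδ.le]⟩
  add_mem' {g g'} hg hg' δ hδ := by
    obtain ⟨p, hp, h⟩ := hg (δ / 2) (half_pos hδ)
    obtain ⟨p', hp', h'⟩ := hg' (δ / 2) (half_pos hδ)
    refine ⟨p + p', P.add_mem hp hp', fun t ht => ?_⟩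
    rw [ContinuousMap.add_apply, Pi.add_apply, add_sub_add_comm]
    exact (norm_add_le _ _).trans ((add_le_add (h t ht) (h' t ht)).trans_eq (add_halves δ))
  smul_mem' z g hg δ hδ := by
    obtain ⟨p, hp, h⟩ := hg (δ / (‖z‖ + 1)) (by positivity)
    refine ⟨z • p, P.smul_mem z hp, fun t ht => ?_⟩
    rw [ContinuousMap.smul_apply, Pi.smul_apply, ← smul_sub, norm_smul]
    calc ‖z‖ * _ ≤ (‖z‖ + 1) * (δ / (‖z‖ + 1)) := by
          gcongr
          · linarith
          · exact h t ht
      _ = δ := by field_simp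

theorem isClosed_uniformLimits [CompactSpace T] (P : Submodule ℂ (T → Y)) (D : Set T) :
    IsClosed (uniformLimits P D : Set C(T, Y)) := by
  refine isClosed_of_closure_subset fun g hg δ hδ => ?_
  obtain ⟨g', hg', hd⟩ := Metric.mem_closure_iff.1 hg (δ / 2) (half_pos hδ)
  obtain ⟨p, hp, h⟩ := hg' (δ / 2) (half_pos hδ)
  refine ⟨p, hp, fun t ht => ?_⟩
  have h1 : ‖g t - g' t‖ ≤ δ / 2 := by
    rw [← dist_eq_norm]
    exact (ContinuousMap.dist_apply_le_dist t).trans hd.le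
  have h2 := h t ht
  calc _ = ‖(g t - g' t) + (g' t - p t)‖ := by congr 1; abel
    _ ≤ δ := (norm_add_le _ _).trans (by linarith)

variable [CompactSpace T] [NormedSpace ℝ Y] [CompleteSpace Y] [TopologicalSpace V]
  [SecondCountableTopology V] [MeasurableSpace V] [OpensMeasurableSpace V] {μ : Measure V}

/-- A superposition of uniform limits of functions in a vector space is again such a limit. -/
theorem exists_mem_near_integral (P : Submodule ℂ (T → Y)) (D : Set T) {J : V → T → Y}
    (hJ : Continuous fun q : V × T => J q.1 q.2) {b : V → ℂ} (hb : Continuous b) {B : V → ℝ}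
    (hB0 : ∀ ξ, 0 ≤ B ξ) (hB : ∀ ξ t, ‖J ξ t‖ ≤ B ξ) (hbB : Integrable (fun ξ => ‖b ξ‖ * B ξ) μ)
    (hP : ∀ᵐ ξ ∂μ, ∀ δ > 0, ∃ p ∈ P, ∀ t ∈ D, ‖J ξ t - p t‖ ≤ δ) {δ : ℝ} (hδ : 0 < δ) :
    ∃ p ∈ P, ∀ t ∈ D, ‖(∫ ξ, b ξ • J ξ t ∂μ) - p t‖ ≤ δ := by
  let 𝒥 : C(V, C(T, Y)) := ContinuousMap.curry ⟨fun q : V × T => J q.1 q.2, hJ⟩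
  have hJi : Integrable (fun ξ => b ξ • 𝒥 ξ) μ := by
    refine hbB.mono' (hb.smul 𝒥.continuous).aestronglyMeasurable (Eventually.of_forall fun ξ => ?_)
    rw [norm_smul]
    exact mul_le_mul_of_nonneg_left ((ContinuousMap.norm_le _ (hB0 ξ)).2 (hB ξ)) (norm_nonneg _)
  have hmem := Submodule.integral_mem_of_isClosed (uniformLimits P D) (isClosed_uniformLimits P D)
    hJi (hP.mono fun ξ hξ => Submodule.smul_mem _ _ hξ)
  obtain ⟨p, hp, h⟩ := hmem δ hδ
  refine ⟨p, hp, fun t ht => ?_⟩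
  have h1 := h t ht
  rwa [ContinuousMap.integral_apply hJi] at h1

end UniformLimits

section Jets

variable {V : Type*} [NormedAddCommGroup V] [InnerProductSpace ℝ V] {Ω : Set V} {k : ℕ}

/-- The families of functions which are on `Ω` the derivatives, up to order `k`, of a function
in `S`. -/
def jets (S : Submodule ℂ (V → ℂ)) (Ω : Set V) (k : ℕ)
    (hS : ∀ U ∈ S, ∀ v ∈ Ω, ContDiffAt ℝ k U v) :
    Submodule ℂ (closure Ω → (i : Fin (k + 1)) → V [×i]→L[ℝ] ℂ) where
  carrier := {g | ∃ U ∈ S, ∀ v : closure Ω, (v : V) ∈ Ω → ∀ i, g v i = iteratedFDeriv ℝ i U v}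
  zero_mem' := ⟨0, S.zero_mem, fun v hv i => by simp⟩
  add_mem' := by
    rintro g g' ⟨U, hU, h⟩ ⟨U', hU', h'⟩
    refine ⟨U + U', S.add_mem hU hU', fun v hv i => ?_⟩
    have hi : ((i : ℕ) : WithTop ℕ∞) ≤ k := by exact_mod_cast Nat.lt_succ_iff.1 i.2
    rw [iteratedFDeriv_add_apply ((hS U hU v hv).of_le hi) ((hS U' hU' v hv).of_le hi),
      Pi.add_apply, Pi.add_apply, h v hv, h' v hv]
  smul_mem' := by
    rintro z g ⟨U, hU, h⟩
    refine ⟨z • U, S.smul_mem z hU, fun v hv i => ?_⟩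
    have hi : ((i : ℕ) : WithTop ℕ∞) ≤ k := by exact_mod_cast Nat.lt_succ_iff.1 i.2
    rw [iteratedFDeriv_const_smul_apply ((hS U hU v hv).of_le hi), Pi.smul_apply, Pi.smul_apply,
      h v hv]

variable [FiniteDimensional ℝ V] [MeasurableSpace V] [BorelSpace V]

/-- If almost all plane waves are limits of functions in a vector space `S`, in the `C^k` norm on
the bounded set `Ω`, then so are all test functions. -/
theorem exists_mem_near_of_wave (hΩ : Bornology.IsBounded Ω) (S : Submodule ℂ (V → ℂ))
    (hS : ∀ U ∈ S, ∀ v ∈ Ω, ContDiffAt ℝ k U v)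
    (hw : ∀ᵐ ξ : V, ∀ δ > 0, ∃ U ∈ S, ∀ i ≤ k, ∀ v ∈ Ω,
      ‖iteratedFDeriv ℝ i (fun v => U v - wave ξ v) v‖ ≤ δ)
    {F : V → ℂ} (hF : ContDiff ℝ ∞ F) (hFs : HasCompactSupport F) {δ : ℝ} (hδ : 0 < δ) :
    ∃ U ∈ S, ∀ i ≤ k, ∀ v ∈ Ω, ‖iteratedFDeriv ℝ i (fun v => U v - F v) v‖ ≤ δ := by
  have : CompactSpace (closure Ω) := isCompact_iff_compactSpace.1 hΩ.isCompact_closure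
  have hc := continuous_fourier_of_hasCompactSupport hF.continuous hFs
  have hInt := integrable_norm_pow_mul_norm_fourier hF hFs
  have hpi := Real.pi_pos
  have h0 : ∀ ξ : V, ∀ i ∈ Finset.range (k + 1), 0 ≤ (2 * Real.pi) ^ i * ‖ξ‖ ^ i :=
    fun ξ i _ => by positivity
  let J : V → closure Ω → (i : Fin (k + 1)) → V [×i]→L[ℝ] ℂ := fun ξ v i =>
    iteratedFDeriv ℝ i (wave ξ) v
  have hJ : Continuous fun q : V × closure Ω => J q.1 q.2 := continuous_pi fun i =>
    (continuous_iteratedFDeriv_wave (i : ℕ)).comp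
      (continuous_fst.prodMk (continuous_subtype_val.comp continuous_snd))
  have hJB : ∀ ξ v, ‖J ξ v‖ ≤ ∑ i ∈ Finset.range (k + 1), (2 * Real.pi) ^ i * ‖ξ‖ ^ i := by
    intro ξ v
    refine (pi_norm_le_iff_of_nonneg (Finset.sum_nonneg (h0 ξ))).2 fun i => ?_
    refine (norm_iteratedFDeriv_wave_le (i : ℕ) ξ v).trans ?_
    rw [mul_pow]
    exact Finset.single_le_sum (h0 ξ) (Finset.mem_range.2 i.2)
  have hbB : Integrable fun ξ => ‖𝓕 F ξ‖ *
      ∑ i ∈ Finset.range (k + 1), (2 * Real.pi) ^ i * ‖ξ‖ ^ i := by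
    have : Integrable fun ξ => ∑ i ∈ Finset.range (k + 1),
        (2 * Real.pi) ^ i * (‖ξ‖ ^ i * ‖𝓕 F ξ‖) :=
      integrable_finsetSum _ fun i _ => (hInt i).const_mul _
    refine this.congr (Eventually.of_forall fun ξ => ?_)
    simp only [Finset.mul_sum]
    exact Finset.sum_congr rfl fun i _ => by ring
  obtain ⟨p, ⟨U, hU, hp⟩, h⟩ := exists_mem_near_integral (jets S Ω k hS) {v | (v : V) ∈ Ω} hJ hc
    (fun ξ => Finset.sum_nonneg (h0 ξ)) hJB hbB (hw.mono fun ξ hξ δ hδ => by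
      obtain ⟨U, hU, h⟩ := hξ δ hδ
      refine ⟨fun v i => iteratedFDeriv ℝ i U v, ⟨U, hU, fun _ _ _ => rfl⟩, fun v hv => ?_⟩
      refine (pi_norm_le_iff_of_nonneg hδ.le).2 fun i => ?_
      have hi := Nat.lt_succ_iff.1 i.2
      have := h i hi v hv
      rwa [fun_iteratedFDeriv_sub_apply ((hS U hU v hv).of_le (by exact_mod_cast hi))
        (contDiff_wave ξ).contDiffAt, norm_sub_rev] at this) hδ
  refine ⟨U, hU, fun i hi v hv => ?_⟩
  have hi' : i < k + 1 := Nat.lt_succ_iff.2 hi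
  have h1 := (norm_le_pi_norm _ (⟨i, hi'⟩ : Fin (k + 1))).trans (h ⟨v, subset_closure hv⟩ hv)
  have hFi : F = fun x => ∫ ξ, 𝓕 F ξ * wave ξ x :=
    funext fun x => (integral_fourier_mul_wave hF hFs x).symm
  have hJi : Integrable fun ξ => 𝓕 F ξ • J ξ ⟨v, subset_closure hv⟩ := by
    refine hbB.mono' ?_ (Eventually.of_forall fun ξ => ?_)
    · have : SecondCountableTopologyEither V ((i : Fin (k + 1)) → V [×i]→L[ℝ] ℂ) :=
        secondCountableTopologyEither_of_left V _
      exact (hc.smul (hJ.comp (continuous_id.prodMk continuous_const))).aestronglyMeasurable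
    · rw [norm_smul]
      exact mul_le_mul_of_nonneg_left (hJB ξ _) (norm_nonneg _)
  have h2 : (∫ ξ, 𝓕 F ξ • J ξ ⟨v, subset_closure hv⟩) ⟨i, hi'⟩ = iteratedFDeriv ℝ i F v := by
    conv_rhs => rw [hFi]
    rw [iteratedFDeriv_integral_wave hc.aestronglyMeasurable hInt i v, eval_integral hJi.eval]
    rfl
  rw [Pi.sub_apply, h2, hp _ hv] at h1
  rwa [fun_iteratedFDeriv_sub_apply ((hS U hU v hv).of_le (by exact_mod_cast hi))
    (hF.of_le (by exact_mod_cast le_top)).contDiffAt, norm_sub_rev]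

end Jets

theorem ContinuousLinearEquiv.norm_iteratedFDeriv_comp_right_le {G H F : Type*}
    [NormedAddCommGroup G] [NormedSpace ℝ G] [NormedAddCommGroup H] [NormedSpace ℝ H]
    [NormedAddCommGroup F] [NormedSpace ℝ F] (g : G ≃L[ℝ] H) (f : H → F) (x : G) (i : ℕ) :
    ‖iteratedFDeriv ℝ i (f ∘ g) x‖ ≤ ‖iteratedFDeriv ℝ i f (g x)‖ * ‖(g : G →L[ℝ] H)‖ ^ i := by
  have h := g.iteratedFDerivWithin_comp_right f uniqueDiffOn_univ (mem_univ (g x)) i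
  rw [preimage_univ, iteratedFDerivWithin_univ, iteratedFDerivWithin_univ] at h
  rw [h]
  refine (ContinuousMultilinearMap.norm_compContinuousLinearMap_le _ _).trans ?_
  rw [Finset.prod_const, Finset.card_univ, Fintype.card_fin]

section SmoothApproximation

variable {E : Type*} [NormedAddCommGroup E] [InnerProductSpace ℝ E] [FiniteDimensional ℝ E]
  [MeasurableSpace E] [BorelSpace E] {a c : ℝ}

theorem isBounded_cyl : Bornology.IsBounded (cyl E) := by
  refine (isBounded_iff_forall_norm_le.2 ⟨2, fun v hv => ?_⟩)
  have h1 : ‖v.fst‖ < 1 := by simpa using hv.1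
  have h2 : ‖v.snd‖ < 1 := by rw [Real.norm_eq_abs]; exact abs_lt.2 hv.2
  rw [WithLp.prod_norm_eq_of_L2]
  refine Real.sqrt_le_iff.2 ⟨by norm_num, ?_⟩
  nlinarith [norm_nonneg v.fst, norm_nonneg v.snd]

/-- The space of solutions, as functions on the Euclidean product of space and time. -/
def solSpace [Nontrivial E] (ha : Module.finrank ℝ E < a) (ha2 : a < Module.finrank ℝ E + 2)
    (c : ℝ) : Submodule ℂ (WithLp 2 (E × ℝ) → ℂ) where
  carrier := {g | ∃ U : E × ℝ → ℂ, IsSol a c U ∧ g = fun v => U (v.fst, v.snd)}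
  zero_mem' := ⟨_, IsSol.zero, rfl⟩
  add_mem' := by
    rintro _ _ ⟨U, hU, rfl⟩ ⟨U', hU', rfl⟩
    exact ⟨_, hU.add ha ha2 hU', rfl⟩
  smul_mem' := by
    rintro z _ ⟨U, hU, rfl⟩
    exact ⟨_, hU.const_mul z, rfl⟩

theorem ae_snd_ne_zero : ∀ᵐ ξ : WithLp 2 (E × ℝ), ξ.snd ≠ 0 := by
  have h := Measure.addHaar_submodule (volume : Measure (WithLp 2 (E × ℝ)))
    (LinearMap.ker (WithLp.sndL 2 ℝ E ℝ).toLinearMap) (fun h => by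
      have : WithLp.toLp 2 ((0 : E), (1 : ℝ)) ∈
        LinearMap.ker (WithLp.sndL 2 ℝ E ℝ).toLinearMap := h ▸ Submodule.mem_top
      simp at this)
  rw [ae_iff]
  convert h using 2
  ext ξ
  simp

theorem exists_isSol_near [Nontrivial E] (ha : Module.finrank ℝ E < a)
    (ha2 : a < Module.finrank ℝ E + 2) (hc : 0 < c) {F : E × ℝ → ℂ} (hF : ContDiff ℝ ∞ F)
    (hFs : HasCompactSupport F) (k : ℕ) {δ : ℝ} (hδ : 0 < δ) :
    ∃ U : E × ℝ → ℂ, IsSol a c U ∧ ∀ i ≤ k, ∀ p ∈ ball (0 : E) 1 ×ˢ Ioo (-1 : ℝ) 1,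
      ‖iteratedFDeriv ℝ i (fun q => U q - F q) p‖ ≤ δ := by
  let L := WithLp.prodContinuousLinearEquiv 2 ℝ E ℝ
  set N := (1 + ‖(L.symm : E × ℝ →L[ℝ] WithLp 2 (E × ℝ))‖) ^ k with hN
  have hN0 : 0 < N := by positivity
  obtain ⟨_, ⟨U, hU, rfl⟩, h⟩ := exists_mem_near_of_wave (k := k) (isBounded_cyl (E := E))
    (solSpace ha ha2 c) (by
      rintro _ ⟨U, hU, rfl⟩ v hv
      exact ((hU.contDiffAt (p := L v) hv).of_le (by exact_mod_cast le_top)).comp v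
        L.contDiff.contDiffAt) (by
      filter_upwards [ae_snd_ne_zero (E := E)] with ξ hξ δ hδ
      obtain ⟨U, hU, h⟩ := exists_isSol_near_wave ha ha2 hc ξ hξ k hδ
      exact ⟨_, ⟨U, hU, rfl⟩, h⟩) (hF.comp L.contDiff)
    (hFs.comp_homeomorph L.toHomeomorph) (δ := δ / N) (by positivity)
  refine ⟨U, hU, fun i hi p hp => ?_⟩
  have h1 := L.symm.norm_iteratedFDeriv_comp_right_le
    ((fun v : WithLp 2 (E × ℝ) => U (v.fst, v.snd) - (F ∘ L) v)) p i
  have h2 : ((fun v : WithLp 2 (E × ℝ) => U (v.fst, v.snd) - (F ∘ L) v)) ∘ L.symm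
    = fun q => U q - F q := rfl
  rw [h2] at h1
  refine h1.trans ?_
  calc _ ≤ δ / N * N := by
        refine mul_le_mul (h i hi _ hp) ?_ (by positivity) (by positivity)
        refine (pow_le_pow_left₀ (norm_nonneg _) (by linarith) i).trans
          (pow_le_pow_right₀ ?_ hi)
        linarith [norm_nonneg (L.symm : E × ℝ →L[ℝ] WithLp 2 (E × ℝ))]
    _ = δ := by field_simp

end SmoothApproximation

section Mollification

variable {X : Type*} [NormedAddCommGroup X] [NormedSpace ℝ X]

/-- Derivatives of a dilation, without any regularity assumption. -/
theorem iteratedFDeriv_comp_smul_of_ne_zero {F : Type*} [NormedAddCommGroup F] [NormedSpace ℝ F]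
    {r : ℝ} (hr : r ≠ 0) (f : X → F) (x : X) (i : ℕ) :
    iteratedFDeriv ℝ i (fun y => f (r • y)) x = r ^ i • iteratedFDeriv ℝ i f (r • x) := by
  let g : X ≃L[ℝ] X := ContinuousLinearEquiv.smulLeft (Units.mk0 r hr)
  have h := g.iteratedFDerivWithin_comp_right f uniqueDiffOn_univ (mem_univ (g x)) i
  rw [preimage_univ, iteratedFDerivWithin_univ, iteratedFDerivWithin_univ] at h
  have e : (f ∘ g) = fun y => f (r • y) := rfl
  rw [← e, h]
  ext m
  have e' : (fun j => g (m j)) = fun j => r • m j := rfl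
  rw [ContinuousMultilinearMap.compContinuousLinearMap_apply]
  have := (iteratedFDeriv ℝ i f (r • x)).map_smul_univ (fun _ => r) m
  simp only [Finset.prod_const, Finset.card_univ, Fintype.card_fin] at this
  rw [smul_apply, ← this]
  rfl

variable [FiniteDimensional ℝ X] [MeasurableSpace X] [BorelSpace X]

theorem exists_contDiff_near_of_hasCompactSupport {G : X → ℝ} {k : ℕ} (hG : ContDiff ℝ k G)
    (hGs : HasCompactSupport G) {δ : ℝ} (hδ : 0 < δ) :
    ∃ F : X → ℝ, ContDiff ℝ ∞ F ∧ HasCompactSupport F ∧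
      ∀ i ≤ k, ∀ p, ‖iteratedFDeriv ℝ i (fun q => F q - G q) p‖ ≤ δ := by
  let μ : Measure X := Measure.addHaar
  have hcont : ∀ i ≤ k, Continuous (iteratedFDeriv ℝ i G) := fun i hi =>
    hG.continuous_iteratedFDeriv (by exact_mod_cast hi)
  have huc : ∀ i ≤ k, UniformContinuous (iteratedFDeriv ℝ i G) := fun i hi =>
    (hcont i hi).uniformContinuous_of_tendsto_cocompact
      ((hGs.iteratedFDeriv i).is_zero_at_infty)
  have hη : ∃ η > 0, ∀ i ≤ k, ∀ p q : X, dist p q < η →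
      dist (iteratedFDeriv ℝ i G p) (iteratedFDeriv ℝ i G q) ≤ δ := by
    have : ∀ i, ∃ η > 0, i ≤ k → ∀ p q : X, dist p q < η →
        dist (iteratedFDeriv ℝ i G p) (iteratedFDeriv ℝ i G q) ≤ δ := fun i => by
      by_cases hi : i ≤ k
      · obtain ⟨η, hη, h⟩ := Metric.uniformContinuous_iff.1 (huc i hi) δ hδ
        exact ⟨η, hη, fun _ p q hpq => (h hpq).le⟩
      · exact ⟨1, one_pos, fun h => absurd h hi⟩
    choose η hη0 hη using this
    refine ⟨(Finset.range (k + 1)).inf' ⟨0, by simp⟩ η, ?_, fun i hi p q hpq =>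
      hη i hi p q (hpq.trans_le (Finset.inf'_le _ (Finset.mem_range.2 (Nat.lt_succ_of_le hi))))⟩
    exact (Finset.lt_inf'_iff _).2 fun i _ => hη0 i
  obtain ⟨η, hη0, hη⟩ := hη
  let φ : ContDiffBump (0 : X) := ⟨η / 2, η, by positivity, by linarith⟩
  have hφ : Continuous (φ.normed μ) := φ.continuous_normed
  have hφs : HasCompactSupport (φ.normed μ) := φ.hasCompactSupport_normed
  have hφi : Integrable (φ.normed μ) μ := hφ.integrable_of_hasCompactSupport hφs
  set F : X → ℝ := convolution (φ.normed μ) G (ContinuousLinearMap.lsmul ℝ ℝ) μ with hF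
  have hD : ∀ y i, i ≤ k → ∀ x, iteratedFDeriv ℝ i (fun x => φ.normed μ y • G (x - y)) x
      = φ.normed μ y • iteratedFDeriv ℝ i G (x - y) := by
    intro y i hi x
    have hGy : ContDiff ℝ i fun x => G (x - y) :=
      (hG.of_le (by exact_mod_cast hi)).comp (contDiff_id.sub contDiff_const)
    rw [iteratedFDeriv_const_smul_apply' hGy.contDiffAt, iteratedFDeriv_comp_sub]
  have hT := hasFTaylorSeriesUpTo_integral (μ := μ) (N := k)
    (G := fun x y => φ.normed μ y • G (x - y))
    (fun y => by
      have h : ContDiff ℝ k fun x => G (x - y) := hG.comp (contDiff_id.sub contDiff_const)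
      have h' : ContDiff ℝ k fun x => φ.normed μ y • G (x - y) := h.const_smul (φ.normed μ y)
      exact_mod_cast h')
    (fun i hi x => by
      have hi : i ≤ k := by exact_mod_cast hi
      simp only [hD _ i hi]
      exact (hφ.smul ((hcont i hi).comp (continuous_const.sub continuous_id))).aestronglyMeasurable)
    (fun i hi x₀ => by
      have hi : i ≤ k := by exact_mod_cast hi
      obtain ⟨B, hB⟩ := (hGs.iteratedFDeriv i).exists_bound_of_continuous (hcont i hi)
      refine ⟨fun y => ‖φ.normed μ y‖ * B, hφi.norm.mul_const B, fun y x _ => ?_⟩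
      rw [hD y i hi, norm_smul]
      exact mul_le_mul_of_nonneg_left (hB _) (norm_nonneg _))
  have hFcd : ContDiff ℝ ∞ F := hφs.contDiff_convolution_left _ φ.contDiff_normed
    hG.continuous.locallyIntegrable
  refine ⟨F, hFcd, hφs.convolution _ hGs, fun i hi p => ?_⟩
  rw [fun_iteratedFDeriv_sub_apply (hFcd.of_le (by exact_mod_cast le_top)).contDiffAt
    (hG.of_le (by exact_mod_cast hi)).contDiffAt]
  have h1 : iteratedFDeriv ℝ i F p = convolution (φ.normed μ) (iteratedFDeriv ℝ i G)
      (ContinuousLinearMap.lsmul ℝ ℝ) μ p := by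
    have := hT.eq_iteratedFDeriv (m := i) (by exact_mod_cast hi) p
    simp only [hD _ i hi] at this
    exact this.symm
  rw [h1, ← dist_eq_norm]
  exact φ.dist_normed_convolution_le (hcont i hi).aestronglyMeasurable
    fun x hx => hη i hi x p hx

end Mollification

section ClosedBallApproximation

variable {X : Type*} [NormedAddCommGroup X] [NormedSpace ℝ X] [FiniteDimensional ℝ X]

theorem ContDiffOn.exists_dilation_near {f : X → ℝ} {k : ℕ}
    (hf : ContDiffOn ℝ k f (closedBall (0 : X) 1)) {δ : ℝ} (hδ : 0 < δ) :
    ∃ r ∈ Ioo (0 : ℝ) 1, ∀ i ≤ k, ∀ p ∈ ball (0 : X) 1,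
      ‖r ^ i • iteratedFDeriv ℝ i f (r • p) - iteratedFDeriv ℝ i f p‖ ≤ δ := by
  have hu : UniqueDiffOn ℝ (closedBall (0 : X) 1) :=
    uniqueDiffOn_convex (convex_closedBall 0 1)
      ⟨0, ball_subset_interior_closedBall (mem_ball_self one_pos)⟩
  have heq : ∀ i ≤ k, ∀ p ∈ ball (0 : X) 1,
      iteratedFDerivWithin ℝ i f (closedBall 0 1) p = iteratedFDeriv ℝ i f p := fun i hi p hp =>
    iteratedFDerivWithin_eq_iteratedFDeriv hu
      ((hf.contDiffAt (closedBall_mem_nhds_of_mem hp)).of_le (by exact_mod_cast hi))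
      (ball_subset_closedBall hp)
  have key : ∀ i, i ≤ k → ∀ᶠ r : ℝ in 𝓝[<] 1, ∀ p ∈ ball (0 : X) 1,
      ‖r ^ i • iteratedFDeriv ℝ i f (r • p) - iteratedFDeriv ℝ i f p‖ ≤ δ := by
    intro i hi
    have hD := hf.continuousOn_iteratedFDerivWithin (m := i) (by exact_mod_cast hi) hu
    have hmaps : MapsTo (fun q : ℝ × X => q.1 • q.2) (Icc 0 1 ×ˢ closedBall (0 : X) 1)
        (closedBall (0 : X) 1) := by
      rintro ⟨r, p⟩ ⟨hr, hp⟩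
      simp only [mem_closedBall_zero_iff, norm_smul, Real.norm_eq_abs] at hp ⊢
      rw [abs_of_nonneg hr.1]
      exact mul_le_one₀ hr.2 (norm_nonneg _) hp
    have hH : ContinuousOn (fun q : ℝ × X =>
        q.1 ^ i • iteratedFDerivWithin ℝ i f (closedBall 0 1) (q.1 • q.2))
        (Icc 0 1 ×ˢ closedBall (0 : X) 1) :=
      (continuous_fst.pow i).continuousOn.smul (hD.comp (by fun_prop) hmaps)
    have huc :=
      (isCompact_Icc.prod (isCompact_closedBall (0 : X) 1)).uniformContinuousOn_of_continuous hH
    obtain ⟨η, hη, h⟩ := Metric.uniformContinuousOn_iff.1 huc δ hδ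
    have hev : ∀ᶠ r : ℝ in 𝓝[<] 1, r ∈ ball (1 : ℝ) η ∩ Ioi 0 :=
      nhdsWithin_le_nhds (inter_mem (ball_mem_nhds 1 hη) (Ioi_mem_nhds one_pos))
    filter_upwards [hev, self_mem_nhdsWithin] with r hr hr1 p hp
    have hr01 : r ∈ Icc (0 : ℝ) 1 := ⟨(mem_Ioi.1 hr.2).le, (mem_Iio.1 hr1).le⟩
    have hpc := ball_subset_closedBall hp
    have hrp : r • p ∈ ball (0 : X) 1 := by
      rw [mem_ball_zero_iff] at hp ⊢
      rw [norm_smul, Real.norm_of_nonneg hr01.1]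
      exact (mul_le_of_le_one_left (norm_nonneg _) hr01.2).trans_lt hp
    have := h (r, p) ⟨hr01, hpc⟩ (1, p) ⟨⟨zero_le_one, le_rfl⟩, hpc⟩ (by
      rw [dist_prod_same_right]; exact hr.1)
    simp only [one_pow, one_smul] at this
    rw [heq i hi _ hrp, heq i hi _ hp, dist_eq_norm] at this
    exact this.le
  have hall : ∀ᶠ r : ℝ in 𝓝[<] 1, ∀ i ∈ Finset.range (k + 1), ∀ p ∈ ball (0 : X) 1,
      ‖r ^ i • iteratedFDeriv ℝ i f (r • p) - iteratedFDeriv ℝ i f p‖ ≤ δ :=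
    (Filter.eventually_all_finset _).2 fun i hi => key i (Nat.lt_succ_iff.1 (Finset.mem_range.1 hi))
  obtain ⟨r, hr, hr01⟩ := (hall.and (Ioo_mem_nhdsLT one_pos)).exists
  exact ⟨r, hr01, fun i hi => hr i (Finset.mem_range.2 (Nat.lt_succ_of_le hi))⟩

variable [MeasurableSpace X] [BorelSpace X]

theorem ContDiffOn.exists_contDiff_near {f : X → ℝ} {k : ℕ}
    (hf : ContDiffOn ℝ k f (closedBall (0 : X) 1)) {δ : ℝ} (hδ : 0 < δ) :
    ∃ F : X → ℝ, ContDiff ℝ ∞ F ∧ HasCompactSupport F ∧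
      ∀ i ≤ k, ∀ p ∈ ball (0 : X) 1, ‖iteratedFDeriv ℝ i (fun q => F q - f q) p‖ ≤ δ := by
  obtain ⟨r, ⟨hr0, hr1⟩, hr⟩ := hf.exists_dilation_near (half_pos hδ)
  let χ : ContDiffBump (0 : X) := ⟨1, (1 + r) / (2 * r), one_pos, by
    rw [lt_div_iff₀ (by positivity)]; linarith⟩
  have hχr : χ.rOut * r < 1 := by
    change (1 + r) / (2 * r) * r < 1
    rw [div_mul_eq_mul_div, div_lt_one (by positivity)]
    nlinarith
  let G : X → ℝ := fun p => χ p * f (r • p)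
  have hG : ContDiff ℝ k G := by
    refine contDiff_iff_contDiffAt.2 fun p => ?_
    by_cases hp : p ∈ tsupport χ
    · rw [χ.tsupport_eq, mem_closedBall_zero_iff] at hp
      have hrp : r • p ∈ ball (0 : X) 1 := by
        rw [mem_ball_zero_iff, norm_smul, Real.norm_of_nonneg hr0.le, mul_comm]
        exact (mul_le_mul_of_nonneg_right hp hr0.le).trans_lt hχr
      exact χ.contDiff.contDiffAt.mul
        ((hf.contDiffAt (closedBall_mem_nhds_of_mem hrp)).comp p
          (contDiff_const_smul r).contDiffAt)
    · have h0 : G =ᶠ[𝓝 p] fun _ => 0 := by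
        filter_upwards [(isClosed_tsupport χ).isOpen_compl.mem_nhds hp] with q hq
        simp only [G, image_eq_zero_of_notMem_tsupport hq, zero_mul]
      exact contDiffAt_const.congr_of_eventuallyEq h0
  have hGs : HasCompactSupport G := χ.hasCompactSupport.mul_right
  obtain ⟨F, hF, hFs, hFG⟩ := exists_contDiff_near_of_hasCompactSupport hG hGs (half_pos hδ)
  refine ⟨F, hF, hFs, fun i hi p hp => ?_⟩
  have hDG : iteratedFDeriv ℝ i G p = r ^ i • iteratedFDeriv ℝ i f (r • p) := by
    have hev : G =ᶠ[𝓝 p] fun q => f (r • q) := by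
      filter_upwards [isOpen_ball.mem_nhds hp] with q hq
      simp only [G, χ.one_of_mem_closedBall (ball_subset_closedBall hq), one_mul]
    rw [(hev.iteratedFDeriv ℝ i).eq_of_nhds, iteratedFDeriv_comp_smul_of_ne_zero hr0.ne']
  have hFi : ContDiffAt ℝ i F p := (hF.of_le (by exact_mod_cast le_top)).contDiffAt
  have hGi : ContDiffAt ℝ i G p := (hG.of_le (by exact_mod_cast hi)).contDiffAt
  have hfi : ContDiffAt ℝ i f p :=
    (hf.contDiffAt (closedBall_mem_nhds_of_mem hp)).of_le (by exact_mod_cast hi)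
  have h1 := hFG i hi p
  have h2 := hr i hi p hp
  rw [fun_iteratedFDeriv_sub_apply hFi hGi] at h1
  rw [← hDG] at h2
  rw [fun_iteratedFDeriv_sub_apply hFi hfi]
  calc _ ≤ ‖iteratedFDeriv ℝ i F p - iteratedFDeriv ℝ i G p‖
        + ‖iteratedFDeriv ℝ i G p - iteratedFDeriv ℝ i f p‖ :=
          norm_sub_le_norm_sub_add_norm_sub _ _ _
    _ ≤ δ := by linarith

end ClosedBallApproximation

theorem fracC_pos (n : ℕ) {s : ℝ} (hs : s ∈ Ioo (0 : ℝ) 1) : 0 < fracC n s := by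
  have h0 : 0 < s := hs.1
  have h1 : 0 < Real.Gamma ((n : ℝ) / 2 + s) := Real.Gamma_pos_of_pos (by positivity)
  have h2 : 0 < Real.Gamma (1 - s) := Real.Gamma_pos_of_pos (by linarith [hs.2])
  unfold fracC
  positivity

theorem HasFL.hasFracLap {n : ℕ} (hn : 1 ≤ n) {s : ℝ} (hs : s ∈ Ioo (0 : ℝ) 1)
    {u : EuclideanSpace ℝ (Fin n) → ℂ} (hu : Continuous u) (hus : HasCompactSupport u)
    {x : EuclideanSpace ℝ (Fin n)} {L : ℂ} (h : HasFL (n + 2 * s) u x L) :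
    HasFracLap n s (fun y => (u y).re) x (fracC n s * L.re) := by
  have : NeZero n := ⟨by omega⟩
  have hfr : Module.finrank ℝ (EuclideanSpace ℝ (Fin n)) = n := finrank_euclideanSpace_fin
  obtain ⟨C, hC⟩ := hus.exists_bound_of_continuous hu
  refine (((Complex.continuous_re.tendsto L).comp h).const_mul (fracC n s)).congr' ?_
  filter_upwards [self_mem_nhdsWithin] with ρ hρ
  have hInt := integrableOn_kernel_smul_sub (a := n + 2 * s) (by rw [hfr]; linarith [hs.1])
    (by rw [hfr]; linarith [hs.2]) hu hC x hρ
  have hre := Complex.reCLM.integral_comp_comm hInt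
  simp only [Complex.reCLM_apply] at hre
  simp only [Function.comp_apply, ← hre]
  congr 2; ext y
  rw [Complex.smul_re, Complex.sub_re, smul_eq_mul, div_eq_inv_mul]

/-- All functions are locally `s`-caloric up to a small error: any `C^k` function `f` on
`closure (B₁) × [-1,1] ⊆ ℝⁿ × ℝ` can be approximated in `C^k(B₁ × (-1,1))` by a compactly
supported continuous function `u`, smooth in `B₁ × (-1,1)`, with `∂ₜ u + (-Δ)ˢ u = 0` there. -/
theorem all_functions_locally_s_caloric
    (n : ℕ) (hn : 1 ≤ n) (s : ℝ) (hs : s ∈ Set.Ioo (0 : ℝ) 1) (k : ℕ)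
    (f : EuclideanSpace ℝ (Fin n) × ℝ → ℝ)
    (hf : ContDiffOn ℝ k f (Metric.closedBall 0 1 ×ˢ Set.Icc (-1 : ℝ) 1))
    (ε : ℝ) (hε : 0 < ε) :
    ∃ u : EuclideanSpace ℝ (Fin n) × ℝ → ℝ,
      Continuous u ∧ HasCompactSupport u ∧
      ContDiffOn ℝ (⊤ : ℕ∞) u (Metric.ball 0 1 ×ˢ Set.Ioo (-1 : ℝ) 1) ∧
      (∀ x ∈ Metric.ball (0 : EuclideanSpace ℝ (Fin n)) 1, ∀ t ∈ Set.Ioo (-1 : ℝ) 1,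
        HasFracLap n s (fun y => u (y, t)) x (-(deriv (fun τ => u (x, τ)) t))) ∧
      (∀ i ≤ k, ∀ p ∈ Metric.ball (0 : EuclideanSpace ℝ (Fin n)) 1 ×ˢ Set.Ioo (-1 : ℝ) 1,
        ‖iteratedFDeriv ℝ i (fun q => u q - f q) p‖ ≤ ε) := by
  have : NeZero n := ⟨by omega⟩
  have hfr : Module.finrank ℝ (EuclideanSpace ℝ (Fin n)) = n := finrank_euclideanSpace_fin
  have hc : 0 < fracC n s := fracC_pos n hs
  have hK : closedBall (0 : EuclideanSpace ℝ (Fin n)) 1 ×ˢ Icc (-1 : ℝ) 1 = closedBall 0 1 := by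
    rw [← Prod.mk_zero_zero, ← closedBall_prod_same, Real.closedBall_eq_Icc, zero_sub, zero_add]
  have hΩ : ball (0 : EuclideanSpace ℝ (Fin n)) 1 ×ˢ Ioo (-1 : ℝ) 1 = ball 0 1 := by
    rw [← Prod.mk_zero_zero, ← ball_prod_same, Real.ball_eq_Ioo, zero_sub, zero_add]
  rw [hK] at hf
  obtain ⟨F, hF, hFs, hFf⟩ := hf.exists_contDiff_near (half_pos hε)
  obtain ⟨U, hU, hUF⟩ := exists_isSol_near (a := n + 2 * s) (c := fracC n s)
    (by rw [hfr]; linarith [hs.1]) (by rw [hfr]; linarith [hs.2]) hc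
    (Complex.ofRealCLM.contDiff.comp hF) (hFs.comp_left (g := Complex.ofRealCLM) (map_zero _)) k
    (half_pos hε)
  refine ⟨fun q => (U q).re, Complex.continuous_re.comp hU.continuous,
    hU.hasCompactSupport.comp_left (g := Complex.re) Complex.zero_re,
    Complex.reCLM.contDiff.comp_contDiffOn hU.contDiffOn, fun x hx t ht => ?_, fun i hi p hp => ?_⟩
  · have hd : HasDerivAt (fun τ => (U (x, τ)).re) (deriv (fun τ => U (x, τ)) t).re t :=
      Complex.reCLM.hasFDerivAt.comp_hasDerivAt t (hU.differentiableAt hx ht).hasDerivAt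
    have hcs : HasCompactSupport fun y => U (y, t) :=
      HasCompactSupport.intro (hU.hasCompactSupport.isCompact.image continuous_fst) fun y hy =>
        image_eq_zero_of_notMem_tsupport fun h => hy ⟨_, h, rfl⟩
    have h := HasFL.hasFracLap hn hs (hU.continuous.comp (by fun_prop : Continuous fun y => (y, t)))
      hcs (hU.hasFL x hx t ht)
    rw [Complex.neg_re, Complex.re_ofReal_mul, mul_neg, mul_inv_cancel_left₀ hc.ne'] at h
    rw [hd.deriv]
    exact h
  · have hfi : ContDiffAt ℝ i f p := (hf.contDiffAt
      (closedBall_mem_nhds_of_mem (hΩ ▸ hp))).of_le (by exact_mod_cast hi)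
    have hFi : ContDiffAt ℝ i F p := (hF.of_le (by exact_mod_cast le_top)).contDiffAt
    have hUi : ContDiffAt ℝ i U p := (hU.contDiffAt hp).of_le (by exact_mod_cast le_top)
    have hUFi : ContDiffAt ℝ i (fun q => U q - (Complex.ofRealCLM ∘ F) q) p :=
      hUi.sub (Complex.ofRealCLM.contDiff.contDiffAt.comp p hFi)
    have h1 : ‖iteratedFDeriv ℝ i (fun q => (U q).re - F q) p‖ ≤ ε / 2 := by
      have e : (fun q => (U q).re - F q)
          = Complex.reCLM ∘ fun q => U q - (Complex.ofRealCLM ∘ F) q := by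
        ext q; simp
      rw [e]
      refine (Complex.reCLM.norm_iteratedFDeriv_comp_left hUFi le_rfl).trans ?_
      rw [Complex.reCLM_norm, one_mul]
      exact hUF i hi p hp
    have h2 := hFf i hi p (hΩ ▸ hp)
    have e : (fun q => (U q).re - f q) = fun q => ((U q).re - F q) + (F q - f q) := by
      ext q; ring
    have hui : ContDiffAt ℝ i (fun q => (U q).re) p :=
      Complex.reCLM.contDiff.contDiffAt.comp p hUi
    rw [e, fun_iteratedFDeriv_add_apply (hui.sub hFi) (hFi.sub hfi)]
    exact (norm_add_le _ _).trans (by linarith)
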